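/- arXiv:1612.06618 — 3 statements merged into one kernel-verified Lean document; each statement's English description precedes it below -/
import Mathlib

section
/- Fix ν > 0, and let m(λ,ν) = (1/Z(λ,ν)) · Σ_{j=0}^∞ j·λ^j/(j!)^ν denote the mean of the CMP(λ,ν) distribution. Then as λ → ∞, m(λ,ν) = λ^(1/ν) − (ν−1)/(2ν) − ((ν²−1)/(24ν²))·λ^(−1/ν) − ((ν²−1)/(24ν³))·λ^(−2/ν) + O(λ^(−3/ν)). Precisely: there exist constants C > 0 and Λ > 0 (depending only on ν) such that for all λ ≥ Λ, |m(λ,ν) − λ^(1/ν) + (ν−1)/(2ν) + ((ν²−1)/(24ν²))·λ^(−1/ν) + ((ν²−1)/(24ν³))·λ^(−2/ν)| ≤ C·λ^(−3/ν). -/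
open scoped BigOperators

/-- The Conway-Maxwell-Poisson normalizing constant `Z(λ,ν) = ∑_{i=0}^∞ λ^i/(i!)^ν`. -/
noncomputable def cmpZ (lam nu : ℝ) : ℝ := ∑' i : ℕ, lam ^ i / (i.factorial : ℝ) ^ nu

/-- The mean of the `CMP(λ,ν)` distribution:
`m(λ,ν) = (1/Z(λ,ν)) ∑_{j=0}^∞ j λ^j/(j!)^ν`. -/
noncomputable def cmpMean (lam nu : ℝ) : ℝ :=
  (∑' j : ℕ, (j : ℝ) * lam ^ j / (j.factorial : ℝ) ^ nu) / cmpZ lam nu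

/-!
Put `ε = lam ^ (-1 / ν)` and let `T = ε X - 1` be the relative deviation of a `CMP(lam, ν)` variable
`X` from `1 / ε`. Since `j ^ ν * lam ^ j / (j!) ^ ν = lam * lam ^ (j - 1) / ((j - 1)!) ^ ν`, the law
of `T` satisfies the Stein identity `E[(1 + T) ^ ν g(T)] = E[g(T + ε)]`. As `(1 + t) ^ ν - 1` has
the sign of `t`, testing this identity with `g(t) = t ^ (2k + 1) (2 + t)` and inducting on `k` gives
`E |T| ^ (2k) = O(ε ^ k)`.

Given a power series `F`, apply the identity to the formal quotient
`G(t) = (F(t) - F(0)) / ((1 + t) ^ ν - 1)`. With `D_d` the Hasse derivatives, the moment bounds turn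
it into `E[F(T)] ~ F(0) + ∑ d ≥ 1, ε ^ d E[D_d G(T)]`, up to any power of `ε`. Iterating this
expands `E[F(T)]` in powers of `ε` with recursively computable coefficients; the theorem is the case
`F(t) = t`.
-/

namespace CMP

open Asymptotics Filter Finset MeasureTheory Topology
open scoped Nat Polynomial PowerSeries

section Measure

variable {lam ν : ℝ}

lemma weight_pos (hlam : 0 < lam) (j : ℕ) : 0 < lam ^ j / (j ! : ℝ) ^ ν := by positivity

lemma rpow_mul_weight_succ (j : ℕ) :
    ((j + 1 : ℕ) : ℝ) ^ ν * (lam ^ (j + 1) / ((j + 1)! : ℝ) ^ ν) =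
      lam * (lam ^ j / (j ! : ℝ) ^ ν) := by
  rw [Nat.factorial_succ, Nat.cast_mul, Real.mul_rpow (by positivity) (by positivity)]
  field_simp
  ring

lemma summable_pow_mul_weight (hlam : 0 < lam) (hν : 0 < ν) (n : ℕ) :
    Summable fun j : ℕ ↦ (j : ℝ) ^ n * (lam ^ j / (j ! : ℝ) ^ ν) := by
  have hratio (j : ℕ) : ‖((j + 1 : ℕ) : ℝ) ^ n * (lam ^ (j + 1) / ((j + 1)! : ℝ) ^ ν)‖ /
      ‖(j : ℝ) ^ n * (lam ^ j / (j ! : ℝ) ^ ν)‖ =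
        (((j + 1 : ℕ) : ℝ) / j) ^ n * (lam * (((j + 1 : ℕ) : ℝ) ^ ν)⁻¹) := by
    have hw : lam ^ (j + 1) / ((j + 1)! : ℝ) ^ ν =
        lam * (((j + 1 : ℕ) : ℝ) ^ ν)⁻¹ * (lam ^ j / (j ! : ℝ) ^ ν) := by
      rw [mul_right_comm, ← rpow_mul_weight_succ]
      field_simp
    rw [hw, Real.norm_of_nonneg (by positivity), Real.norm_of_nonneg (by positivity), ← mul_assoc,
      mul_div_mul_right _ _ (weight_pos hlam j).ne', div_pow, mul_div_right_comm]
  refine summable_of_ratio_test_tendsto_lt_one (l := 0) one_pos ?_ ?_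
  · filter_upwards [eventually_gt_atTop 0] with j hj
    positivity
  · simp_rw [hratio]
    have hsucc : Tendsto (fun j : ℕ ↦ (((j + 1 : ℕ) : ℝ) / j) ^ n) atTop (𝓝 (1 ^ n)) := by
      simpa using ((tendsto_natCast_div_add_atTop (1 : ℝ)).inv₀ one_ne_zero).pow n
    have hpow : Tendsto (fun j : ℕ ↦ lam * (((j + 1 : ℕ) : ℝ) ^ ν)⁻¹) atTop (𝓝 (lam * 0)) :=
      (tendsto_inv_atTop_zero.comp ((tendsto_rpow_atTop hν).comp
        (tendsto_natCast_atTop_atTop.comp (tendsto_add_atTop_nat 1)))).const_mul lam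
    simpa using hsucc.mul hpow

lemma summable_weight (hlam : 0 < lam) (hν : 0 < ν) :
    Summable fun j : ℕ ↦ lam ^ j / (j ! : ℝ) ^ ν := by
  simpa using summable_pow_mul_weight hlam hν 0

lemma cmpZ_pos (hlam : 0 < lam) (hν : 0 < ν) : 0 < cmpZ lam ν :=
  (summable_weight hlam hν).tsum_pos (fun j ↦ (weight_pos hlam j).le) 0 (weight_pos hlam 0)

/-- The `CMP(lam, ν)` distribution, as a measure on `ℕ`. -/
noncomputable def cmpMeasure (lam ν : ℝ) : Measure ℕ :=
  Measure.sum fun j : ℕ ↦ ENNReal.ofReal (lam ^ j / (j ! : ℝ) ^ ν / cmpZ lam ν) • .dirac j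

lemma isProbabilityMeasure_cmpMeasure (hlam : 0 < lam) (hν : 0 < ν) :
    IsProbabilityMeasure (cmpMeasure lam ν) := by
  refine HasSum.isProbabilityMeasure_sum_dirac
    (fun j ↦ div_nonneg (weight_pos hlam j).le (cmpZ_pos hlam hν).le) ?_
  rw [← div_self (cmpZ_pos hlam hν).ne']
  exact (summable_weight hlam hν).hasSum.div_const (cmpZ lam ν)

lemma toReal_ofReal_weight_div_cmpZ (hlam : 0 < lam) (j : ℕ) :
    (ENNReal.ofReal (lam ^ j / (j ! : ℝ) ^ ν / cmpZ lam ν)).toReal =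
      lam ^ j / (j ! : ℝ) ^ ν / cmpZ lam ν :=
  ENNReal.toReal_ofReal
    (div_nonneg (weight_pos hlam j).le (tsum_nonneg fun i ↦ (weight_pos hlam i).le))

lemma integrable_cmpMeasure_iff (hlam : 0 < lam) {g : ℕ → ℝ} :
    Integrable g (cmpMeasure lam ν) ↔
      Summable fun j : ℕ ↦ lam ^ j / (j ! : ℝ) ^ ν / cmpZ lam ν * ‖g j‖ := by
  rw [cmpMeasure, integrable_sum_dirac_iff fun _ ↦ ENNReal.ofReal_ne_top]
  simp only [toReal_ofReal_weight_div_cmpZ hlam]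

lemma integral_cmpMeasure (hlam : 0 < lam) (g : ℕ → ℝ) :
    ∫ j, g j ∂cmpMeasure lam ν = ∑' j : ℕ, lam ^ j / (j ! : ℝ) ^ ν / cmpZ lam ν * g j := by
  rw [cmpMeasure, integral_sum_dirac fun _ ↦ ENNReal.ofReal_ne_top]
  simp only [toReal_ofReal_weight_div_cmpZ hlam, smul_eq_mul]

lemma integrable_pow_cmpMeasure (hlam : 0 < lam) (hν : 0 < ν) (n : ℕ) :
    Integrable (fun j : ℕ ↦ (j : ℝ) ^ n) (cmpMeasure lam ν) := by
  rw [integrable_cmpMeasure_iff hlam]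
  refine ((summable_pow_mul_weight hlam hν n).div_const (cmpZ lam ν)).congr fun j ↦ ?_
  rw [Real.norm_of_nonneg (by positivity), mul_comm, mul_div_right_comm]

lemma integral_natCast_cmpMeasure (hlam : 0 < lam) :
    ∫ j, (j : ℝ) ∂cmpMeasure lam ν = cmpMean lam ν := by
  rw [integral_cmpMeasure hlam, cmpMean, ← tsum_div_const]
  exact tsum_congr fun j ↦ by ring

lemma integrable_rpow_mul_cmpMeasure_iff (hlam : 0 < lam) {g : ℕ → ℝ} :
    Integrable (fun j : ℕ ↦ (j : ℝ) ^ ν * g j) (cmpMeasure lam ν) ↔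
      Integrable (fun j : ℕ ↦ g (j + 1)) (cmpMeasure lam ν) := by
  rw [integrable_cmpMeasure_iff hlam, integrable_cmpMeasure_iff hlam, ← summable_nat_add_iff 1]
  refine (summable_congr fun j ↦ ?_).trans (summable_mul_left_iff hlam.ne')
  rw [norm_mul, Real.norm_of_nonneg (by positivity : 0 ≤ ((j + 1 : ℕ) : ℝ) ^ ν)]
  linear_combination ‖g (j + 1)‖ / cmpZ lam ν * rpow_mul_weight_succ (lam := lam) (ν := ν) j

lemma integral_rpow_mul_cmpMeasure (hlam : 0 < lam) (hν : ν ≠ 0) (g : ℕ → ℝ) :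
    ∫ j : ℕ, (j : ℝ) ^ ν * g j ∂cmpMeasure lam ν = lam * ∫ j, g (j + 1) ∂cmpMeasure lam ν := by
  rw [integral_cmpMeasure hlam, integral_cmpMeasure hlam, ← tsum_mul_left,
    ← (add_left_injective 1).tsum_eq]
  · refine tsum_congr fun j ↦ ?_
    linear_combination g (j + 1) / cmpZ lam ν * rpow_mul_weight_succ (lam := lam) (ν := ν) j
  · intro j hj
    rcases j with _ | j
    · simp [hν] at hj
    · exact ⟨j, rfl⟩

end Measure

section DeviationLaw

variable {ν ε : ℝ}

/-- The law of the relative deviation `ε X - 1`, where `X` has the `CMP(ε ^ (-ν), ν)` distribution;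
thus `1 / ε = lam ^ (1 / ν)` is the leading term of the mean of `X`. -/
noncomputable def deviationLaw (ν ε : ℝ) : Measure ℝ :=
  (cmpMeasure (ε ^ (-ν)) ν).map fun j : ℕ ↦ ε * j - 1

lemma isProbabilityMeasure_deviationLaw (hν : 0 < ν) (hε : 0 < ε) :
    IsProbabilityMeasure (deviationLaw ν ε) :=
  have := isProbabilityMeasure_cmpMeasure (Real.rpow_pos_of_pos hε (-ν)) hν
  Measure.isProbabilityMeasure_map .of_discrete

lemma ae_neg_one_le_deviationLaw (hε : 0 ≤ ε) : ∀ᵐ t ∂deviationLaw ν ε, -1 ≤ t := by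
  refine (ae_map_iff .of_discrete measurableSet_Ici).2 (.of_forall fun j ↦ ?_)
  change -1 ≤ ε * j - 1
  linarith [mul_nonneg hε (Nat.cast_nonneg (α := ℝ) j)]

lemma integrable_deviationLaw_iff {g : ℝ → ℝ} (hg : Measurable g) :
    Integrable g (deviationLaw ν ε) ↔
      Integrable (fun j : ℕ ↦ g (ε * j - 1)) (cmpMeasure (ε ^ (-ν)) ν) :=
  integrable_map_measure hg.aestronglyMeasurable .of_discrete

lemma integral_deviationLaw {g : ℝ → ℝ} (hg : Measurable g) :
    ∫ t, g t ∂deviationLaw ν ε = ∫ j : ℕ, g (ε * j - 1) ∂cmpMeasure (ε ^ (-ν)) ν :=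
  integral_map .of_discrete hg.aestronglyMeasurable

lemma integrable_eval_deviationLaw (hν : 0 < ν) (hε : 0 < ε) (P : ℝ[X]) :
    Integrable (fun t ↦ P.eval t) (deviationLaw ν ε) := by
  rw [integrable_deviationLaw_iff P.continuous.measurable]
  have hcomp (j : ℕ) : P.eval (ε * j - 1) =
      (P.comp (Polynomial.C ε * Polynomial.X - 1)).eval (j : ℝ) := by simp
  simp only [hcomp, Polynomial.eval_eq_sum_range]
  exact integrable_finsetSum _ fun i _ ↦
    (integrable_pow_cmpMeasure (Real.rpow_pos_of_pos hε _) hν i).const_mul _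

lemma integrable_pow_deviationLaw (hν : 0 < ν) (hε : 0 < ε) (n : ℕ) :
    Integrable (fun t ↦ t ^ n) (deviationLaw ν ε) := by
  simpa using integrable_eval_deviationLaw hν hε (Polynomial.X ^ n)

lemma integrable_abs_pow_deviationLaw (hν : 0 < ν) (hε : 0 < ε) (n : ℕ) :
    Integrable (fun t ↦ |t| ^ n) (deviationLaw ν ε) := by
  simpa [abs_pow] using (integrable_pow_deviationLaw hν hε n).abs

lemma one_add_deviation_rpow_mul (hε : 0 < ε) (g : ℝ → ℝ) (j : ℕ) :
    (1 + (ε * j - 1)) ^ ν * g (ε * j - 1) = ε ^ ν * ((j : ℝ) ^ ν * g (ε * j - 1)) := by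
  rw [add_sub_cancel, Real.mul_rpow hε.le (Nat.cast_nonneg j), mul_assoc]

lemma integrable_rpow_mul_deviationLaw_iff (hε : 0 < ε) {g : ℝ → ℝ} (hg : Measurable g) :
    Integrable (fun t ↦ (1 + t) ^ ν * g t) (deviationLaw ν ε) ↔
      Integrable (fun t ↦ g (t + ε)) (deviationLaw ν ε) := by
  rw [integrable_deviationLaw_iff (by fun_prop), integrable_deviationLaw_iff (by fun_prop)]
  simp only [one_add_deviation_rpow_mul hε]
  rw [integrable_const_mul_iff (Real.rpow_pos_of_pos hε ν).ne'.isUnit,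
    integrable_rpow_mul_cmpMeasure_iff (Real.rpow_pos_of_pos hε _) (g := fun j ↦ g (ε * j - 1))]
  refine integrable_congr (.of_forall fun j ↦ congrArg g ?_)
  push_cast
  ring

lemma integral_rpow_mul_deviationLaw (hν : ν ≠ 0) (hε : 0 < ε) {g : ℝ → ℝ} (hg : Measurable g) :
    ∫ t, (1 + t) ^ ν * g t ∂deviationLaw ν ε = ∫ t, g (t + ε) ∂deviationLaw ν ε := by
  rw [integral_deviationLaw (by fun_prop), integral_deviationLaw (by fun_prop)]
  simp only [one_add_deviation_rpow_mul hε]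
  rw [integral_const_mul,
    integral_rpow_mul_cmpMeasure (Real.rpow_pos_of_pos hε _) hν fun j ↦ g (ε * j - 1), ← mul_assoc,
    ← Real.rpow_add hε, add_neg_cancel, Real.rpow_zero, one_mul]
  refine integral_congr_ae (.of_forall fun j ↦ congrArg g ?_)
  push_cast
  ring

lemma integrable_eval_add_deviationLaw (hν : 0 < ν) (hε : 0 < ε) (P : ℝ[X]) :
    Integrable (fun t ↦ P.eval (t + ε)) (deviationLaw ν ε) := by
  simpa [Polynomial.taylor_eval] using integrable_eval_deviationLaw hν hε (P.taylor ε)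

lemma integrable_rpow_mul_eval_deviationLaw (hν : 0 < ν) (hε : 0 < ε) (P : ℝ[X]) :
    Integrable (fun t ↦ (1 + t) ^ ν * P.eval t) (deviationLaw ν ε) :=
  (integrable_rpow_mul_deviationLaw_iff hε P.continuous.measurable).2
    (integrable_eval_add_deviationLaw hν hε P)

lemma integral_rpow_mul_eval_deviationLaw (hν : ν ≠ 0) (hε : 0 < ε) (P : ℝ[X]) :
    ∫ t, (1 + t) ^ ν * P.eval t ∂deviationLaw ν ε = ∫ t, P.eval (t + ε) ∂deviationLaw ν ε :=
  integral_rpow_mul_deviationLaw hν hε P.continuous.measurable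

lemma integral_id_deviationLaw (hν : 0 < ν) (hε : 0 < ε) :
    ∫ t, t ∂deviationLaw ν ε = ε * cmpMean (ε ^ (-ν)) ν - 1 := by
  have hlam := Real.rpow_pos_of_pos hε (-ν)
  have := isProbabilityMeasure_cmpMeasure hlam hν
  have hint : Integrable (fun j : ℕ ↦ (j : ℝ)) (cmpMeasure (ε ^ (-ν)) ν) := by
    simpa using integrable_pow_cmpMeasure hlam hν 1
  rw [integral_deviationLaw measurable_id', integral_sub (hint.const_mul ε) (integrable_const 1),
    integral_const_mul, integral_natCast_cmpMeasure hlam]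
  simp

end DeviationLaw

section MomentBounds

variable {ν ε t : ℝ}

lemma min_one_mul_sq_le (hν : 0 < ν) (ht : -1 ≤ t) :
    min 1 ν * t ^ 2 ≤ t * (2 + t) * ((1 + t) ^ ν - 1) := by
  have hmin : 0 ≤ min 1 ν := le_min zero_le_one hν.le
  rcases le_total 0 t with h0t | ht0
  · have hbern : 1 + (1 + ν) * t ≤ (1 + t) * (1 + t) ^ ν := by
      simpa [Real.rpow_add (by linarith : 0 < 1 + t)] using
        one_add_mul_self_le_rpow_one_add ht (p := 1 + ν) (by linarith)
    have hone : 1 ≤ (1 + t) ^ ν := Real.one_le_rpow (by linarith) hν.le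
    have hlin : min 1 ν * t ≤ (2 + t) * ((1 + t) ^ ν - 1) := by
      linarith [mul_le_mul_of_nonneg_right (min_le_right 1 ν) h0t]
    linarith [mul_le_mul_of_nonneg_left hlin h0t]
  · have hbern : (1 + t) ^ ν ≤ 1 + min 1 ν * t :=
      (Real.rpow_le_rpow_of_exponent_ge' (by linarith) (by linarith) hmin (min_le_right 1 ν)).trans
        (rpow_one_add_le_one_add_mul_self ht hmin (min_le_left 1 ν))
    have hlin : min 1 ν * -t ≤ (2 + t) * (1 - (1 + t) ^ ν) := by
      nlinarith [mul_nonneg hmin (neg_nonneg.2 ht0)]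
    linarith [mul_le_mul_of_nonneg_left hlin (neg_nonneg.2 ht0)]

lemma add_pow_sub_pow_le (hε : 0 ≤ ε) (t : ℝ) (n : ℕ) :
    (t + ε) ^ (n + 1) - t ^ (n + 1) ≤ (n + 1) * 2 ^ n * (ε * (|t| ^ n + ε ^ n)) := by
  have hmax : max |t + ε| |t| ≤ |t| + ε :=
    max_le ((abs_add_le t ε).trans_eq (by rw [abs_of_nonneg hε])) (by linarith)
  have hpow : (|t| + ε) ^ n ≤ 2 ^ n * (|t| ^ n + ε ^ n) :=
    (add_pow_le (abs_nonneg t) hε n).trans (by gcongr <;> simp)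
  calc (t + ε) ^ (n + 1) - t ^ (n + 1)
      ≤ |t + ε - t| * (n + 1 : ℕ) * max |t + ε| |t| ^ n :=
        (le_abs_self _).trans (abs_pow_sub_pow_le (n := n + 1) ..)
    _ ≤ ε * (n + 1 : ℕ) * (2 ^ n * (|t| ^ n + ε ^ n)) := by
        rw [add_sub_cancel_left, abs_of_nonneg hε]
        gcongr
        exact (pow_le_pow_left₀ (by positivity) hmax n).trans hpow
    _ = (n + 1) * 2 ^ n * (ε * (|t| ^ n + ε ^ n)) := by push_cast; ring

lemma pow_le_pow_add_pow (ht : 0 ≤ t) {a m b : ℕ} (ham : a ≤ m) (hmb : m ≤ b) :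
    t ^ m ≤ t ^ a + t ^ b := by
  rcases le_total t 1 with ht1 | ht1
  · exact (pow_le_pow_of_le_one ht ht1 ham).trans (le_add_of_nonneg_right (by positivity))
  · exact (pow_le_pow_right₀ ht1 hmb).trans (le_add_of_nonneg_left (by positivity))

lemma add_pow_sub_pow_le_of_le (hε : 0 ≤ ε) (hε1 : ε ≤ 1) (t : ℝ) {k n : ℕ} (hn : 2 * k ≤ n)
    (hn' : n ≤ 2 * k + 2) :
    (t + ε) ^ (n + 1) - t ^ (n + 1) ≤
      (n + 1) * 2 ^ n * (ε * (|t| ^ (2 * k) + |t| ^ (2 * k + 2) + ε ^ k)) := by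
  refine (add_pow_sub_pow_le hε t n).trans ?_
  gcongr ?_ * (_ * (?_ + ?_))
  · exact pow_le_pow_add_pow (abs_nonneg t) hn hn'
  · exact pow_le_pow_of_le_one hε hε1 (by lia)

lemma integral_abs_pow_nonneg (n : ℕ) : 0 ≤ ∫ t, |t| ^ n ∂deviationLaw ν ε :=
  integral_nonneg fun _ ↦ by positivity

/-- The test polynomial `t ^ (2k) * t * (2 + t)`: by `min_one_mul_sq_le`, using it in the Stein
identity controls the moment of order `2k + 2`. -/
noncomputable def momentTest (k : ℕ) : ℝ[X] :=
  2 * Polynomial.X ^ (2 * k + 1) + Polynomial.X ^ (2 * k + 2)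

lemma eval_momentTest (k : ℕ) (t : ℝ) :
    (momentTest k).eval t = 2 * t ^ (2 * k + 1) + t ^ (2 * k + 2) := by
  simp [momentTest]

lemma min_one_mul_integral_abs_pow_le (hν : 0 < ν) (hε : 0 < ε) (k : ℕ) :
    min 1 ν * ∫ t, |t| ^ (2 * k + 2) ∂deviationLaw ν ε ≤
      ∫ t, ((momentTest k).eval (t + ε) - (momentTest k).eval t) ∂deviationLaw ν ε := by
  have htest := integrable_eval_deviationLaw hν hε (momentTest k)
  have hrpow := integrable_rpow_mul_eval_deviationLaw hν hε (momentTest k)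
  rw [integral_sub (integrable_eval_add_deviationLaw hν hε _) htest,
    ← integral_rpow_mul_eval_deviationLaw hν.ne' hε, ← integral_sub hrpow htest,
    ← integral_const_mul]
  refine integral_mono_ae ((integrable_abs_pow_deviationLaw hν hε _).const_mul _)
    (hrpow.sub htest) ?_
  filter_upwards [ae_neg_one_le_deviationLaw hε.le] with t ht
  have hcoercive := mul_le_mul_of_nonneg_left (min_one_mul_sq_le hν ht)
    ((even_two_mul k).pow_nonneg t)
  rw [eval_momentTest, pow_add, sq_abs, (even_two_mul k).pow_abs]
  linear_combination hcoercive

lemma exists_min_one_mul_integral_abs_pow_le (hν : 0 < ν) (k : ℕ) :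
    ∃ A > 0, ∀ ε : ℝ, 0 < ε → ε ≤ 1 →
      min 1 ν * ∫ t, |t| ^ (2 * k + 2) ∂deviationLaw ν ε ≤
        A * (ε * (∫ t, |t| ^ (2 * k) ∂deviationLaw ν ε +
          ∫ t, |t| ^ (2 * k + 2) ∂deviationLaw ν ε + ε ^ k)) := by
  refine ⟨2 * ((2 * k : ℕ) + 1) * 2 ^ (2 * k) + ((2 * k + 1 : ℕ) + 1) * 2 ^ (2 * k + 1),
    by positivity, fun ε hε hε1 ↦ (min_one_mul_integral_abs_pow_le hν hε k).trans ?_⟩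
  have := isProbabilityMeasure_deviationLaw hν hε
  have heven := integrable_abs_pow_deviationLaw hν hε (2 * k)
  have hnext := integrable_abs_pow_deviationLaw hν hε (2 * k + 2)
  have hsum : Integrable (fun t ↦ |t| ^ (2 * k) + |t| ^ (2 * k + 2)) (deviationLaw ν ε) :=
    heven.add hnext
  have hconst : ∫ _, ε ^ k ∂deviationLaw ν ε = ε ^ k := by simp
  rw [← integral_add heven hnext, ← hconst, ← integral_add hsum (integrable_const _),
    ← integral_const_mul, ← integral_const_mul]
  refine integral_mono ((integrable_eval_add_deviationLaw hν hε _).sub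
      (integrable_eval_deviationLaw hν hε _))
    (((hsum.add (integrable_const _)).const_mul ε).const_mul _) fun t ↦ ?_
  simp only [eval_momentTest]
  linear_combination 2 * add_pow_sub_pow_le_of_le hε.le hε1 t (k := k) le_rfl (by lia) +
    add_pow_sub_pow_le_of_le hε.le hε1 t (k := k) (n := 2 * k + 1) (by lia) (by lia)

lemma isBigO_integral_abs_pow_two_mul (hν : 0 < ν) (k : ℕ) :
    (fun ε ↦ ∫ t, |t| ^ (2 * k) ∂deviationLaw ν ε) =O[𝓝[>] 0] fun ε ↦ ε ^ k := by
  induction k with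
  | zero =>
    refine IsBigO.of_bound' ?_
    filter_upwards [self_mem_nhdsWithin] with ε hε
    have := isProbabilityMeasure_deviationLaw hν hε
    simp
  | succ k ih =>
    obtain ⟨A, hA, hstep⟩ := exists_min_one_mul_integral_abs_pow_le hν k
    have hmin : 0 < min 1 ν := lt_min one_pos hν
    have hsmall : ∀ᶠ ε in 𝓝[>] (0 : ℝ), ε < min 1 (min 1 ν / (2 * A)) :=
      mem_nhdsWithin_of_mem_nhds (Iio_mem_nhds (by positivity))
    refine IsBigO.trans (IsBigO.of_bound (2 * A / min 1 ν) ?_)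
      (((isBigO_refl (fun ε : ℝ ↦ ε) _).mul (ih.add (isBigO_refl _ _))).congr_right
        fun ε ↦ (pow_succ' ε k).symm)
    filter_upwards [self_mem_nhdsWithin, hsmall] with ε hε hsmall
    rw [Set.mem_Ioi] at hε
    have hAε : 2 * A * ε ≤ min 1 ν := by
      rw [mul_comm, ← le_div_iff₀ (by positivity)]
      exact (hsmall.trans_le (min_le_right _ _)).le
    have hmoment := hstep ε hε (hsmall.trans_le (min_le_left _ _)).le
    have heven := integral_abs_pow_nonneg (ν := ν) (ε := ε) (2 * k)
    have hnext := integral_abs_pow_nonneg (ν := ν) (ε := ε) (2 * k + 2)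
    rw [Real.norm_of_nonneg (integral_abs_pow_nonneg _),
      Real.norm_of_nonneg (mul_nonneg hε.le (add_nonneg heven (pow_nonneg hε.le k))),
      div_mul_eq_mul_div, le_div_iff₀ hmin, mul_add_one]
    linarith [mul_le_mul_of_nonneg_right hAε hnext]

lemma isBigO_pow_pow_nhdsGT {a b : ℕ} (hab : a ≤ b) :
    (fun ε : ℝ ↦ ε ^ b) =O[𝓝[>] 0] fun ε ↦ ε ^ a :=
  hab.eq_or_lt.elim (fun h ↦ h ▸ isBigO_refl _ _)
    fun h ↦ (isLittleO_pow_pow h).isBigO.mono nhdsWithin_le_nhds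

lemma isBigO_integral_abs_pow (hν : 0 < ν) {p m : ℕ} (hm : 2 * p ≤ m) :
    (fun ε ↦ ∫ t, |t| ^ m ∂deviationLaw ν ε) =O[𝓝[>] 0] fun ε ↦ ε ^ p := by
  refine IsBigO.trans (IsBigO.of_bound' ?_) ((isBigO_integral_abs_pow_two_mul hν p).add
    ((isBigO_integral_abs_pow_two_mul hν m).trans (isBigO_pow_pow_nhdsGT (by lia))))
  filter_upwards [self_mem_nhdsWithin] with ε hε
  have habs := integrable_abs_pow_deviationLaw hν hε
  rw [← integral_add (habs _) (habs _)]
  refine norm_le_norm_of_abs_le_abs ?_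
  refine abs_le_abs_of_nonneg (integral_abs_pow_nonneg _) ?_
  exact integral_mono (habs m) ((habs _).add (habs _)) fun t ↦
    pow_le_pow_add_pow (abs_nonneg t) hm (by lia)

lemma isBigO_integral_of_isBigO (hν : 0 < ν) {f : ℝ → ℝ} {p N R : ℕ} (hN : 2 * p ≤ N) (hNR : N ≤ R)
    (hf : f =O[𝓟 (Set.Ici (-1))] fun t ↦ |t| ^ N + |t| ^ R) :
    (fun ε ↦ ∫ t, f t ∂deviationLaw ν ε) =O[𝓝[>] 0] fun ε ↦ ε ^ p := by
  obtain ⟨C, hC⟩ := isBigO_principal.1 hf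
  refine IsBigO.trans (IsBigO.of_bound C ?_)
    ((isBigO_integral_abs_pow hν hN).add (isBigO_integral_abs_pow hν (hN.trans hNR)))
  filter_upwards [self_mem_nhdsWithin] with ε hε
  have habs := integrable_abs_pow_deviationLaw hν hε
  rw [Real.norm_of_nonneg (add_nonneg (integral_abs_pow_nonneg _) (integral_abs_pow_nonneg _)),
    ← integral_add (habs _) (habs _), ← integral_const_mul]
  refine norm_integral_le_of_norm_le (((habs _).add (habs _)).const_mul C) ?_
  filter_upwards [ae_neg_one_le_deviationLaw (le_of_lt hε)] with t ht
  exact (hC t ht).trans_eq (by rw [Real.norm_of_nonneg (by positivity)])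

end MomentBounds

section Taylor

variable {ν : ℝ}

lemma isBigO_rpow_sub_sum_choose_nhds_zero (ν : ℝ) (K : ℕ) :
    (fun t : ℝ ↦ (1 + t) ^ ν - ∑ i ∈ range K, Ring.choose ν i * t ^ i) =O[𝓝 0]
      fun t ↦ |t| ^ K := by
  simpa [FormalMultilinearSeries.partialSum, binomialSeries, mul_comm] using
    (Real.one_add_rpow_hasFPowerSeriesAt_zero (a := ν)).isBigO_sub_partialSum_pow K

lemma isBigO_rpow_sub_sum_choose_of_le_abs (hν : 0 ≤ ν) {K N : ℕ} (hKN : K ≤ N) (hνN : ν ≤ N)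
    {δ : ℝ} (hδ : 0 < δ) :
    (fun t : ℝ ↦ (1 + t) ^ ν - ∑ i ∈ range K, Ring.choose ν i * t ^ i)
      =O[𝓟 {t | -1 ≤ t ∧ δ ≤ |t|}] fun t ↦ |t| ^ N := by
  have hone : (fun t : ℝ ↦ (1 + |t|) ^ N) =O[𝓟 {t | -1 ≤ t ∧ δ ≤ |t|}] fun t ↦ |t| ^ N := by
    refine IsBigO.pow (isBigO_principal.2 ⟨δ⁻¹ + 1, fun t ht ↦ ?_⟩) N
    have hδt : 1 ≤ δ⁻¹ * |t| := by rw [inv_mul_eq_div, le_div_iff₀ hδ]; linarith [ht.2]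
    rw [Real.norm_of_nonneg (by positivity), Real.norm_of_nonneg (abs_nonneg t)]
    linarith
  refine IsBigO.trans (IsBigO.sub ?_ (IsBigO.fun_sum fun i hi ↦ IsBigO.const_mul_left ?_ _)) hone
  · refine isBigO_principal.2 ⟨1, fun t ht ↦ ?_⟩
    rw [Real.norm_of_nonneg (Real.rpow_nonneg (by linarith [ht.1]) ν),
      Real.norm_of_nonneg (by positivity), one_mul]
    calc (1 + t) ^ ν ≤ (1 + |t|) ^ ν :=
          Real.rpow_le_rpow (by linarith [ht.1]) (by linarith [le_abs_self t]) hν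
      _ ≤ (1 + |t|) ^ (N : ℝ) :=
          Real.rpow_le_rpow_of_exponent_le (by linarith [abs_nonneg t]) hνN
      _ = (1 + |t|) ^ N := Real.rpow_natCast _ N
  · refine isBigO_principal.2 ⟨1, fun t _ ↦ ?_⟩
    rw [Real.norm_eq_abs, abs_pow, Real.norm_of_nonneg (by positivity), one_mul]
    calc |t| ^ i ≤ (1 + |t|) ^ i := by gcongr; linarith
      _ ≤ (1 + |t|) ^ N :=
          pow_le_pow_right₀ (by linarith [abs_nonneg t]) ((mem_range.1 hi).le.trans hKN)

lemma isBigO_rpow_sub_sum_choose (hν : 0 ≤ ν) {K N : ℕ} (hKN : K ≤ N) (hνN : ν ≤ N) :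
    (fun t : ℝ ↦ (1 + t) ^ ν - ∑ i ∈ range K, Ring.choose ν i * t ^ i) =O[𝓟 (Set.Ici (-1))]
      fun t ↦ |t| ^ K + |t| ^ N := by
  obtain ⟨C, hC⟩ := (isBigO_rpow_sub_sum_choose_nhds_zero ν K).bound
  obtain ⟨δ, hδ, hball⟩ := Metric.eventually_nhds_iff_ball.1 hC
  have hnear : (fun t : ℝ ↦ (1 + t) ^ ν - ∑ i ∈ range K, Ring.choose ν i * t ^ i)
      =O[𝓟 (Metric.ball 0 δ)] fun t ↦ |t| ^ K := isBigO_principal.2 ⟨C, hball⟩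
  have hfar := isBigO_rpow_sub_sum_choose_of_le_abs hν hKN hνN hδ
  have hK : ∀ t : ℝ, ‖|t| ^ K‖ ≤ ‖|t| ^ K + |t| ^ N‖ := fun t ↦
    norm_le_norm_of_abs_le_abs (abs_le_abs_of_nonneg (by positivity)
      (le_add_of_nonneg_right (by positivity)))
  have hN : ∀ t : ℝ, ‖|t| ^ N‖ ≤ ‖|t| ^ K + |t| ^ N‖ := fun t ↦
    norm_le_norm_of_abs_le_abs (abs_le_abs_of_nonneg (by positivity)
      (le_add_of_nonneg_left (by positivity)))
  refine ((hnear.trans (isBigO_of_le _ hK)).sup (hfar.trans (isBigO_of_le _ hN))).mono ?_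
  rw [sup_principal, le_principal_iff, mem_principal]
  intro t ht
  exact (lt_or_ge |t| δ).imp (fun h ↦ by simpa using h) fun h ↦ ⟨ht, h⟩

end Taylor

section PowerSeries

/-- The formal Hasse derivative of a power series: the coefficient of `ε ^ d` in `F(X + ε)`. -/
noncomputable def hasseDeriv {R : Type*} [Semiring R] (d : ℕ) (F : R⟦X⟧) : R⟦X⟧ :=
  PowerSeries.mk fun n ↦ (n + d).choose d * PowerSeries.coeff (n + d) F

lemma coeff_hasseDeriv {R : Type*} [Semiring R] (d n : ℕ) (F : R⟦X⟧) :
    PowerSeries.coeff n (hasseDeriv d F) = (n + d).choose d * PowerSeries.coeff (n + d) F :=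
  PowerSeries.coeff_mk _ _

lemma hasseDeriv_zero {R : Type*} [Semiring R] (F : R⟦X⟧) : hasseDeriv 0 F = F := by
  ext n
  simp [coeff_hasseDeriv]

lemma trunc_hasseDeriv {R : Type*} [Semiring R] (d N : ℕ) (F : R⟦X⟧) :
    (hasseDeriv d F).trunc (N - d) = Polynomial.hasseDeriv d (F.trunc N) := by
  ext n
  simp only [PowerSeries.coeff_trunc, coeff_hasseDeriv, Polynomial.hasseDeriv_coeff,
    lt_tsub_iff_right, mul_ite, mul_zero]

lemma eval_trunc {R : Type*} [CommSemiring R] (N : ℕ) (F : R⟦X⟧) (t : R) :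
    (F.trunc N).eval t = ∑ n ∈ range N, PowerSeries.coeff n F * t ^ n :=
  PowerSeries.eval₂_trunc_eq_sum_range t (RingHom.id R) N F

lemma eval_add_trunc {R : Type*} [CommRing R] (N : ℕ) (F : R⟦X⟧) (t ε : R) :
    (F.trunc N).eval (t + ε) =
      ∑ d ∈ range N, ε ^ d * ((hasseDeriv d F).trunc (N - d)).eval t := by
  rcases N with _ | N
  · simp
  · rw [add_comm, ← Polynomial.taylor_eval, Polynomial.eval_eq_sum_range' (n := N + 1)
      (by simpa using PowerSeries.natDegree_trunc_lt F N)]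
    simp only [Polynomial.taylor_coeff, trunc_hasseDeriv, mul_comm]

lemma eval_trunc_mul {R : Type*} [CommSemiring R] (N : ℕ) (F G : R⟦X⟧) (t : R) :
    ((F * G).trunc N).eval t = ∑ n ∈ range N, PowerSeries.coeff n F * t ^ n *
      ∑ i ∈ range (N - n), PowerSeries.coeff i G * t ^ i := by
  simp only [eval_trunc, mul_sum, PowerSeries.coeff_mul, sum_mul]
  rw [← sum_range_diag_flip N fun n i ↦
    PowerSeries.coeff n F * t ^ n * (PowerSeries.coeff i G * t ^ i)]
  refine sum_congr rfl fun m _ ↦ ?_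
  rw [Nat.sum_antidiagonal_eq_sum_range_succ
    fun n i ↦ PowerSeries.coeff n F * PowerSeries.coeff i G * t ^ m]
  refine sum_congr rfl fun n hn ↦ ?_
  rw [← Nat.add_sub_of_le (mem_range_succ_iff.1 hn), pow_add, Nat.add_sub_cancel_left]
  ring

lemma isBigO_rpow_mul_eval_trunc {ν : ℝ} (hν : 0 ≤ ν) {N R : ℕ} (hR : N + ν ≤ R) (F : ℝ⟦X⟧) :
    (fun t : ℝ ↦ (1 + t) ^ ν * (F.trunc N).eval t -
        ((F * PowerSeries.binomialSeries ℝ ν).trunc N).eval t)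
      =O[𝓟 (Set.Ici (-1))] fun t ↦ |t| ^ N + |t| ^ R := by
  have hNR : N ≤ R := by exact_mod_cast (le_add_of_nonneg_right hν).trans hR
  have hexpand (t : ℝ) : (1 + t) ^ ν * (F.trunc N).eval t -
      ((F * PowerSeries.binomialSeries ℝ ν).trunc N).eval t =
        ∑ n ∈ range N, PowerSeries.coeff n F *
          (t ^ n * ((1 + t) ^ ν - ∑ i ∈ range (N - n), Ring.choose ν i * t ^ i)) := by
    rw [eval_trunc, eval_trunc_mul, mul_sum, ← sum_sub_distrib]
    refine sum_congr rfl fun n _ ↦ ?_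
    simp only [PowerSeries.binomialSeries_coeff, smul_eq_mul, mul_one]
    ring
  simp only [hexpand]
  refine IsBigO.fun_sum fun n hn ↦ IsBigO.const_mul_left ?_ _
  have hnN := (mem_range.1 hn).le
  have htaylor := isBigO_rpow_sub_sum_choose hν (K := N - n) (N := R - n) (by lia) (by
    rw [Nat.cast_sub (hnN.trans hNR)]
    linarith [(Nat.cast_le (α := ℝ)).2 hnN])
  refine ((IsBigO.of_norm_le (g := fun t : ℝ ↦ |t| ^ n) fun t ↦ ?_).mul htaylor).congr_right
    fun t ↦ ?_
  · rw [Real.norm_eq_abs, abs_pow]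
  · rw [mul_add, ← pow_add, ← pow_add, Nat.add_sub_of_le hnN, Nat.add_sub_of_le (hnN.trans hNR)]

end PowerSeries

section Expansion

variable {ν : ℝ}

/-- The expectation under `deviationLaw ν ε` of the power series `F` truncated at degree `N`. -/
noncomputable def truncMoment (ν : ℝ) (N : ℕ) (F : ℝ⟦X⟧) (ε : ℝ) : ℝ :=
  ∫ t, (F.trunc N).eval t ∂deviationLaw ν ε

lemma truncMoment_add (hν : 0 < ν) {ε : ℝ} (hε : 0 < ε) (N : ℕ) (F G : ℝ⟦X⟧) :
    truncMoment ν N (F + G) ε = truncMoment ν N F ε + truncMoment ν N G ε := by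
  simp only [truncMoment, map_add, Polynomial.eval_add]
  exact integral_add (integrable_eval_deviationLaw hν hε _) (integrable_eval_deviationLaw hν hε _)

lemma truncMoment_C (hν : 0 < ν) {ε : ℝ} (hε : 0 < ε) {N : ℕ} (hN : 0 < N) (c : ℝ) :
    truncMoment ν N (PowerSeries.C c) ε = c := by
  have := isProbabilityMeasure_deviationLaw hν hε
  obtain ⟨N, rfl⟩ := Nat.exists_eq_add_one.2 hN
  simp [truncMoment, PowerSeries.trunc_C]

lemma truncMoment_X (hν : 0 < ν) {ε : ℝ} (hε : 0 < ε) {N : ℕ} (hN : 2 ≤ N) :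
    truncMoment ν N PowerSeries.X ε = ε * cmpMean (ε ^ (-ν)) ν - 1 := by
  simp [truncMoment, PowerSeries.trunc_X_of hN, integral_id_deviationLaw hν hε]

lemma isBigO_truncMoment_one (hν : 0 < ν) (N : ℕ) (F : ℝ⟦X⟧) :
    truncMoment ν N F =O[𝓝[>] 0] fun _ ↦ (1 : ℝ) := by
  have hpoly : (fun t ↦ (F.trunc N).eval t) =O[𝓟 (Set.Ici (-1))]
      fun t : ℝ ↦ |t| ^ 0 + |t| ^ N := by
    simp only [eval_trunc]
    refine IsBigO.fun_sum fun n hn ↦ IsBigO.const_mul_left (IsBigO.of_norm_le fun t ↦ ?_) _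
    rw [Real.norm_eq_abs, abs_pow]
    exact pow_le_pow_add_pow (abs_nonneg t) n.zero_le (mem_range.1 hn).le
  exact (isBigO_integral_of_isBigO hν (p := 0) (by lia) N.zero_le hpoly).congr_right pow_zero

lemma integral_eval_add_trunc (hν : 0 < ν) {ε : ℝ} (hε : 0 < ε) (N : ℕ) (F : ℝ⟦X⟧) :
    ∫ t, (F.trunc N).eval (t + ε) ∂deviationLaw ν ε =
      ∑ d ∈ range N, ε ^ d * truncMoment ν (N - d) (hasseDeriv d F) ε := by
  simp only [eval_add_trunc, truncMoment]
  rw [integral_finsetSum _ fun d _ ↦ (integrable_eval_deviationLaw hν hε _).const_mul _]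
  simp only [integral_const_mul]

lemma isBigO_truncMoment_mul_binomialSeries (hν : 0 < ν) {p N : ℕ} (hN : 2 * p ≤ N) (F : ℝ⟦X⟧) :
    (fun ε ↦ truncMoment ν N (F * PowerSeries.binomialSeries ℝ ν) ε -
        ∑ d ∈ range N, ε ^ d * truncMoment ν (N - d) (hasseDeriv d F) ε)
      =O[𝓝[>] 0] fun ε ↦ ε ^ p := by
  obtain ⟨R, hR⟩ := exists_nat_ge (N + ν)
  have hNR : N ≤ R := by exact_mod_cast (le_add_of_nonneg_right hν.le).trans hR
  refine (isBigO_integral_of_isBigO hν hN hNR (isBigO_rpow_mul_eval_trunc hν.le hR F)).neg_left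
    |>.congr' ?_ .rfl
  filter_upwards [self_mem_nhdsWithin] with ε hε
  rw [integral_sub (integrable_rpow_mul_eval_deviationLaw hν hε _)
    (integrable_eval_deviationLaw hν hε _), integral_rpow_mul_eval_deviationLaw hν.ne' hε,
    integral_eval_add_trunc hν hε, neg_sub]
  rfl

/-- The power series `(F - F(0)) / ((1 + X) ^ ν - 1)`, for `ν ≠ 0`; the common factor `X` is
cancelled from numerator and denominator. -/
noncomputable def divBinomialSubOne (ν : ℝ) (F : ℝ⟦X⟧) : ℝ⟦X⟧ :=
  (PowerSeries.mk fun n ↦ PowerSeries.coeff (n + 1) F) *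
    (PowerSeries.mk fun n ↦ PowerSeries.coeff (n + 1) (PowerSeries.binomialSeries ℝ ν))⁻¹

lemma mk_coeff_binomialSeries_mul_divBinomialSubOne (hν : ν ≠ 0) (F : ℝ⟦X⟧) :
    (PowerSeries.mk fun n ↦ PowerSeries.coeff (n + 1) (PowerSeries.binomialSeries ℝ ν)) *
      divBinomialSubOne ν F = PowerSeries.mk fun n ↦ PowerSeries.coeff (n + 1) F := by
  rw [divBinomialSubOne, mul_left_comm, PowerSeries.mul_inv_cancel _ (by simpa using hν), mul_one]

lemma divBinomialSubOne_mul_binomialSeries (hν : ν ≠ 0) (F : ℝ⟦X⟧) :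
    divBinomialSubOne ν F * PowerSeries.binomialSeries ℝ ν +
      PowerSeries.C (PowerSeries.constantCoeff F) = F + divBinomialSubOne ν F := by
  have hB := PowerSeries.eq_X_mul_shift_add_const (PowerSeries.binomialSeries ℝ ν)
  have hF := PowerSeries.eq_X_mul_shift_add_const F
  have hS := mk_coeff_binomialSeries_mul_divBinomialSubOne hν F
  have hB0 : PowerSeries.constantCoeff (PowerSeries.binomialSeries ℝ ν) = 1 := by
    simp [← PowerSeries.coeff_zero_eq_constantCoeff_apply]
  rw [hB0, map_one] at hB
  linear_combination divBinomialSubOne ν F * hB - hF + PowerSeries.X * hS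

lemma isBigO_truncMoment_sub_sum_hasseDeriv (hν : 0 < ν) {p N : ℕ} (hN : 2 * p ≤ N + 1)
    (F : ℝ⟦X⟧) :
    (fun ε ↦ truncMoment ν (N + 1) F ε - (PowerSeries.constantCoeff F + ∑ d ∈ range N,
        ε ^ (d + 1) * truncMoment ν (N - d) (hasseDeriv (d + 1) (divBinomialSubOne ν F)) ε))
      =O[𝓝[>] 0] fun ε ↦ ε ^ p := by
  refine (isBigO_truncMoment_mul_binomialSeries hν hN (divBinomialSubOne ν F)).congr' ?_ .rfl
  filter_upwards [self_mem_nhdsWithin] with ε hε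
  have hdiv := congrArg (truncMoment ν (N + 1) · ε) (divBinomialSubOne_mul_binomialSeries hν.ne' F)
  simp only [truncMoment_add hν hε, truncMoment_C hν hε N.succ_pos] at hdiv
  rw [sum_range_succ', hasseDeriv_zero, pow_zero, one_mul, Nat.sub_zero]
  simp only [Nat.add_sub_add_right]
  linear_combination hdiv

/-- The coefficient of `ε ^ b` in the asymptotic expansion of the expectation of `F` under
`deviationLaw ν ε`. -/
noncomputable def expansionCoeff (ν : ℝ) : ℕ → ℝ⟦X⟧ → ℝ
  | 0, F => PowerSeries.constantCoeff F
  | b + 1, F => ∑ d ∈ range (b + 1),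
      expansionCoeff ν (b - d) (hasseDeriv (d + 1) (divBinomialSubOne ν F))
  termination_by b => b

lemma sum_expansionCoeff_succ (p N : ℕ) (hN : p ≤ N) (F : ℝ⟦X⟧) (ε : ℝ) :
    ∑ d ∈ range N, ε ^ (d + 1) * ∑ b ∈ range (p - d),
      ε ^ b * expansionCoeff ν b (hasseDeriv (d + 1) (divBinomialSubOne ν F)) =
        ∑ b ∈ range p, ε ^ (b + 1) * expansionCoeff ν (b + 1) F := by
  rw [← sum_subset (range_mono hN) fun d _ hd ↦ by
    simp [Nat.sub_eq_zero_of_le (not_lt.1 (mem_range.not.1 hd))]]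
  simp only [mul_sum, expansionCoeff]
  rw [← sum_range_diag_flip p fun d b ↦ ε ^ (d + 1) *
    (ε ^ b * expansionCoeff ν b (hasseDeriv (d + 1) (divBinomialSubOne ν F)))]
  refine sum_congr rfl fun b _ ↦ sum_congr rfl fun d hd ↦ ?_
  rw [← mul_assoc, ← pow_add, Nat.add_right_comm, Nat.add_sub_of_le (mem_range_succ_iff.1 hd)]

theorem isBigO_truncMoment_sub_sum_expansionCoeff (hν : 0 < ν) {p N : ℕ} (hN : 2 * p ≤ N)
    (F : ℝ⟦X⟧) :
    (fun ε ↦ truncMoment ν N F ε - ∑ b ∈ range p, ε ^ b * expansionCoeff ν b F)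
      =O[𝓝[>] 0] fun ε ↦ ε ^ p := by
  induction p using Nat.strong_induction_on generalizing N F with
  | _ p ih =>
  rcases p with _ | p
  · simpa using isBigO_truncMoment_one hν N F
  obtain ⟨N, rfl⟩ := Nat.exists_eq_add_one.2 (by lia : 0 < N)
  have hterm (d : ℕ) : (fun ε ↦ ε ^ (d + 1) *
      (truncMoment ν (N - d) (hasseDeriv (d + 1) (divBinomialSubOne ν F)) ε -
        ∑ b ∈ range (p - d), ε ^ b *
          expansionCoeff ν b (hasseDeriv (d + 1) (divBinomialSubOne ν F))))
      =O[𝓝[>] 0] fun ε ↦ ε ^ (p + 1) := by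
    refine ((isBigO_refl _ _).mul (ih (p - d) (by lia) (by lia) _)).trans ?_
    simp only [← pow_add]
    exact isBigO_pow_pow_nhdsGT (by lia)
  refine ((isBigO_truncMoment_sub_sum_hasseDeriv hν hN F).add
    (IsBigO.fun_sum (s := range N) fun d _ ↦ hterm d)).congr_left fun ε ↦ ?_
  simp only [mul_sub, sum_sub_distrib]
  rw [sum_expansionCoeff_succ p N (by lia), sum_range_succ' _ p, expansionCoeff]
  ring

end Expansion

section MeanExpansion

variable {ν : ℝ}

theorem isBigO_cmpMean_rpow_neg_sub_sum_expansionCoeff (hν : 0 < ν) (p : ℕ) :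
    (fun ε ↦ cmpMean (ε ^ (-ν)) ν -
        (ε⁻¹ + ∑ b ∈ range p, ε ^ b * expansionCoeff ν (b + 1) PowerSeries.X))
      =O[𝓝[>] 0] fun ε ↦ ε ^ p := by
  refine ((isBigO_refl (fun ε : ℝ ↦ ε⁻¹) _).mul
    (isBigO_truncMoment_sub_sum_expansionCoeff hν (p := p + 1) le_rfl PowerSeries.X)).congr' ?_ ?_
  · filter_upwards [self_mem_nhdsWithin] with ε hε
    have hε0 : ε ≠ 0 := ne_of_gt hε
    rw [truncMoment_X hν hε (by lia), sum_range_succ', expansionCoeff, PowerSeries.constantCoeff_X]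
    simp only [pow_succ', mul_assoc]
    rw [← mul_sum]
    field_simp
    ring
  · filter_upwards [self_mem_nhdsWithin] with ε hε
    rw [pow_succ', inv_mul_cancel_left₀ (ne_of_gt hε)]

theorem isBigO_cmpMean_sub_sum_expansionCoeff (hν : 0 < ν) (p : ℕ) :
    (fun lam ↦ cmpMean lam ν - (lam ^ (1 / ν) +
        ∑ b ∈ range p, expansionCoeff ν (b + 1) PowerSeries.X * lam ^ (-(b / ν))))
      =O[atTop] fun lam ↦ lam ^ (-(p / ν)) := by
  have hpos : ∀ᶠ lam : ℝ in atTop, 0 < lam := eventually_gt_atTop 0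
  have htendsto : Tendsto (fun lam : ℝ ↦ lam ^ (-(1 / ν))) atTop (𝓝[>] 0) :=
    tendsto_nhdsWithin_iff.2 ⟨tendsto_rpow_neg_atTop (by positivity),
      hpos.mono fun lam hlam ↦ Real.rpow_pos_of_pos hlam _⟩
  have hpow {lam : ℝ} (hlam : 0 < lam) (b : ℕ) : (lam ^ (-(1 / ν))) ^ b = lam ^ (-(b / ν)) := by
    rw [← Real.rpow_mul_natCast hlam.le, neg_mul, div_mul_eq_mul_div, one_mul]
  refine ((isBigO_cmpMean_rpow_neg_sub_sum_expansionCoeff hν p).comp_tendsto htendsto).congr' ?_ ?_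
  · filter_upwards [hpos] with lam hlam
    have hlam_eq : (lam ^ (-(1 / ν))) ^ (-ν) = lam := by
      rw [← Real.rpow_mul hlam.le, neg_mul_neg, one_div_mul_cancel hν.ne', Real.rpow_one]
    simp only [Function.comp_apply, hlam_eq, hpow hlam, ← Real.rpow_neg hlam.le, neg_neg, mul_comm]
  · filter_upwards [hpos] with lam hlam using hpow hlam p

end MeanExpansion

section Coefficients

variable {ν : ℝ}

lemma choose_succ_eq_mul_div (a : ℝ) (n : ℕ) :
    Ring.choose a (n + 1) = Ring.choose a n * (a - n) / (n + 1) := by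
  have hfact : (n ! : ℝ) ≠ 0 := by positivity
  rw [Ring.choose_eq_smul, Ring.choose_eq_smul, descPochhammer_succ_right, Polynomial.smeval_mul,
    Polynomial.smeval_sub, Polynomial.smeval_X, pow_one, Polynomial.smeval_natCast,
    Nat.factorial_succ]
  simp only [smul_eq_mul, pow_zero, nsmul_eq_mul, mul_one]
  push_cast
  field_simp

lemma sum_choose_mul_coeff_divBinomialSubOne (hν : ν ≠ 0) (F : ℝ⟦X⟧) (n : ℕ) :
    ∑ k ∈ range (n + 1), Ring.choose ν (k + 1) *
      PowerSeries.coeff (n - k) (divBinomialSubOne ν F) = PowerSeries.coeff (n + 1) F := by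
  have h := congrArg (PowerSeries.coeff n) (mk_coeff_binomialSeries_mul_divBinomialSubOne hν F)
  rw [PowerSeries.coeff_mul, Nat.sum_antidiagonal_eq_sum_range_succ fun k i ↦
    PowerSeries.coeff k (PowerSeries.mk fun n ↦ PowerSeries.coeff (n + 1) _) *
      PowerSeries.coeff i (divBinomialSubOne ν F)] at h
  simpa using h

lemma coeff_divBinomialSubOne (hν : ν ≠ 0) (F : ℝ⟦X⟧) (n : ℕ) :
    PowerSeries.coeff n (divBinomialSubOne ν F) = (PowerSeries.coeff (n + 1) F -
      ∑ k ∈ range n, Ring.choose ν (k + 2) *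
        PowerSeries.coeff (n - (k + 1)) (divBinomialSubOne ν F)) / ν := by
  rw [eq_div_iff hν, ← sum_choose_mul_coeff_divBinomialSubOne hν F n, sum_range_succ']
  simp [mul_comm]

lemma choose_two (a : ℝ) : Ring.choose a 2 = a * (a - 1) / 2 := by
  simp [choose_succ_eq_mul_div a 1, one_add_one_eq_two]

lemma choose_three (a : ℝ) : Ring.choose a 3 = a * (a - 1) * (a - 2) / 6 := by
  rw [choose_succ_eq_mul_div a 2, choose_two]
  norm_num
  ring

lemma choose_four (a : ℝ) : Ring.choose a 4 = a * (a - 1) * (a - 2) * (a - 3) / 24 := by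
  rw [choose_succ_eq_mul_div a 3, choose_three]
  norm_num
  ring

lemma choose_five (a : ℝ) :
    Ring.choose a 5 = a * (a - 1) * (a - 2) * (a - 3) * (a - 4) / 120 := by
  rw [choose_succ_eq_mul_div a 4, choose_four]
  norm_num
  ring

lemma choose_six (a : ℝ) :
    Ring.choose a 6 = a * (a - 1) * (a - 2) * (a - 3) * (a - 4) * (a - 5) / 720 := by
  rw [choose_succ_eq_mul_div a 5, choose_five]
  norm_num
  ring

lemma coeff_zero_divBinomialSubOne (hν : ν ≠ 0) (F : ℝ⟦X⟧) :
    PowerSeries.coeff 0 (divBinomialSubOne ν F) = PowerSeries.coeff 1 F / ν := by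
  rw [coeff_divBinomialSubOne hν, sum_range_zero, sub_zero]

lemma coeff_one_divBinomialSubOne (hν : ν ≠ 0) (F : ℝ⟦X⟧) :
    PowerSeries.coeff 1 (divBinomialSubOne ν F) =
      (1 - ν) / (2 * ν) * PowerSeries.coeff 1 F + PowerSeries.coeff 2 F / ν := by
  rw [coeff_divBinomialSubOne hν, sum_range_one]
  simp only [zero_add, Nat.reduceSub, coeff_zero_divBinomialSubOne hν, choose_two]
  field_simp
  ring

lemma coeff_two_divBinomialSubOne (hν : ν ≠ 0) (F : ℝ⟦X⟧) :
    PowerSeries.coeff 2 (divBinomialSubOne ν F) =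
      (ν ^ 2 - 1) / (12 * ν) * PowerSeries.coeff 1 F +
        (1 - ν) / (2 * ν) * PowerSeries.coeff 2 F + PowerSeries.coeff 3 F / ν := by
  rw [coeff_divBinomialSubOne hν]
  simp only [sum_range_succ, sum_range_zero, zero_add, Nat.reduceAdd, Nat.reduceSub,
    coeff_zero_divBinomialSubOne hν, coeff_one_divBinomialSubOne hν, choose_two, choose_three]
  field_simp
  ring

lemma coeff_three_divBinomialSubOne (hν : ν ≠ 0) (F : ℝ⟦X⟧) :
    PowerSeries.coeff 3 (divBinomialSubOne ν F) =
      (1 - ν ^ 2) / (24 * ν) * PowerSeries.coeff 1 F +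
        (ν ^ 2 - 1) / (12 * ν) * PowerSeries.coeff 2 F +
        (1 - ν) / (2 * ν) * PowerSeries.coeff 3 F + PowerSeries.coeff 4 F / ν := by
  rw [coeff_divBinomialSubOne hν]
  simp only [sum_range_succ, sum_range_zero, zero_add, Nat.reduceAdd, Nat.reduceSub,
    coeff_zero_divBinomialSubOne hν, coeff_one_divBinomialSubOne hν,
    coeff_two_divBinomialSubOne hν, choose_two, choose_three, choose_four]
  field_simp
  ring

lemma coeff_four_divBinomialSubOne_X (hν : ν ≠ 0) :
    PowerSeries.coeff 4 (divBinomialSubOne ν PowerSeries.X) =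
      -((ν ^ 2 - 1) * (ν ^ 2 - 19) / (720 * ν)) := by
  rw [coeff_divBinomialSubOne hν]
  simp only [sum_range_succ, sum_range_zero, zero_add, Nat.reduceAdd, Nat.reduceSub,
    coeff_zero_divBinomialSubOne hν, coeff_one_divBinomialSubOne hν,
    coeff_two_divBinomialSubOne hν, coeff_three_divBinomialSubOne hν, PowerSeries.coeff_X,
    choose_two, choose_three, choose_four, choose_five]
  norm_num
  field_simp
  ring

lemma coeff_five_divBinomialSubOne_X (hν : ν ≠ 0) :
    PowerSeries.coeff 5 (divBinomialSubOne ν PowerSeries.X) =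
      (ν ^ 2 - 1) * (ν ^ 2 - 9) / (480 * ν) := by
  rw [coeff_divBinomialSubOne hν]
  simp only [sum_range_succ, sum_range_zero, zero_add, Nat.reduceAdd, Nat.reduceSub,
    coeff_zero_divBinomialSubOne hν, coeff_one_divBinomialSubOne hν,
    coeff_two_divBinomialSubOne hν, coeff_three_divBinomialSubOne hν,
    coeff_four_divBinomialSubOne_X hν, PowerSeries.coeff_X,
    choose_two, choose_three, choose_four, choose_five, choose_six]
  norm_num
  field_simp
  ring

lemma expansionCoeff_succ (ν : ℝ) (b : ℕ) (F : ℝ⟦X⟧) :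
    expansionCoeff ν (b + 1) F =
      ∑ d ∈ range b, expansionCoeff ν (b - d) (hasseDeriv (d + 1) (divBinomialSubOne ν F)) +
        PowerSeries.coeff (b + 1) (divBinomialSubOne ν F) := by
  rw [expansionCoeff, sum_range_succ, Nat.sub_self, expansionCoeff,
    ← PowerSeries.coeff_zero_eq_constantCoeff_apply, coeff_hasseDeriv]
  simp

lemma expansionCoeff_one (hν : ν ≠ 0) (F : ℝ⟦X⟧) :
    expansionCoeff ν 1 F =
      (1 - ν) / (2 * ν) * PowerSeries.coeff 1 F + PowerSeries.coeff 2 F / ν := by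
  rw [expansionCoeff_succ, sum_range_zero, zero_add, coeff_one_divBinomialSubOne hν]

lemma expansionCoeff_two (hν : ν ≠ 0) (F : ℝ⟦X⟧) :
    expansionCoeff ν 2 F = (1 - ν ^ 2) / (24 * ν ^ 2) * PowerSeries.coeff 1 F +
      (1 - ν) ^ 2 / (4 * ν ^ 2) * PowerSeries.coeff 2 F +
      (5 - 3 * ν) / (2 * ν ^ 2) * PowerSeries.coeff 3 F +
      3 / ν ^ 2 * PowerSeries.coeff 4 F := by
  rw [expansionCoeff_succ, sum_range_one, expansionCoeff_one hν]
  simp only [coeff_hasseDeriv, zero_add, Nat.reduceAdd, Nat.choose_one_right,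
    coeff_two_divBinomialSubOne hν, coeff_three_divBinomialSubOne hν]
  push_cast
  field_simp
  ring

lemma expansionCoeff_one_X (hν : ν ≠ 0) :
    expansionCoeff ν 1 PowerSeries.X = -((ν - 1) / (2 * ν)) := by
  simp only [expansionCoeff_one hν, PowerSeries.coeff_X]
  norm_num
  ring

lemma expansionCoeff_two_X (hν : ν ≠ 0) :
    expansionCoeff ν 2 PowerSeries.X = -((ν ^ 2 - 1) / (24 * ν ^ 2)) := by
  simp only [expansionCoeff_two hν, PowerSeries.coeff_X]
  norm_num
  ring

lemma expansionCoeff_three_X (hν : ν ≠ 0) :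
    expansionCoeff ν 3 PowerSeries.X = -((ν ^ 2 - 1) / (24 * ν ^ 3)) := by
  rw [expansionCoeff_succ, sum_range_succ, sum_range_one, expansionCoeff_two hν,
    expansionCoeff_one hν]
  simp only [coeff_hasseDeriv, zero_add, Nat.reduceAdd, Nat.choose_one_right,
    coeff_two_divBinomialSubOne hν, coeff_three_divBinomialSubOne hν,
    coeff_four_divBinomialSubOne_X hν, coeff_five_divBinomialSubOne_X hν, PowerSeries.coeff_X]
  norm_num [Nat.choose]
  field_simp
  ring

end Coefficients

end CMP

/-- Asymptotics of the mean of the `CMP(λ,ν)` distribution: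
`E X = λ^{1/ν} − (ν−1)/(2ν) − ((ν²−1)/(24ν²)) λ^{−1/ν} − ((ν²−1)/(24ν³)) λ^{−2/ν}
  + O(λ^{−3/ν})` as `λ → ∞`. -/
theorem cmpMean_asymptotic (ν : ℝ) (hν : 0 < ν) :
    ∃ C > (0 : ℝ), ∃ Λ > (0 : ℝ), ∀ lam : ℝ, lam ≥ Λ →
      |cmpMean lam ν - lam ^ (1 / ν) + (ν - 1) / (2 * ν) +
          ((ν ^ 2 - 1) / (24 * ν ^ 2)) * lam ^ (-(1 / ν)) +
          ((ν ^ 2 - 1) / (24 * ν ^ 3)) * lam ^ (-(2 / ν))|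
        ≤ C * lam ^ (-(3 / ν)) := by
  obtain ⟨C, hC, hbound⟩ := (CMP.isBigO_cmpMean_sub_sum_expansionCoeff hν 3).exists_pos
  obtain ⟨Λ, hΛ⟩ := Filter.eventually_atTop.1 hbound.bound
  refine ⟨C, hC, max Λ 1, by positivity, fun lam hlam ↦ ?_⟩
  have hlam_pos : 0 < lam := one_pos.trans_le ((le_max_right _ _).trans hlam)
  have h := hΛ lam ((le_max_left _ _).trans hlam)
  rw [Real.norm_eq_abs, Real.norm_of_nonneg (Real.rpow_nonneg hlam_pos.le _), Nat.cast_ofNat] at h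
  convert h using 2
  simp only [Finset.sum_range_succ, Finset.sum_range_zero, zero_add, Nat.reduceAdd,
    CMP.expansionCoeff_one_X hν.ne', CMP.expansionCoeff_two_X hν.ne',
    CMP.expansionCoeff_three_X hν.ne', Nat.cast_zero, Nat.cast_one, Nat.cast_ofNat, zero_div,
    neg_zero, Real.rpow_zero]
  ring
end

section
/- Fix ν > 0, and let V(λ,ν) = (1/Z(λ,ν))·Σ_{j=0}^∞ j²·λ^j/(j!)^ν − ((1/Z(λ,ν))·Σ_{j=0}^∞ j·λ^j/(j!)^ν)² denote the variance of the CMP(λ,ν) distribution. Then as λ → ∞, V(λ,ν) = (λ^(1/ν)/ν)·(1 + ((ν²−1)/(24ν²))·λ^(−2/ν) + ((ν²−1)/(12ν³))·λ^(−3/ν) + O(λ^(−4/ν))). Precisely: there exist constants C > 0 and Λ > 0 (depending only on ν) such that for all λ ≥ Λ, |ν·λ^(−1/ν)·V(λ,ν) − 1 − ((ν²−1)/(24ν²))·λ^(−2/ν) − ((ν²−1)/(12ν³))·λ^(−3/ν)| ≤ C·λ^(−4/ν). -/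
open scoped BigOperators

/-- The variance of the `CMP(λ,ν)` distribution:
`V(λ,ν) = (1/Z) ∑_j j² λ^j/(j!)^ν − ((1/Z) ∑_j j λ^j/(j!)^ν)²`. -/
noncomputable def cmpVar (lam nu : ℝ) : ℝ :=
  (∑' j : ℕ, (j : ℝ) ^ 2 * lam ^ j / (j.factorial : ℝ) ^ nu) / cmpZ lam nu -
    ((∑' j : ℕ, (j : ℝ) * lam ^ j / (j.factorial : ℝ) ^ nu) / cmpZ lam nu) ^ 2

/-!
Put `h = lam ^ (-1 / (2ν))` and `U = h (X - h⁻²)`. The ratio of consecutive probabilities gives the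
Stein identity `E[(1 + h U) ^ ν F(U)] = E[F(U + h)]`. A test function for which the difference
`((1 + h u) ^ ν - 1) F(u)` dominates `h u ^ (2r+2)` shows that all moments of `U` stay bounded as
`h → 0`. Taking `F(u) = u ^ r` and expanding `(1 + h u) ^ ν` in a binomial series then yields, up to
`O(h ^ N)`, linear relations between the moments. These are triangular, so every moment has a full
asymptotic expansion in powers of `h` with recursively computable coefficients, and
`h² Var X = E U² - (E U)²` can be read off.
-/

open Filter Asymptotics Topology Finset

section RealEstimates

lemma succ_mul_ringChoose_succ {R : Type*} [Ring R] [BinomialRing R] (a : R) (k : ℕ) :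
    (k + 1) * Ring.choose a (k + 1) = Ring.choose a k * (a - k) := by
  simpa [nsmul_eq_mul, Nat.choose_succ_self_right] using Ring.choose_smul_choose a k.le_succ

lemma ringChoose_succ_eq_div {K : Type*} [Field K] [CharZero K] [BinomialRing K] (a : K) (k : ℕ) :
    Ring.choose a (k + 1) = Ring.choose a k * (a - k) / (k + 1) := by
  rw [eq_div_iff k.cast_add_one_ne_zero, mul_comm, succ_mul_ringChoose_succ]

lemma abs_one_add_rpow_sub_sum_choose_le {ν t : ℝ} {M N : ℕ} (hν : 0 ≤ ν) (hνN : ν ≤ N)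
    (hMN : M ≤ N) (ht : -1 ≤ t) :
    |(1 + t) ^ ν - ∑ k ∈ range M, Ring.choose ν k * t ^ k| ≤
      (1 + ∑ k ∈ range M, |Ring.choose ν k|) * (1 + |t|) ^ N := by
  have hrpow : |(1 + t) ^ ν| ≤ (1 + |t|) ^ N := by
    rw [abs_of_nonneg (Real.rpow_nonneg (by linarith) ν), ← Real.rpow_natCast]
    calc (1 + t) ^ ν ≤ (1 + |t|) ^ ν := by gcongr; exacts [by linarith, le_abs_self t]
      _ ≤ (1 + |t|) ^ (N : ℝ) := by gcongr; linarith [abs_nonneg t]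
  have hsum : |∑ k ∈ range M, Ring.choose ν k * t ^ k| ≤
      (∑ k ∈ range M, |Ring.choose ν k|) * (1 + |t|) ^ N := by
    rw [sum_mul]
    refine (abs_sum_le_sum_abs _ _).trans (sum_le_sum fun k hk => ?_)
    rw [abs_mul, abs_pow]
    gcongr
    calc |t| ^ k ≤ (1 + |t|) ^ k := by gcongr; linarith
      _ ≤ (1 + |t|) ^ N := by
        gcongr
        exacts [by linarith [abs_nonneg t], (mem_range.1 hk).le.trans hMN]
  linarith [abs_sub ((1 + t) ^ ν) (∑ k ∈ range M, Ring.choose ν k * t ^ k)]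

lemma one_add_rpow_sub_sum_choose_isBigO (ν : ℝ) (M : ℕ) :
    (fun t : ℝ => (1 + t) ^ ν - ∑ k ∈ range M, Ring.choose ν k * t ^ k) =O[𝓝 0]
      fun t => |t| ^ M := by
  simpa [FormalMultilinearSeries.partialSum, binomialSeries,
    FormalMultilinearSeries.coeff_ofScalars, mul_comm] using
    (Real.one_add_rpow_hasFPowerSeriesAt_zero (a := ν)).isBigO_sub_partialSum_pow M

lemma exists_abs_one_add_rpow_sub_sum_choose_le {ν : ℝ} (hν : 0 ≤ ν) (M : ℕ) :
    ∃ C ≥ 0, ∃ N ≥ M, ∀ t : ℝ, -1 ≤ t →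
      |(1 + t) ^ ν - ∑ k ∈ range M, Ring.choose ν k * t ^ k| ≤ C * (|t| ^ M + |t| ^ N) := by
  obtain ⟨c, hc, hnear⟩ := (one_add_rpow_sub_sum_choose_isBigO ν M).exists_pos
  obtain ⟨δ, hδ, hnear⟩ := Metric.eventually_nhds_iff.1 hnear.bound
  obtain ⟨N, hN⟩ := exists_nat_ge (max ν M)
  have hMN : M ≤ N := by exact_mod_cast (le_max_right _ _).trans hN
  set S := 1 + ∑ k ∈ range M, |Ring.choose ν k|
  have : 0 ≤ S := by positivity
  refine ⟨c + S * (1 / δ + 1) ^ N, by positivity, N, hMN, fun t ht => ?_⟩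
  rcases lt_or_ge |t| δ with htδ | htδ
  · calc _ ≤ c * |t| ^ M := by simpa using hnear (y := t) (by simpa using htδ)
      _ ≤ _ := by gcongr <;> exact le_add_of_nonneg_right (by positivity)
  · have hfar : 1 + |t| ≤ (1 / δ + 1) * |t| := by
      rw [add_mul, one_mul, one_div_mul_eq_div]
      gcongr
      rwa [one_le_div hδ]
    calc _ ≤ S * (1 + |t|) ^ N :=
          abs_one_add_rpow_sub_sum_choose_le hν ((le_max_left _ _).trans hN) hMN ht
      _ ≤ S * ((1 / δ + 1) * |t|) ^ N := by gcongr
      _ = S * (1 / δ + 1) ^ N * |t| ^ N := by rw [mul_pow, mul_assoc]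
      _ ≤ _ := by gcongr <;> exact le_add_of_nonneg_left (by positivity)

lemma min_one_mul_sub_one_sq_le {ν x : ℝ} (hν : 0 < ν) (hx : 0 ≤ x) :
    min 1 ν * (x - 1) ^ 2 ≤ (x ^ ν - 1) * ((1 + x) * (x - 1)) := by
  have hmin : 0 < min 1 ν := lt_min one_pos hν
  rcases le_total x 1 with hx1 | hx1
  · have hbernoulli : x ^ ν ≤ 1 + min 1 ν * (x - 1) :=
      calc x ^ ν ≤ x ^ min 1 ν :=
            Real.rpow_le_rpow_of_exponent_ge' hx hx1 hmin.le (min_le_right _ _)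
        _ = (1 + (x - 1)) ^ min 1 ν := by ring_nf
        _ ≤ _ := rpow_one_add_le_one_add_mul_self (by linarith) hmin.le (min_le_left _ _)
    have hx1' : 0 ≤ min 1 ν * (x - 1) ^ 2 := by positivity
    nlinarith [mul_nonneg (add_nonneg zero_le_one hx) (sub_nonneg.2 hx1)]
  · have hx0 : 0 < x := by linarith
    have hlog : ν * (1 - x⁻¹) ≤ x ^ ν - 1 := by
      have hexp := Real.add_one_le_exp (Real.log x * ν)
      rw [← Real.rpow_def_of_pos hx0] at hexp
      nlinarith [Real.one_sub_inv_le_log_of_pos hx0]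
    have hinv : 1 - x⁻¹ ≥ 0 := sub_nonneg.2 (inv_le_one_of_one_le₀ hx1)
    calc min 1 ν * (x - 1) ^ 2 ≤ ν * (x - 1) ^ 2 := by gcongr; exact min_le_right _ _
      _ ≤ ν * (x - 1) ^ 2 + ν * ((1 - x⁻¹) * (x - 1)) := by
        have := sub_nonneg.2 hx1
        simp only [le_add_iff_nonneg_right]
        positivity
      _ = ν * (1 - x⁻¹) * ((1 + x) * (x - 1)) := by field_simp; ring
      _ ≤ _ := by
        have := sub_nonneg.2 hx1
        gcongr

lemma pow_le_pow_add_pow_succ_div {t K : ℝ} (ht : 0 ≤ t) (hK : 0 < K) (n : ℕ) :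
    t ^ n ≤ K ^ n + t ^ (n + 1) / K := by
  rcases le_total t K with htK | hKt
  · calc t ^ n ≤ K ^ n := by gcongr
      _ ≤ _ := le_add_of_nonneg_right (by positivity)
  · calc t ^ n ≤ t ^ (n + 1) / K := by rw [le_div_iff₀ hK, pow_succ]; gcongr
      _ ≤ _ := le_add_of_nonneg_left (by positivity)

lemma exists_abs_add_one_pow_le {ε : ℝ} (hε : 0 < ε) (n : ℕ) :
    ∃ A ≥ 0, ∀ u : ℝ, (|u| + 1) ^ n ≤ A + ε * |u| ^ (n + 1) := by
  refine ⟨(2 ^ n / ε) ^ n + ε, by positivity, fun u => ?_⟩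
  have hK : (0 : ℝ) < 2 ^ n / ε := by positivity
  calc (|u| + 1) ^ n ≤ (2 ^ n / ε) ^ n + (|u| + 1) ^ (n + 1) / (2 ^ n / ε) :=
        pow_le_pow_add_pow_succ_div (by positivity) hK n
    _ ≤ (2 ^ n / ε) ^ n + 2 ^ n * (|u| ^ (n + 1) + 1 ^ (n + 1)) / (2 ^ n / ε) := by
      gcongr
      exact add_pow_le (abs_nonneg u) zero_le_one (n + 1)
    _ = _ := by field_simp; ring

lemma add_pow_succ_sub_pow_succ_le {h : ℝ} (h0 : 0 ≤ h) (h1 : h ≤ 1) (u : ℝ) (n : ℕ) :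
    (u + h) ^ (n + 1) - u ^ (n + 1) ≤ h * ((n + 1) * (|u| + 1) ^ n) := by
  have hmax : max |u + h| |u| ≤ |u| + 1 := by
    refine max_le ((abs_add_le u h).trans ?_) (by linarith)
    rw [abs_of_nonneg h0]
    gcongr
  calc (u + h) ^ (n + 1) - u ^ (n + 1) ≤ |(u + h) ^ (n + 1) - u ^ (n + 1)| := le_abs_self _
    _ ≤ |u + h - u| * (n + 1 : ℕ) * max |u + h| |u| ^ n := abs_pow_sub_pow_le _ _ _
    _ = h * ((n + 1) * max |u + h| |u| ^ n) := by
      rw [add_sub_cancel_left, abs_of_nonneg h0]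
      push_cast
      ring
    _ ≤ _ := by gcongr

lemma exists_two_add_mul_mul_pow_sub_le {ε : ℝ} (hε : 0 < ε) (n : ℕ) :
    ∃ A ≥ 0, ∀ h u : ℝ, 0 ≤ h → h ≤ 1 →
      (2 + h * (u + h)) * (u + h) ^ (n + 1) - (2 + h * u) * u ^ (n + 1) ≤
        h * (A + ε * |u| ^ (n + 2)) := by
  set D : ℝ := 3 * n + 4
  have hD : 0 < D := by positivity
  obtain ⟨A, hA, habs⟩ := exists_abs_add_one_pow_le (div_pos hε hD) (n + 1)
  refine ⟨D * A, by positivity, fun h u h0 h1 => ?_⟩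
  have hpow : (|u| + 1) ^ n ≤ (|u| + 1) ^ (n + 1) :=
    pow_le_pow_right₀ (le_add_of_nonneg_left (abs_nonneg u)) n.le_succ
  calc _ = 2 * ((u + h) ^ (n + 1) - u ^ (n + 1)) + h * ((u + h) ^ (n + 2) - u ^ (n + 2)) := by
        ring
    _ ≤ 2 * (h * ((n + 1) * (|u| + 1) ^ n)) +
        1 * (h * (((n + 1 : ℕ) + 1) * (|u| + 1) ^ (n + 1))) :=
      add_le_add (by gcongr; exact add_pow_succ_sub_pow_succ_le h0 h1 u n)
        ((mul_le_mul_of_nonneg_left (add_pow_succ_sub_pow_succ_le h0 h1 u (n + 1)) h0).trans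
          (by gcongr))
    _ ≤ 2 * (h * ((n + 1) * (|u| + 1) ^ (n + 1))) +
        1 * (h * (((n + 1 : ℕ) + 1) * (|u| + 1) ^ (n + 1))) := by gcongr
    _ = h * (D * (|u| + 1) ^ (n + 1)) := by push_cast; ring
    _ ≤ h * (D * (A + ε / D * |u| ^ (n + 2))) := by gcongr; exact habs u
    _ = _ := by field_simp

lemma min_one_mul_pow_le {ν h u : ℝ} (hν : 0 < ν) (h0 : 0 < h) (hu : 0 ≤ 1 + h * u) (r : ℕ) :
    h * (min 1 ν * u ^ (2 * r + 2)) ≤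
      ((1 + h * u) ^ ν - 1) * ((2 + h * u) * u ^ (2 * r + 1)) := by
  have hsq : h * (h * (min 1 ν * u ^ 2)) ≤ h * (((1 + h * u) ^ ν - 1) * ((2 + h * u) * u)) :=
    calc _ = min 1 ν * (1 + h * u - 1) ^ 2 := by ring
      _ ≤ _ := min_one_mul_sub_one_sq_le hν hu
      _ = _ := by ring
  calc _ = h * (min 1 ν * u ^ 2) * (u ^ r) ^ 2 := by ring
    _ ≤ ((1 + h * u) ^ ν - 1) * ((2 + h * u) * u) * (u ^ r) ^ 2 := by
      gcongr ?_ * _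
      exact le_of_mul_le_mul_left hsq h0
    _ = _ := by ring

end RealEstimates

section Law

variable {lam ν : ℝ}

/-- The probability `P(X = j)` for `X ∼ CMP(lam, ν)`. -/
noncomputable def cmpProb (lam ν : ℝ) (j : ℕ) : ℝ :=
  lam ^ j / (j.factorial : ℝ) ^ ν / cmpZ lam ν

/-- The small parameter `h = lam ^ (-1 / (2ν))` of the expansion: `X` concentrates around `h⁻²`,
with fluctuations of order `h⁻¹`. -/
noncomputable def cmpScale (lam ν : ℝ) : ℝ := lam ^ (-(1 / (2 * ν)))

/-- The value at `X = j` of the rescaled variable `U = h (X - h⁻²)`, where `h = cmpScale lam ν`. -/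
noncomputable def cmpRescale (lam ν : ℝ) (j : ℕ) : ℝ :=
  cmpScale lam ν * j - (cmpScale lam ν)⁻¹

/-- The moment `E U ^ r` of the rescaled variable `U`. -/
noncomputable def cmpMoment (lam ν : ℝ) (r : ℕ) : ℝ :=
  ∑' j, cmpProb lam ν j * cmpRescale lam ν j ^ r

/-- The absolute moment `E |U| ^ r` of the rescaled variable `U`. -/
noncomputable def cmpAbsMoment (lam ν : ℝ) (r : ℕ) : ℝ :=
  ∑' j, cmpProb lam ν j * |cmpRescale lam ν j| ^ r

lemma summable_pow_div_factorial_rpow (hν : 0 < ν) (lam : ℝ) :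
    Summable fun j : ℕ => lam ^ j / (j.factorial : ℝ) ^ ν := by
  rcases eq_or_ne lam 0 with rfl | hlam
  · exact summable_of_ne_finset_zero (s := {0}) fun j hj => by
      simp [zero_pow (by simpa using hj : j ≠ 0)]
  refine summable_of_ratio_test_tendsto_lt_one (l := 0) one_pos
    (.of_forall fun j => by positivity) ?_
  have hratio (j : ℕ) : ‖lam ^ (j + 1) / ((j + 1).factorial : ℝ) ^ ν‖ /
      ‖lam ^ j / (j.factorial : ℝ) ^ ν‖ = |lam| * (((j : ℝ) + 1) ^ ν)⁻¹ := by
    have := Real.rpow_pos_of_pos (j.cast_add_one_pos (α := ℝ)) ν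
    rw [← norm_div, Nat.factorial_succ, Nat.cast_mul, Nat.cast_succ,
      Real.mul_rpow (by positivity) (by positivity), pow_succ, ← abs_of_pos (inv_pos.2 this),
      ← abs_mul, Real.norm_eq_abs]
    congr 1
    field_simp
  simp only [hratio]
  have hinv := ((tendsto_rpow_atTop hν).comp
    (tendsto_atTop_add_const_right _ 1 tendsto_natCast_atTop_atTop)).inv_tendsto_atTop
  simpa using hinv.const_mul |lam|

lemma summable_pow_div_factorial_rpow_mul_pow (hν : 0 < ν) (hlam : 0 < lam) (k : ℕ) :
    Summable fun j : ℕ => lam ^ j / (j.factorial : ℝ) ^ ν * ((j : ℝ) + 1) ^ k := by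
  refine .of_nonneg_of_le (fun j => by positivity) (fun j => ?_)
    (summable_pow_div_factorial_rpow hν (lam * 2 ^ k))
  have htwo : (j : ℝ) + 1 ≤ 2 ^ j := by exact_mod_cast j.lt_two_pow_self
  calc _ ≤ lam ^ j / (j.factorial : ℝ) ^ ν * (2 ^ j) ^ k := by gcongr
    _ = _ := by rw [mul_pow, pow_right_comm]; ring

lemma cmpZ_pos (hν : 0 < ν) (hlam : 0 < lam) : 0 < cmpZ lam ν :=
  (summable_pow_div_factorial_rpow hν lam).tsum_pos (fun j => by positivity) 0 (by simp)

lemma cmpProb_nonneg (hν : 0 < ν) (hlam : 0 < lam) (j : ℕ) : 0 ≤ cmpProb lam ν j := by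
  have := cmpZ_pos hν hlam
  unfold cmpProb
  positivity

lemma hasSum_cmpProb (hν : 0 < ν) (hlam : 0 < lam) : HasSum (cmpProb lam ν) 1 := by
  rw [← div_self (cmpZ_pos hν hlam).ne']
  exact (summable_pow_div_factorial_rpow hν lam).hasSum.div_const _

lemma cmpScale_pos (hlam : 0 < lam) (ν : ℝ) : 0 < cmpScale lam ν := Real.rpow_pos_of_pos hlam _

lemma cmpScale_le_one (hν : 0 < ν) (hlam : 1 ≤ lam) : cmpScale lam ν ≤ 1 :=
  Real.rpow_le_one_of_one_le_of_nonpos hlam (by simp only [Left.neg_nonpos_iff]; positivity)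

lemma cmpScale_pow (hν : ν ≠ 0) (hlam : 0 ≤ lam) (m : ℕ) :
    cmpScale lam ν ^ (2 * m) = lam ^ (-(m / ν)) := by
  rw [cmpScale, ← Real.rpow_natCast, ← Real.rpow_mul hlam]
  congr 1
  push_cast
  field_simp

lemma one_add_cmpScale_mul_cmpRescale (hlam : 0 < lam) (ν : ℝ) (j : ℕ) :
    1 + cmpScale lam ν * cmpRescale lam ν j = cmpScale lam ν ^ 2 * j := by
  have := cmpScale_pos hlam ν
  unfold cmpRescale
  field_simp
  ring

lemma one_add_cmpScale_mul_cmpRescale_nonneg (hlam : 0 < lam) (ν : ℝ) (j : ℕ) :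
    0 ≤ 1 + cmpScale lam ν * cmpRescale lam ν j := by
  rw [one_add_cmpScale_mul_cmpRescale hlam]
  positivity

lemma cmpRescale_succ (lam ν : ℝ) (j : ℕ) :
    cmpRescale lam ν (j + 1) = cmpRescale lam ν j + cmpScale lam ν := by
  unfold cmpRescale
  push_cast
  ring

lemma cmpProb_succ_mul (hν : ν ≠ 0) (hlam : 0 < lam) (j : ℕ) :
    cmpProb lam ν (j + 1) * (1 + cmpScale lam ν * cmpRescale lam ν (j + 1)) ^ ν =
      cmpProb lam ν j := by
  have hscale : (cmpScale lam ν ^ 2) ^ ν = lam⁻¹ := by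
    have := cmpScale_pow hν hlam.le 1
    rw [mul_one] at this
    rw [this, ← Real.rpow_mul hlam.le, ← Real.rpow_neg_one]
    congr 1
    push_cast
    field_simp
  have := Real.rpow_pos_of_pos (j.cast_add_one_pos (α := ℝ)) ν
  rw [one_add_cmpScale_mul_cmpRescale hlam, Real.mul_rpow (by positivity) (by positivity), hscale,
    cmpProb, cmpProb, Nat.factorial_succ, Nat.cast_mul, Nat.cast_succ,
    Real.mul_rpow (by positivity) (by positivity), pow_succ]
  field_simp

lemma abs_cmpRescale_le (hlam : 0 < lam) (ν : ℝ) (j : ℕ) :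
    |cmpRescale lam ν j| ≤ (cmpScale lam ν + (cmpScale lam ν)⁻¹) * (j + 1) := by
  have h0 := cmpScale_pos hlam ν
  have hinv := inv_pos.2 h0
  rw [cmpRescale, abs_le]
  constructor <;> nlinarith [mul_nonneg h0.le j.cast_nonneg, mul_nonneg hinv.le j.cast_nonneg]

lemma summable_cmpProb_mul_abs_pow (hν : 0 < ν) (hlam : 0 < lam) (r : ℕ) :
    Summable fun j => cmpProb lam ν j * |cmpRescale lam ν j| ^ r := by
  have hp := cmpProb_nonneg hν hlam
  refine .of_nonneg_of_le (fun j => mul_nonneg (hp j) (by positivity)) (fun j => ?_)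
    ((summable_pow_div_factorial_rpow_mul_pow hν hlam r).mul_left
      ((cmpScale lam ν + (cmpScale lam ν)⁻¹) ^ r / cmpZ lam ν))
  calc _ ≤ cmpProb lam ν j * ((cmpScale lam ν + (cmpScale lam ν)⁻¹) * (j + 1)) ^ r := by
        gcongr
        exacts [hp j, abs_cmpRescale_le hlam ν j]
    _ = _ := by rw [cmpProb, mul_pow]; ring

lemma hasSum_cmpAbsMoment (hν : 0 < ν) (hlam : 0 < lam) (r : ℕ) :
    HasSum (fun j => cmpProb lam ν j * |cmpRescale lam ν j| ^ r) (cmpAbsMoment lam ν r) :=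
  (summable_cmpProb_mul_abs_pow hν hlam r).hasSum

lemma norm_cmpProb_mul_pow (hν : 0 < ν) (hlam : 0 < lam) (r j : ℕ) :
    ‖cmpProb lam ν j * cmpRescale lam ν j ^ r‖ = cmpProb lam ν j * |cmpRescale lam ν j| ^ r := by
  rw [norm_mul, norm_pow, Real.norm_of_nonneg (cmpProb_nonneg hν hlam j), Real.norm_eq_abs]

lemma hasSum_cmpMoment (hν : 0 < ν) (hlam : 0 < lam) (r : ℕ) :
    HasSum (fun j => cmpProb lam ν j * cmpRescale lam ν j ^ r) (cmpMoment lam ν r) :=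
  (Summable.of_norm_bounded (summable_cmpProb_mul_abs_pow hν hlam r)
    fun j => (norm_cmpProb_mul_pow hν hlam r j).le).hasSum

lemma cmpMoment_zero (hν : 0 < ν) (hlam : 0 < lam) : cmpMoment lam ν 0 = 1 := by
  simpa [cmpMoment] using (hasSum_cmpProb hν hlam).tsum_eq

lemma cmpAbsMoment_nonneg (hν : 0 < ν) (hlam : 0 < lam) (r : ℕ) : 0 ≤ cmpAbsMoment lam ν r :=
  tsum_nonneg fun j => mul_nonneg (cmpProb_nonneg hν hlam j) (by positivity)

lemma abs_cmpMoment_le (hν : 0 < ν) (hlam : 0 < lam) (r : ℕ) :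
    |cmpMoment lam ν r| ≤ cmpAbsMoment lam ν r :=
  tsum_of_norm_bounded (hasSum_cmpAbsMoment hν hlam r)
    fun j => (norm_cmpProb_mul_pow hν hlam r j).le

lemma hasSum_cmpProb_mul_add_scale_pow (hν : 0 < ν) (hlam : 0 < lam) (r : ℕ) :
    HasSum (fun j => cmpProb lam ν j * (cmpRescale lam ν j + cmpScale lam ν) ^ r)
      (∑ k ∈ range (r + 1), cmpScale lam ν ^ k * (r.choose k * cmpMoment lam ν (r - k))) := by
  have hbinom (j : ℕ) : cmpProb lam ν j * (cmpRescale lam ν j + cmpScale lam ν) ^ r =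
      ∑ k ∈ range (r + 1), cmpScale lam ν ^ k *
        (r.choose k * (cmpProb lam ν j * cmpRescale lam ν j ^ (r - k))) := by
    rw [add_comm, add_pow, mul_sum]
    exact sum_congr rfl fun k _ => by ring
  simp only [hbinom]
  exact hasSum_sum fun k _ => ((hasSum_cmpMoment hν hlam _).mul_left _).mul_left _

lemma hasSum_cmp_stein_iff (hν : ν ≠ 0) (hlam : 0 < lam) (F : ℝ → ℝ) {s : ℝ} :
    HasSum (fun j => cmpProb lam ν j *
      ((1 + cmpScale lam ν * cmpRescale lam ν j) ^ ν * F (cmpRescale lam ν j))) s ↔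
    HasSum (fun j => cmpProb lam ν j * F (cmpRescale lam ν j + cmpScale lam ν)) s := by
  rw [← (Nat.succ_injective).hasSum_iff]
  · refine iff_of_eq (congrArg (HasSum · s) (funext fun j => ?_))
    rw [Function.comp_apply, Nat.succ_eq_add_one, ← mul_assoc, cmpProb_succ_mul hν hlam,
      cmpRescale_succ]
  · intro j hj
    obtain rfl : j = 0 := by simpa using hj
    simp [one_add_cmpScale_mul_cmpRescale hlam, Real.zero_rpow hν]

lemma exists_hasSum_cmpProb_mul_rpow_sub_one_mul (hν : ν ≠ 0) (hlam : 0 < lam) {F : ℝ → ℝ}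
    (hF : Summable fun j => cmpProb lam ν j * F (cmpRescale lam ν j))
    (hFshift : Summable fun j => cmpProb lam ν j * F (cmpRescale lam ν j + cmpScale lam ν)) :
    ∃ s, HasSum (fun j => cmpProb lam ν j *
        (((1 + cmpScale lam ν * cmpRescale lam ν j) ^ ν - 1) * F (cmpRescale lam ν j))) s ∧
      HasSum (fun j => cmpProb lam ν j *
        (F (cmpRescale lam ν j + cmpScale lam ν) - F (cmpRescale lam ν j))) s := by
  obtain ⟨a, hF⟩ := hF
  obtain ⟨b, hFshift⟩ := hFshift
  have hstein := (hasSum_cmp_stein_iff hν hlam F).2 hFshift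
  exact ⟨b - a, (hstein.sub hF).congr_fun fun j => by ring,
    (hFshift.sub hF).congr_fun fun j => by ring⟩

lemma cmpScale_sq_mul_cmpVar (hν : 0 < ν) (hlam : 0 < lam) :
    cmpScale lam ν ^ 2 * cmpVar lam ν = cmpMoment lam ν 2 - cmpMoment lam ν 1 ^ 2 := by
  set h := cmpScale lam ν with hh
  have h0 : h ≠ 0 := (cmpScale_pos hlam ν).ne'
  have hcast (j : ℕ) : (j : ℝ) = h⁻¹ * cmpRescale lam ν j + h⁻¹ ^ 2 := by
    rw [cmpRescale, ← hh]
    field_simp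
    ring
  have hfirst : HasSum (fun j : ℕ => cmpProb lam ν j * j)
      (h⁻¹ * cmpMoment lam ν 1 + h⁻¹ ^ 2 * 1) :=
    (((hasSum_cmpMoment hν hlam 1).mul_left h⁻¹).add
      ((hasSum_cmpProb hν hlam).mul_left (h⁻¹ ^ 2))).congr_fun fun j => by rw [hcast]; ring
  have hsecond : HasSum (fun j : ℕ => cmpProb lam ν j * j ^ 2)
      (h⁻¹ ^ 2 * cmpMoment lam ν 2 + 2 * h⁻¹ ^ 3 * cmpMoment lam ν 1 + h⁻¹ ^ 4 * 1) :=
    ((((hasSum_cmpMoment hν hlam 2).mul_left (h⁻¹ ^ 2)).add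
        ((hasSum_cmpMoment hν hlam 1).mul_left (2 * h⁻¹ ^ 3))).add
      ((hasSum_cmpProb hν hlam).mul_left (h⁻¹ ^ 4))).congr_fun fun j => by rw [hcast]; ring
  have hvar : cmpVar lam ν =
      ∑' j : ℕ, cmpProb lam ν j * j ^ 2 - (∑' j : ℕ, cmpProb lam ν j * j) ^ 2 := by
    simp only [cmpVar, cmpProb, ← tsum_div_const]
    congr 1
    · exact tsum_congr fun j => by ring
    · exact congrArg (· ^ 2) (tsum_congr fun j => by ring)
  rw [hvar, hfirst.tsum_eq, hsecond.tsum_eq]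
  field_simp
  ring

end Law

section MomentBounds

variable {lam ν : ℝ}

/- The test function `F(u) = (2 + hu) u ^ (2r+1)` in the Stein identity: `x = 1 + hu` satisfies
`(x ^ ν - 1)(x + 1)(x - 1) ≥ min 1 ν (x - 1)²`, so `E[(x ^ ν - 1) F(U)]` controls `h E U ^ (2r+2)`,
while the increment `F(U + h) - F(U)` is `h` times a quantity of lower degree. -/
lemma exists_cmpMoment_even_le (hν : 0 < ν) (r : ℕ) :
    ∃ C, ∀ lam ≥ 1, cmpMoment lam ν (2 * r + 2) ≤ C := by
  set c := min 1 ν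
  have hc : 0 < c := lt_min one_pos hν
  obtain ⟨A, -, hincr⟩ := exists_two_add_mul_mul_pow_sub_le (half_pos hc) (2 * r)
  refine ⟨2 * A / c, fun lam hlam1 => ?_⟩
  have hlam : 0 < lam := one_pos.trans_le hlam1
  have h0 := cmpScale_pos hlam ν
  have h1 := cmpScale_le_one hν hlam1
  set h := cmpScale lam ν
  let F (u : ℝ) : ℝ := (2 + h * u) * u ^ (2 * r + 1)
  have hF : Summable fun j => cmpProb lam ν j * F (cmpRescale lam ν j) :=
    (((hasSum_cmpMoment hν hlam (2 * r + 1)).summable.mul_left 2).add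
      ((hasSum_cmpMoment hν hlam (2 * r + 2)).summable.mul_left h)).congr fun j => by
        simp only [F]; ring
  have hFshift : Summable fun j => cmpProb lam ν j * F (cmpRescale lam ν j + h) :=
    (((hasSum_cmpProb_mul_add_scale_pow hν hlam (2 * r + 1)).summable.mul_left 2).add
      ((hasSum_cmpProb_mul_add_scale_pow hν hlam (2 * r + 2)).summable.mul_left h)).congr
        fun j => by simp only [F, h]; ring
  obtain ⟨s, hdrift, hdiff⟩ :=
    exists_hasSum_cmpProb_mul_rpow_sub_one_mul hν.ne' hlam hF hFshift
  have hM := hasSum_cmpMoment hν hlam (2 * r + 2)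
  have hlower : h * (c * cmpMoment lam ν (2 * r + 2)) ≤ s := by
    refine hasSum_le (fun j => ?_) ((hM.mul_left c).mul_left h) hdrift
    calc _ = cmpProb lam ν j * (h * (c * cmpRescale lam ν j ^ (2 * r + 2))) := by ring
      _ ≤ _ := mul_le_mul_of_nonneg_left (min_one_mul_pow_le hν h0
        (one_add_cmpScale_mul_cmpRescale_nonneg hlam ν j) r) (cmpProb_nonneg hν hlam j)
  have hupper : s ≤ h * (A * 1 + c / 2 * cmpMoment lam ν (2 * r + 2)) := by
    refine hasSum_le (fun j => ?_) hdiff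
      ((((hasSum_cmpProb hν hlam).mul_left A).add (hM.mul_left (c / 2))).mul_left h)
    refine (mul_le_mul_of_nonneg_left (hincr h _ h0.le h1) (cmpProb_nonneg hν hlam j)).trans_eq ?_
    rw [show 2 * r + 2 = 2 * (r + 1) by ring, (even_two_mul (r + 1)).pow_abs]
    ring
  have := le_of_mul_le_mul_left (hlower.trans hupper) h0
  rw [le_div_iff₀ hc]
  linarith

lemma cmpAbsMoment_le_one_add (hν : 0 < ν) (hlam : 0 < lam) (r : ℕ) :
    cmpAbsMoment lam ν r ≤ 1 + cmpMoment lam ν (2 * r + 2) := by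
  refine hasSum_le (fun j => ?_) (hasSum_cmpAbsMoment hν hlam r)
    ((hasSum_cmpProb hν hlam).add (hasSum_cmpMoment hν hlam (2 * r + 2)))
  have hpow (t : ℝ) : |t| ^ r ≤ 1 + t ^ (2 * r + 2) := by
    rw [show 2 * r + 2 = 2 * (r + 1) by ring, ← (even_two_mul (r + 1)).pow_abs]
    rcases le_total |t| 1 with ht | ht
    · exact (pow_le_one₀ (abs_nonneg t) ht).trans (le_add_of_nonneg_right (by positivity))
    · exact (pow_le_pow_right₀ ht (by lia)).trans (le_add_of_nonneg_left zero_le_one)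
  calc _ ≤ cmpProb lam ν j * (1 + cmpRescale lam ν j ^ (2 * r + 2)) :=
        mul_le_mul_of_nonneg_left (hpow _) (cmpProb_nonneg hν hlam j)
    _ = _ := by ring

lemma cmpAbsMoment_isBigO_one (hν : 0 < ν) (r : ℕ) :
    (fun lam => cmpAbsMoment lam ν r) =O[atTop] fun _ => (1 : ℝ) := by
  obtain ⟨C, hC⟩ := exists_cmpMoment_even_le hν r
  refine .of_bound (1 + C) ?_
  filter_upwards [eventually_ge_atTop 1] with lam hlam1
  have hlam : 0 < lam := one_pos.trans_le hlam1
  rw [Real.norm_of_nonneg (cmpAbsMoment_nonneg hν hlam r), norm_one, mul_one]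
  exact (cmpAbsMoment_le_one_add hν hlam r).trans (by gcongr; exact hC lam hlam1)

lemma cmpMoment_isBigO_one (hν : 0 < ν) (r : ℕ) :
    (fun lam => cmpMoment lam ν r) =O[atTop] fun _ => (1 : ℝ) := by
  refine .trans (.of_bound 1 ?_) (cmpAbsMoment_isBigO_one hν r)
  filter_upwards [eventually_gt_atTop 0] with lam hlam
  rw [one_mul]
  exact (abs_cmpMoment_le hν hlam r).trans (le_abs_self _)

lemma cmpScale_pow_isBigO_pow (hν : 0 < ν) {m n : ℕ} (hmn : m ≤ n) :
    (fun lam => cmpScale lam ν ^ n) =O[atTop] fun lam => cmpScale lam ν ^ m := by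
  refine .of_bound 1 ?_
  filter_upwards [eventually_ge_atTop 1] with lam hlam1
  have h0 := (cmpScale_pos (one_pos.trans_le hlam1) ν).le
  rw [one_mul, norm_pow, norm_pow, Real.norm_of_nonneg h0]
  exact pow_le_pow_of_le_one h0 (cmpScale_le_one hν hlam1) hmn

end MomentBounds

section MomentRelation

variable {ν : ℝ}

lemma exists_abs_sum_cmpMoment_sub_sum_le (hν : 0 < ν) (r M : ℕ) :
    ∃ C, ∃ N ≥ M, ∀ lam > 0,
      |∑ k ∈ range (r + 1), cmpScale lam ν ^ k * (r.choose k * cmpMoment lam ν (r - k)) -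
        ∑ k ∈ range M, cmpScale lam ν ^ k * (Ring.choose ν k * cmpMoment lam ν (r + k))| ≤
      C * (cmpScale lam ν ^ M * cmpAbsMoment lam ν (r + M) +
        cmpScale lam ν ^ N * cmpAbsMoment lam ν (r + N)) := by
  obtain ⟨C, -, N, hMN, htaylor⟩ := exists_abs_one_add_rpow_sub_sum_choose_le hν.le M
  refine ⟨C, N, hMN, fun lam hlam => ?_⟩
  have h0 := cmpScale_pos hlam ν
  have hstein := (hasSum_cmp_stein_iff hν.ne' hlam (· ^ r)).2
    (hasSum_cmpProb_mul_add_scale_pow hν hlam r)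
  have hpoly : HasSum (fun j => ∑ k ∈ range M, cmpScale lam ν ^ k *
      (Ring.choose ν k * (cmpProb lam ν j * cmpRescale lam ν j ^ (r + k))))
      (∑ k ∈ range M, cmpScale lam ν ^ k * (Ring.choose ν k * cmpMoment lam ν (r + k))) :=
    hasSum_sum fun k _ => ((hasSum_cmpMoment hν hlam (r + k)).mul_left _).mul_left _
  refine (hstein.sub hpoly).norm_le_of_bounded ((((hasSum_cmpAbsMoment hν hlam (r + M)).mul_left
    (cmpScale lam ν ^ M)).add ((hasSum_cmpAbsMoment hν hlam (r + N)).mul_left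
    (cmpScale lam ν ^ N))).mul_left C) fun j => ?_
  have hp := cmpProb_nonneg hν hlam j
  have hge := one_add_cmpScale_mul_cmpRescale_nonneg hlam ν j
  set h := cmpScale lam ν
  set u := cmpRescale lam ν j
  calc _ = ‖cmpProb lam ν j * u ^ r *
        ((1 + h * u) ^ ν - ∑ k ∈ range M, Ring.choose ν k * (h * u) ^ k)‖ := by
        rw [mul_sub, mul_sum]
        congr 2
        · ring
        · exact sum_congr rfl fun k _ => by ring
    _ = cmpProb lam ν j * |u| ^ r *
        |(1 + h * u) ^ ν - ∑ k ∈ range M, Ring.choose ν k * (h * u) ^ k| := by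
      rw [norm_mul, norm_cmpProb_mul_pow hν hlam, Real.norm_eq_abs]
    _ ≤ cmpProb lam ν j * |u| ^ r * (C * (|h * u| ^ M + |h * u| ^ N)) := by
      gcongr
      exact htaylor _ (by linarith)
    _ = _ := by rw [abs_mul, abs_of_pos h0]; ring

lemma sum_cmpMoment_sub_sum_isBigO (hν : 0 < ν) (r M : ℕ) :
    (fun lam =>
      ∑ k ∈ range (r + 1), cmpScale lam ν ^ k * (r.choose k * cmpMoment lam ν (r - k)) -
        ∑ k ∈ range M, cmpScale lam ν ^ k * (Ring.choose ν k * cmpMoment lam ν (r + k)))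
      =O[atTop] fun lam => cmpScale lam ν ^ M := by
  obtain ⟨C, N, hMN, hbound⟩ := exists_abs_sum_cmpMoment_sub_sum_le hν r M
  have hterm (n : ℕ) (hn : M ≤ n) :
      (fun lam => cmpScale lam ν ^ n * cmpAbsMoment lam ν (r + n))
        =O[atTop] fun lam => cmpScale lam ν ^ M := by
    simpa using (cmpScale_pow_isBigO_pow hν hn).mul (cmpAbsMoment_isBigO_one hν (r + n))
  refine .trans (.of_bound 1 ?_) (((hterm M le_rfl).add (hterm N hMN)).const_mul_left C)
  filter_upwards [eventually_gt_atTop 0] with lam hlam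
  rw [one_mul]
  exact (hbound lam hlam).trans (le_abs_self _)

lemma sum_choose_cmpMoment_sub_sum_isBigO (hν : 0 < ν) (r M : ℕ) :
    (fun lam =>
      ∑ k ∈ range (r + 1), cmpScale lam ν ^ k * (r.choose k * cmpMoment lam ν (r - k)) -
        ∑ k ∈ range M, cmpScale lam ν ^ k * (r.choose k * cmpMoment lam ν (r - k)))
      =O[atTop] fun lam => cmpScale lam ν ^ M := by
  have htail (lam : ℝ) :
      ∑ k ∈ range (r + 1), cmpScale lam ν ^ k * (r.choose k * cmpMoment lam ν (r - k)) -
        ∑ k ∈ range M, cmpScale lam ν ^ k * (r.choose k * cmpMoment lam ν (r - k)) =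
      ∑ k ∈ range (r + 1),
        cmpScale lam ν ^ (M + k) * (r.choose (M + k) * cmpMoment lam ν (r - (M + k))) := by
    rw [sub_eq_iff_eq_add', ← sum_range_add]
    refine sum_subset (range_subset_range.2 (by lia)) fun k _ hk => ?_
    rw [Nat.choose_eq_zero_of_lt (by simpa using hk)]
    simp
  simp only [htail]
  refine .fun_sum fun k _ => ?_
  simpa using (cmpScale_pow_isBigO_pow hν (M.le_add_right k)).mul
    ((cmpMoment_isBigO_one hν (r - (M + k))).const_mul_left (r.choose (M + k) : ℝ))

lemma sum_cmpMoment_relation_isBigO (hν : 0 < ν) (r N : ℕ) :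
    (fun lam => ∑ k ∈ range N, cmpScale lam ν ^ k *
      (Ring.choose ν (k + 1) * cmpMoment lam ν (r + 1 + k) -
        r.choose (k + 1) * cmpMoment lam ν (r - 1 - k)))
      =O[atTop] fun lam => cmpScale lam ν ^ N := by
  have hdiff := (sum_choose_cmpMoment_sub_sum_isBigO hν r (N + 1)).sub
    (sum_cmpMoment_sub_sum_isBigO hν r (N + 1))
  have hinv := isBigO_refl (fun lam => (cmpScale lam ν)⁻¹) atTop
  refine (hinv.mul hdiff).congr' ?_ ?_ <;>
    filter_upwards [eventually_gt_atTop 0] with lam hlam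
  · rw [sub_sub_sub_cancel_left, inv_mul_eq_iff_eq_mul₀ (cmpScale_pos hlam ν).ne',
      sum_range_succ', sum_range_succ', mul_sum]
    simp only [Nat.choose_zero_right, Ring.choose_zero_right, Nat.cast_one, Nat.sub_zero,
      add_zero, add_sub_add_right_eq_sub, ← sum_sub_distrib]
    refine sum_congr rfl fun k _ => ?_
    rw [show r + 1 + k = r + (k + 1) by ring, show r - 1 - k = r - (k + 1) by lia]
    ring
  · rw [pow_succ', inv_mul_cancel_left₀ (cmpScale_pos hlam ν).ne']

end MomentRelation

section MomentExpansion

variable {ν : ℝ}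

/-- The coefficient of `h ^ m` in the asymptotic expansion of the moment `E U ^ r`. The recursion
comes from equating coefficients in the moment relation; it is triangular because each equation is
solved for the term of highest degree among those with the largest `m`. -/
noncomputable def cmpMomentCoeff (ν : ℝ) : ℕ → ℕ → ℝ
  | 0, 0 => 1
  | _ + 1, 0 => 0
  | m, r + 1 => (r * cmpMomentCoeff ν m (r - 1) +
      ∑ k : Fin m, (r.choose (k + 2) * cmpMomentCoeff ν (m - (k + 1)) (r - 1 - (k + 1)) -
        Ring.choose ν ((k : ℕ) + 2) * cmpMomentCoeff ν (m - (k + 1)) (r + 1 + (k + 1)))) / ν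
termination_by m r => (m, r)

/-- The asymptotic expansion in `h` of the moment `E U ^ r`, truncated before degree `N`. -/
noncomputable def cmpMomentExpansion (ν h : ℝ) (N r : ℕ) : ℝ :=
  ∑ m ∈ range N, cmpMomentCoeff ν m r * h ^ m

lemma cmpMomentCoeff_zero_zero (ν : ℝ) : cmpMomentCoeff ν 0 0 = 1 := by
  rw [cmpMomentCoeff]

lemma cmpMomentCoeff_succ_zero (ν : ℝ) (m : ℕ) : cmpMomentCoeff ν (m + 1) 0 = 0 := by
  rw [cmpMomentCoeff]

lemma cmpMomentCoeff_succ (ν : ℝ) (m r : ℕ) :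
    cmpMomentCoeff ν m (r + 1) = (r * cmpMomentCoeff ν m (r - 1) +
      ∑ k ∈ range m, (r.choose (k + 2) * cmpMomentCoeff ν (m - (k + 1)) (r - 1 - (k + 1)) -
        Ring.choose ν (k + 2) * cmpMomentCoeff ν (m - (k + 1)) (r + 1 + (k + 1)))) / ν := by
  rw [cmpMomentCoeff, Finset.sum_range]

lemma sum_cmpMomentCoeff_relation (hν : ν ≠ 0) (m r : ℕ) :
    ∑ k ∈ range (m + 1), (Ring.choose ν (k + 1) * cmpMomentCoeff ν (m - k) (r + 1 + k) -
      r.choose (k + 1) * cmpMomentCoeff ν (m - k) (r - 1 - k)) = 0 := by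
  simp only [sum_range_succ', sum_sub_distrib, cmpMomentCoeff_succ ν m r, zero_add,
    Ring.choose_one_right, Nat.choose_one_right, add_zero, Nat.sub_zero]
  field_simp
  ring

lemma cmpMomentCoeff_eq_zero_of_odd (ν : ℝ) (m r : ℕ) (hmr : Odd (m + r)) :
    cmpMomentCoeff ν m r = 0 := by
  induction m using Nat.strong_induction_on generalizing r with | _ m ihm
  induction r using Nat.strong_induction_on with | _ r ihr
  rcases r with _ | r
  · rcases m with _ | m
    · simp at hmr
    · exact cmpMomentCoeff_succ_zero ν m
  rw [cmpMomentCoeff_succ, sum_eq_zero, add_zero]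
  · rcases r with _ | r
    · simp
    · rw [add_tsub_cancel_right, ihr r (by lia) (by grind), mul_zero, zero_div]
  · intro k hk
    have hkm := mem_range.1 hk
    rw [ihm (m - (k + 1)) (by lia) (r + 1 + (k + 1)) (by grind)]
    rcases lt_or_ge r (k + 2) with hr | hr
    · simp [Nat.choose_eq_zero_of_lt hr]
    · rw [ihm (m - (k + 1)) (by lia) (r - 1 - (k + 1)) (by grind), mul_zero, mul_zero, sub_zero]

lemma sum_cmpMomentExpansion_relation (hν : ν ≠ 0) (h : ℝ) (N r : ℕ) :
    ∑ k ∈ range N, h ^ k * (Ring.choose ν (k + 1) * cmpMomentExpansion ν h (N - k) (r + 1 + k) -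
      r.choose (k + 1) * cmpMomentExpansion ν h (N - k) (r - 1 - k)) = 0 := by
  calc _ = ∑ k ∈ range N, ∑ m ∈ range (N - k), h ^ (k + m) *
        (Ring.choose ν (k + 1) * cmpMomentCoeff ν m (r + 1 + k) -
          r.choose (k + 1) * cmpMomentCoeff ν m (r - 1 - k)) := by
        refine sum_congr rfl fun k _ => ?_
        rw [cmpMomentExpansion, cmpMomentExpansion, mul_sum, mul_sum, ← sum_sub_distrib,
          mul_sum]
        exact sum_congr rfl fun m _ => by ring
    _ = ∑ m ∈ range N, h ^ m * ∑ k ∈ range (m + 1),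
        (Ring.choose ν (k + 1) * cmpMomentCoeff ν (m - k) (r + 1 + k) -
          r.choose (k + 1) * cmpMomentCoeff ν (m - k) (r - 1 - k)) := by
      rw [← sum_range_diag_flip]
      refine sum_congr rfl fun m _ => ?_
      rw [mul_sum]
      refine sum_congr rfl fun k hk => ?_
      rw [Nat.add_sub_cancel' (mem_range_succ_iff.1 hk)]
    _ = 0 := by simp only [sum_cmpMomentCoeff_relation hν, mul_zero, sum_const_zero]

lemma sum_cmpMoment_sub_cmpMomentExpansion_isBigO (hν : 0 < ν) (r N : ℕ) :
    (fun lam => ∑ k ∈ range N, cmpScale lam ν ^ k *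
      (Ring.choose ν (k + 1) * (cmpMoment lam ν (r + 1 + k) -
          cmpMomentExpansion ν (cmpScale lam ν) (N - k) (r + 1 + k)) -
        r.choose (k + 1) * (cmpMoment lam ν (r - 1 - k) -
          cmpMomentExpansion ν (cmpScale lam ν) (N - k) (r - 1 - k))))
      =O[atTop] fun lam => cmpScale lam ν ^ N := by
  refine (sum_cmpMoment_relation_isBigO hν r N).congr_left fun lam => ?_
  rw [← sub_zero (∑ k ∈ range N, _), ← sum_cmpMomentExpansion_relation hν.ne' (cmpScale lam ν) N r,
    ← sum_sub_distrib]
  exact sum_congr rfl fun k _ => by ring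

theorem cmpMoment_sub_cmpMomentExpansion_isBigO (hν : 0 < ν) (N r : ℕ) :
    (fun lam => cmpMoment lam ν r - cmpMomentExpansion ν (cmpScale lam ν) N r)
      =O[atTop] fun lam => cmpScale lam ν ^ N := by
  induction N using Nat.strong_induction_on generalizing r with | _ N ihN
  rcases N with _ | N
  · simpa [cmpMomentExpansion] using cmpMoment_isBigO_one hν r
  induction r using Nat.strong_induction_on with | _ r ihr
  rcases r with _ | r
  · refine .of_bound 0 ?_
    filter_upwards [eventually_gt_atTop 0] with lam hlam
    simp [cmpMomentExpansion, sum_range_succ', cmpMomentCoeff_zero_zero, cmpMomentCoeff_succ_zero,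
      cmpMoment_zero hν hlam]
  set D : ℕ → ℕ → ℝ → ℝ := fun N s lam =>
    cmpMoment lam ν s - cmpMomentExpansion ν (cmpScale lam ν) N s with hD
  have htail (k : ℕ) (hk : k ∈ range N) : (fun lam => cmpScale lam ν ^ (k + 1) *
      (Ring.choose ν (k + 2) * D (N - k) (r + 1 + (k + 1)) lam -
        r.choose (k + 2) * D (N - k) (r - 1 - (k + 1)) lam))
      =O[atTop] fun lam => cmpScale lam ν ^ (N + 1) := by
    have hih := ihN (N - k) (by lia)
    refine ((isBigO_refl (fun lam => cmpScale lam ν ^ (k + 1)) atTop).mul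
      (((hih _).const_mul_left _).sub ((hih _).const_mul_left _))).congr_right fun lam => ?_
    rw [← pow_add, show k + 1 + (N - k) = N + 1 by grind]
  have hhead : (fun lam => (r : ℝ) * D (N + 1) (r - 1) lam)
      =O[atTop] fun lam => cmpScale lam ν ^ (N + 1) := by
    rcases r with _ | r
    · simpa using isBigO_zero _ _
    · exact (ihr r (by lia)).const_mul_left _
  refine ((((sum_cmpMoment_sub_cmpMomentExpansion_isBigO hν r (N + 1)).add hhead).sub
    (.fun_sum htail)).const_mul_left ν⁻¹).congr_left fun lam => ?_
  rw [inv_mul_eq_iff_eq_mul₀ hν.ne', sum_range_succ']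
  simp only [hD, Nat.add_sub_add_right, zero_add, Ring.choose_one_right, Nat.choose_one_right,
    add_zero, Nat.sub_zero]
  ring

end MomentExpansion

section CoefficientValues

variable {ν : ℝ}

lemma cmpMomentCoeff_zero_two (ν : ℝ) : cmpMomentCoeff ν 0 2 = 1 / ν := by
  simp only [cmpMomentCoeff_succ ν 0 1, sum_range_zero, tsub_self, cmpMomentCoeff_zero_zero]
  field_simp
  ring

lemma cmpMomentCoeff_zero_four (hν : ν ≠ 0) : cmpMomentCoeff ν 0 4 = 3 / ν ^ 2 := by
  simp only [cmpMomentCoeff_succ ν 0 3, sum_range_zero, cmpMomentCoeff_zero_two ν]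
  field_simp
  ring

lemma cmpMomentCoeff_zero_six (hν : ν ≠ 0) : cmpMomentCoeff ν 0 6 = 15 / ν ^ 3 := by
  simp only [cmpMomentCoeff_succ ν 0 5, sum_range_zero, cmpMomentCoeff_zero_four hν]
  field_simp
  ring

lemma cmpMomentCoeff_zero_eight (hν : ν ≠ 0) : cmpMomentCoeff ν 0 8 = 105 / ν ^ 4 := by
  simp only [cmpMomentCoeff_succ ν 0 7, sum_range_zero, cmpMomentCoeff_zero_six hν]
  field_simp
  ring

lemma cmpMomentCoeff_one_one (hν : ν ≠ 0) : cmpMomentCoeff ν 1 1 = (1 - ν) / (2 * ν) := by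
  simp only [cmpMomentCoeff_succ ν 1 0, sum_range_succ, sum_range_zero, Nat.choose, zero_add,
    tsub_self, cmpMomentCoeff_zero_two ν, Ring.choose_zero_right, ringChoose_succ_eq_div]
  field_simp
  ring

lemma cmpMomentCoeff_one_three (hν : ν ≠ 0) : cmpMomentCoeff ν 1 3 = (5 - 3 * ν) / (2 * ν ^ 2) := by
  simp only [cmpMomentCoeff_succ ν 1 2, sum_range_succ, sum_range_zero, Nat.choose, zero_add,
    tsub_self, cmpMomentCoeff_one_one hν, cmpMomentCoeff_zero_four hν, cmpMomentCoeff_zero_zero,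
    Ring.choose_zero_right, ringChoose_succ_eq_div]
  field_simp
  ring

lemma cmpMomentCoeff_one_five (hν : ν ≠ 0) :
    cmpMomentCoeff ν 1 5 = (35 - 15 * ν) / (2 * ν ^ 3) := by
  simp only [cmpMomentCoeff_succ ν 1 4, sum_range_succ, sum_range_zero, Nat.choose, zero_add,
    tsub_self, cmpMomentCoeff_one_three hν, cmpMomentCoeff_zero_two ν, cmpMomentCoeff_zero_six hν,
    Ring.choose_zero_right, ringChoose_succ_eq_div]
  field_simp
  ring

lemma cmpMomentCoeff_one_seven (hν : ν ≠ 0) :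
    cmpMomentCoeff ν 1 7 = (315 - 105 * ν) / (2 * ν ^ 4) := by
  simp only [cmpMomentCoeff_succ ν 1 6, sum_range_succ, sum_range_zero, Nat.choose, zero_add,
    tsub_self, cmpMomentCoeff_one_five hν, cmpMomentCoeff_zero_four hν,
    cmpMomentCoeff_zero_eight hν, Ring.choose_zero_right, ringChoose_succ_eq_div]
  field_simp
  ring

lemma cmpMomentCoeff_two_two (hν : ν ≠ 0) : cmpMomentCoeff ν 2 2 = (ν - 1) ^ 2 / (4 * ν ^ 2) := by
  simp only [cmpMomentCoeff_succ ν 2 1, sum_range_succ, sum_range_zero, Nat.choose, zero_add,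
    tsub_self, cmpMomentCoeff_one_three hν, cmpMomentCoeff_zero_four hν, cmpMomentCoeff_succ_zero,
    Ring.choose_zero_right, ringChoose_succ_eq_div]
  field_simp
  ring

lemma cmpMomentCoeff_two_four (hν : ν ≠ 0) :
    cmpMomentCoeff ν 2 4 = (3 * ν ^ 2 - 10 * ν + 9) / (2 * ν ^ 3) := by
  simp only [cmpMomentCoeff_succ ν 2 3, sum_range_succ, sum_range_zero, Nat.choose, zero_add,
    tsub_self, cmpMomentCoeff_two_two hν, cmpMomentCoeff_one_one hν, cmpMomentCoeff_one_five hν,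
    cmpMomentCoeff_zero_six hν, cmpMomentCoeff_zero_zero, Ring.choose_zero_right,
    ringChoose_succ_eq_div]
  field_simp
  ring

lemma cmpMomentCoeff_two_six (hν : ν ≠ 0) :
    cmpMomentCoeff ν 2 6 = (45 * ν ^ 2 - 210 * ν + 265) / (4 * ν ^ 4) := by
  simp only [cmpMomentCoeff_succ ν 2 5, sum_range_succ, sum_range_zero, Nat.choose, zero_add,
    tsub_self, cmpMomentCoeff_two_four hν, cmpMomentCoeff_one_three hν, cmpMomentCoeff_one_seven hν,
    cmpMomentCoeff_zero_two ν, cmpMomentCoeff_zero_eight hν, Ring.choose_zero_right,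
    ringChoose_succ_eq_div]
  field_simp
  ring

lemma cmpMomentCoeff_three_one (hν : ν ≠ 0) :
    cmpMomentCoeff ν 3 1 = (1 - ν ^ 2) / (24 * ν ^ 2) := by
  simp only [cmpMomentCoeff_succ ν 3 0, sum_range_succ, sum_range_zero, Nat.choose, zero_add,
    tsub_self, cmpMomentCoeff_two_two hν, cmpMomentCoeff_one_three hν, cmpMomentCoeff_zero_four hν,
    Ring.choose_zero_right, ringChoose_succ_eq_div]
  field_simp
  ring

lemma cmpMomentCoeff_three_three (hν : ν ≠ 0) :
    cmpMomentCoeff ν 3 3 = (-ν ^ 3 + 2 * ν ^ 2 - 3 * ν + 2) / (8 * ν ^ 3) := by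
  simp only [cmpMomentCoeff_succ ν 3 2, sum_range_succ, sum_range_zero, Nat.choose, zero_add,
    tsub_self, cmpMomentCoeff_three_one hν, cmpMomentCoeff_two_four hν, cmpMomentCoeff_one_five hν,
    cmpMomentCoeff_zero_six hν, cmpMomentCoeff_succ_zero, Ring.choose_zero_right,
    ringChoose_succ_eq_div]
  field_simp
  ring

lemma cmpMomentCoeff_three_five (hν : ν ≠ 0) :
    cmpMomentCoeff ν 3 5 = (-10 * ν ^ 3 + 45 * ν ^ 2 - 90 * ν + 63) / (8 * ν ^ 4) := by
  simp only [cmpMomentCoeff_succ ν 3 4, sum_range_succ, sum_range_zero, Nat.choose, zero_add,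
    tsub_self, cmpMomentCoeff_three_three hν, cmpMomentCoeff_two_two hν, cmpMomentCoeff_two_six hν,
    cmpMomentCoeff_one_one hν, cmpMomentCoeff_one_seven hν, cmpMomentCoeff_zero_eight hν,
    cmpMomentCoeff_zero_zero, Ring.choose_zero_right, ringChoose_succ_eq_div]
  field_simp
  ring

lemma cmpMomentCoeff_four_two (hν : ν ≠ 0) : cmpMomentCoeff ν 4 2 = (ν ^ 2 - 1) / (24 * ν ^ 2) := by
  simp only [cmpMomentCoeff_succ ν 4 1, sum_range_succ, sum_range_zero, Nat.choose, zero_add,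
    tsub_self, cmpMomentCoeff_three_three hν, cmpMomentCoeff_two_four hν,
    cmpMomentCoeff_one_five hν, cmpMomentCoeff_zero_six hν, cmpMomentCoeff_succ_zero,
    Ring.choose_zero_right, ringChoose_succ_eq_div]
  field_simp
  ring

lemma cmpMomentCoeff_four_four (hν : ν ≠ 0) :
    cmpMomentCoeff ν 4 4 = (3 * ν ^ 4 + 10 * ν ^ 2 - 24 * ν + 11) / (48 * ν ^ 4) := by
  simp only [cmpMomentCoeff_succ ν 4 3, sum_range_succ, sum_range_zero, Nat.choose, zero_add,
    tsub_self, cmpMomentCoeff_four_two hν, cmpMomentCoeff_three_one hν,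
    cmpMomentCoeff_three_five hν, cmpMomentCoeff_two_six hν, cmpMomentCoeff_one_seven hν,
    cmpMomentCoeff_zero_eight hν, cmpMomentCoeff_succ_zero, Ring.choose_zero_right,
    ringChoose_succ_eq_div]
  field_simp
  ring

lemma cmpMomentCoeff_five_one (hν : ν ≠ 0) : cmpMomentCoeff ν 5 1 = (1 - ν ^ 2) / (24 * ν ^ 3) := by
  simp only [cmpMomentCoeff_succ ν 5 0, sum_range_succ, sum_range_zero, Nat.choose, zero_add,
    tsub_self, cmpMomentCoeff_four_two hν, cmpMomentCoeff_three_three hν,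
    cmpMomentCoeff_two_four hν, cmpMomentCoeff_one_five hν, cmpMomentCoeff_zero_six hν,
    Ring.choose_zero_right, ringChoose_succ_eq_div]
  field_simp
  ring

lemma cmpMomentCoeff_five_three (hν : ν ≠ 0) :
    cmpMomentCoeff ν 5 3 = (-3 * ν ^ 4 - 10 * ν ^ 2 + 13) / (96 * ν ^ 4) := by
  simp only [cmpMomentCoeff_succ ν 5 2, sum_range_succ, sum_range_zero, Nat.choose, zero_add,
    tsub_self, cmpMomentCoeff_five_one hν, cmpMomentCoeff_four_four hν,
    cmpMomentCoeff_three_five hν, cmpMomentCoeff_two_six hν, cmpMomentCoeff_one_seven hν,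
    cmpMomentCoeff_zero_eight hν, cmpMomentCoeff_succ_zero, Ring.choose_zero_right,
    ringChoose_succ_eq_div]
  field_simp
  ring

lemma cmpMomentCoeff_six_two (hν : ν ≠ 0) :
    cmpMomentCoeff ν 6 2 = (ν ^ 4 + 24 * ν ^ 3 + 22 * ν ^ 2 - 24 * ν - 23) / (576 * ν ^ 4) := by
  simp only [cmpMomentCoeff_succ ν 6 1, sum_range_succ, sum_range_zero, Nat.choose, zero_add,
    tsub_self, cmpMomentCoeff_five_three hν, cmpMomentCoeff_four_four hν,
    cmpMomentCoeff_three_five hν, cmpMomentCoeff_two_six hν, cmpMomentCoeff_one_seven hν,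
    cmpMomentCoeff_zero_eight hν, cmpMomentCoeff_succ_zero, Ring.choose_zero_right,
    ringChoose_succ_eq_div]
  field_simp
  ring

end CoefficientValues

section Variance

variable {ν : ℝ}

lemma cmpMomentExpansion_eight_two (hν : ν ≠ 0) (h : ℝ) :
    cmpMomentExpansion ν h 8 2 =
      1 / ν + (ν - 1) ^ 2 / (4 * ν ^ 2) * h ^ 2 + (ν ^ 2 - 1) / (24 * ν ^ 2) * h ^ 4 +
        (ν ^ 4 + 24 * ν ^ 3 + 22 * ν ^ 2 - 24 * ν - 23) / (576 * ν ^ 4) * h ^ 6 := by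
  have hodd (m : ℕ) (hm : Odd m) : cmpMomentCoeff ν m 2 = 0 :=
    cmpMomentCoeff_eq_zero_of_odd ν m 2 (hm.add_even even_two)
  simp [cmpMomentExpansion, sum_range_succ, cmpMomentCoeff_zero_two, cmpMomentCoeff_two_two hν,
    cmpMomentCoeff_four_two hν, cmpMomentCoeff_six_two hν, hodd 1, hodd 3, hodd 5, hodd 7,
    Nat.odd_iff]

lemma cmpMomentExpansion_seven_one (hν : ν ≠ 0) (h : ℝ) :
    cmpMomentExpansion ν h 7 1 =
      (1 - ν) / (2 * ν) * h + (1 - ν ^ 2) / (24 * ν ^ 2) * h ^ 3 +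
        (1 - ν ^ 2) / (24 * ν ^ 3) * h ^ 5 := by
  have heven (m : ℕ) (hm : Even m) : cmpMomentCoeff ν m 1 = 0 :=
    cmpMomentCoeff_eq_zero_of_odd ν m 1 hm.add_one
  simp [cmpMomentExpansion, sum_range_succ, cmpMomentCoeff_one_one hν, cmpMomentCoeff_three_one hν,
    cmpMomentCoeff_five_one hν, heven 0, heven 2, heven 4, heven 6, Nat.even_iff]

lemma cmpMomentExpansion_variance (hν : ν ≠ 0) (h : ℝ) :
    ν * (cmpMomentExpansion ν h 8 2 - cmpMomentExpansion ν h 7 1 ^ 2) =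
      1 + (ν ^ 2 - 1) / (24 * ν ^ 2) * h ^ 4 + (ν ^ 2 - 1) / (12 * ν ^ 3) * h ^ 6 -
        (ν ^ 2 - 1) ^ 2 / (576 * ν ^ 5) * (2 * ν + h ^ 2) * h ^ 8 := by
  rw [cmpMomentExpansion_eight_two hν, cmpMomentExpansion_seven_one hν]
  field_simp
  ring

lemma cmpMoment_one_isBigO (hν : 0 < ν) :
    (fun lam => cmpMoment lam ν 1) =O[atTop] fun lam => cmpScale lam ν := by
  simpa [cmpMomentExpansion, cmpMomentCoeff_eq_zero_of_odd] using
    cmpMoment_sub_cmpMomentExpansion_isBigO hν 1 1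

lemma cmpMoment_one_sq_sub_isBigO (hν : 0 < ν) (N : ℕ) :
    (fun lam => cmpMoment lam ν 1 ^ 2 -
        cmpMomentExpansion ν (cmpScale lam ν) (N + 1) 1 ^ 2)
      =O[atTop] fun lam => cmpScale lam ν ^ (N + 2) := by
  have hdiff := cmpMoment_sub_cmpMomentExpansion_isBigO hν (N + 1) 1
  have hmean := cmpMoment_one_isBigO hν
  have hone : (fun lam => cmpScale lam ν ^ (N + 1)) =O[atTop] fun lam => cmpScale lam ν := by
    simpa using cmpScale_pow_isBigO_pow hν (m := 1) (n := N + 1) (by lia)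
  refine (hdiff.mul ((hmean.const_mul_left 2).sub (hdiff.trans hone))).congr (fun lam => ?_)
    fun lam => ?_ <;> ring

lemma cmpMoment_variance_isBigO (hν : 0 < ν) :
    (fun lam => ν * (cmpMoment lam ν 2 - cmpMoment lam ν 1 ^ 2) - 1 -
        (ν ^ 2 - 1) / (24 * ν ^ 2) * cmpScale lam ν ^ 4 -
        (ν ^ 2 - 1) / (12 * ν ^ 3) * cmpScale lam ν ^ 6)
      =O[atTop] fun lam => cmpScale lam ν ^ 8 := by
  have hmoments := ((cmpMoment_sub_cmpMomentExpansion_isBigO hν 8 2).sub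
    (cmpMoment_one_sq_sub_isBigO hν 6)).const_mul_left ν
  have hscale : (fun lam => cmpScale lam ν ^ 2) =O[atTop] fun _ => (1 : ℝ) := by
    simpa using cmpScale_pow_isBigO_pow hν (Nat.zero_le 2)
  have hrest : (fun lam => (ν ^ 2 - 1) ^ 2 / (576 * ν ^ 5) *
      (2 * ν + cmpScale lam ν ^ 2) * cmpScale lam ν ^ 8)
      =O[atTop] fun lam => cmpScale lam ν ^ 8 := by
    simpa using (((isBigO_const_one ℝ (2 * ν) atTop).add hscale).const_mul_left _).mul
      (isBigO_refl (fun lam => cmpScale lam ν ^ 8) atTop)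
  refine (hmoments.sub hrest).congr_left fun lam => ?_
  linear_combination -cmpMomentExpansion_variance hν.ne' (cmpScale lam ν)

end Variance

/-- Asymptotics of the variance of the `CMP(λ,ν)` distribution:
`Var X = (λ^{1/ν}/ν)(1 + ((ν²−1)/(24ν²)) λ^{−2/ν} + ((ν²−1)/(12ν³)) λ^{−3/ν}
  + O(λ^{−4/ν}))` as `λ → ∞`. -/
theorem cmpVar_asymptotic (ν : ℝ) (hν : 0 < ν) :
    ∃ C > (0 : ℝ), ∃ Λ > (0 : ℝ), ∀ lam : ℝ, lam ≥ Λ →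
      |ν * lam ^ (-(1 / ν)) * cmpVar lam ν - 1 -
          ((ν ^ 2 - 1) / (24 * ν ^ 2)) * lam ^ (-(2 / ν)) -
          ((ν ^ 2 - 1) / (12 * ν ^ 3)) * lam ^ (-(3 / ν))|
        ≤ C * lam ^ (-(4 / ν)) := by
  obtain ⟨C, hC, hbound⟩ := (cmpMoment_variance_isBigO hν).exists_pos
  obtain ⟨Λ, hΛ⟩ := eventually_atTop.1 hbound.bound
  refine ⟨C, hC, max Λ 1, by positivity, fun lam hlam => ?_⟩
  have hpos : 0 < lam := one_pos.trans_le ((le_max_right _ _).trans hlam)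
  have hscale (m : ℕ) : lam ^ (-(m / ν)) = cmpScale lam ν ^ (2 * m) :=
    (cmpScale_pow hν.ne' hpos.le m).symm
  have hvar : ν * lam ^ (-(1 / ν)) * cmpVar lam ν =
      ν * (cmpMoment lam ν 2 - cmpMoment lam ν 1 ^ 2) := by
    rw [← cmpScale_sq_mul_cmpVar hν hpos, ← mul_assoc, ← Nat.cast_one, hscale 1]
  have h2 := hscale 2
  have h3 := hscale 3
  have h4 := hscale 4
  push_cast at h2 h3 h4
  rw [hvar, h2, h3, h4]
  have := hΛ lam ((le_max_left _ _).trans hlam)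
  rwa [Real.norm_eq_abs, Real.norm_of_nonneg (by have := cmpScale_pos hpos ν; positivity)] at this
end

section
/- Fix ν > 0 and an integer n ≥ 2, and let κ_n(λ) denote the n-th cumulant of the CMP(λ,ν) distribution, i.e. κ_n(λ) is the n-th derivative at t = 0 of the function t ↦ ln(Z(λ·e^t, ν)). Then as λ → ∞, κ_n(λ) = (λ^(1/ν)/ν^(n−1))·(1 + ((−1)^n·(ν²−1)/(24ν²))·λ^(−2/ν) + ((−2)^n·(ν²−1)/(48ν³))·λ^(−3/ν) + O(λ^(−4/ν))). Precisely: there exist constants C > 0 and Λ > 0 (depending only on ν and n) such that for all λ ≥ Λ, |ν^(n−1)·λ^(−1/ν)·κ_n(λ) − 1 − ((−1)^n·(ν²−1)/(24ν²))·λ^(−2/ν) − ((−2)^n·(ν²−1)/(48ν³))·λ^(−3/ν)| ≤ C·λ^(−4/ν). -/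
/-!
Let `X ∼ CMP(λ, ν)`, `x = log λ`, `t = λ ^ (-1/ν) = exp (-x / ν)` and `U = t * X - 1`. The weights
satisfy the Stein identity `E[X ^ ν * f(X)] = λ * E[f(X + 1)]`, which for `f(X) = U ^ k` reads
`E[(1 + U) ^ ν * U ^ k] = E[(U + t) ^ k]`. Since `((1 + U) ^ ν - 1) * U * (2 + U)` dominates a
multiple of `U ^ 2`, it bounds the moments of `U` by `E[U ^ k] = O(t ^ (k / 2))`. Expanding both of
its sides binomially then determines the moments order by order in `t`, so each of them has a full
asymptotic expansion in powers of `t`.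

The cumulants are the successive derivatives of `κ₁ = E[X]` in `x`. They grow at most like a power
of `1 / t`, so by Landau's inequality between a function and its first two derivatives the expansion
of `t * κ₁` may be differentiated termwise. The recursion `t κₙ₊₁ = (t κₙ)' + t κₙ / ν` multiplies
the coefficient of `t ^ j` by `(1 - j) / ν`; in particular the coefficient of `t` disappears.
-/

open scoped BigOperators

/-- The `n`-th cumulant of the `CMP(λ,ν)` distribution: the `n`-th derivative at `t = 0`
of `t ↦ ln Z(λ e^t, ν)`. -/
noncomputable def cmpCumulant (n : ℕ) (lam nu : ℝ) : ℝ :=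
  iteratedDeriv n (fun t : ℝ => Real.log (cmpZ (lam * Real.exp t) nu)) 0

open Asymptotics Filter Finset PowerSeries Topology

section GrowthAlgebra

variable {α : Type*}

/-- The algebra of functions of moderate growth along `l`: those dominated by some power of the
gauge `g`. -/
def growthAlgebra (l : Filter α) (g : α → ℝ) (hg : ∀ᶠ a in l, 1 ≤ g a) : Subalgebra ℝ (α → ℝ) where
  carrier := {f | ∃ n : ℕ, f =O[l] fun a => g a ^ n}
  mul_mem' := by
    rintro f₁ f₂ ⟨m, hm⟩ ⟨n, hn⟩
    exact ⟨m + n, by simpa only [pow_add] using! hm.mul hn⟩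
  add_mem' := by
    have mono {m n : ℕ} (hmn : m ≤ n) : (fun a => g a ^ m) =O[l] fun a => g a ^ n :=
      .of_bound' <| hg.mono fun a ha => by
        rw [Real.norm_of_nonneg (by positivity), Real.norm_of_nonneg (by positivity)]
        exact pow_le_pow_right₀ ha hmn
    rintro f₁ f₂ ⟨m, hm⟩ ⟨n, hn⟩
    exact ⟨max m n, (hm.trans (mono (le_max_left m n))).add (hn.trans (mono (le_max_right m n)))⟩
  algebraMap_mem' c := ⟨0, by simpa only [pow_zero] using! isBigO_const_const c one_ne_zero l⟩

end GrowthAlgebra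

section AsymptoticExpansion

variable {α : Type*} {l : Filter α} {t : α → ℝ}

lemma isBigO_pow_of_le (ht : Tendsto t l (𝓝 0)) {m n : ℕ} (hmn : m ≤ n) :
    (fun a => t a ^ n) =O[l] fun a => t a ^ m := by
  simpa [← pow_add, hmn] using
    (isBigO_refl (fun a => t a ^ m) l).mul ((ht.pow (n - m)).isBigO_one ℝ)

lemma pow_mul_isBigO_pow_of_le (ht : Tendsto t l (𝓝 0)) {f : α → ℝ} {k m n : ℕ}
    (hf : f =O[l] fun a => t a ^ m) (hn : n ≤ k + m) :
    (fun a => t a ^ k * f a) =O[l] fun a => t a ^ n := by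
  refine IsBigO.trans ?_ (isBigO_pow_of_le ht hn)
  simpa only [pow_add] using (isBigO_refl (fun a => t a ^ k) l).mul hf

lemma isBigO_of_mul_isBigO_mul (ht : ∀ᶠ a in l, t a ≠ 0) {f g : α → ℝ}
    (h : (fun a => t a * f a) =O[l] fun a => t a * g a) : f =O[l] g :=
  ((isBigO_refl (fun a => (t a)⁻¹) l).mul h).congr'
    (ht.mono fun a ha => inv_mul_cancel_left₀ ha (f a))
    (ht.mono fun a ha => inv_mul_cancel_left₀ ha (g a))

lemma isBigO_sub_sum_range_of_le (ht : Tendsto t l (𝓝 0)) {f : α → ℝ} {c : ℕ → ℝ} {M N : ℕ}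
    (hMN : M ≤ N) (h : (fun a => f a - ∑ j ∈ range N, c j * t a ^ j) =O[l] fun a => t a ^ M) :
    (fun a => f a - ∑ j ∈ range M, c j * t a ^ j) =O[l] fun a => t a ^ M := by
  have tail : (fun a => ∑ j ∈ Ico M N, c j * t a ^ j) =O[l] fun a => t a ^ M :=
    IsBigO.fun_sum fun j hj => (isBigO_pow_of_le ht (mem_Ico.mp hj).1).const_mul_left _
  refine (h.add tail).congr_left fun a => ?_
  rw [← sum_range_add_sum_Ico _ hMN]
  ring

lemma eq_zero_of_sum_mul_pow_isBigO [l.NeBot] (ht : Tendsto t l (𝓝[≠] 0)) {N : ℕ} {c : ℕ → ℝ}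
    (h : (fun a => ∑ j ∈ range N, c j * t a ^ j) =O[l] fun a => t a ^ N) : ∀ j < N, c j = 0 := by
  obtain ⟨ht₀, ht_ne⟩ := tendsto_nhdsWithin_iff.mp ht
  induction N generalizing c with
  | zero => simp
  | succ N ih =>
    have sum_succ (a : α) : ∑ j ∈ range (N + 1), c j * t a ^ j =
        t a * ∑ j ∈ range N, c (j + 1) * t a ^ j + c 0 := by
      rw [sum_range_succ', mul_sum]
      simp only [pow_zero, mul_one, pow_succ']
      congr 1
      exact sum_congr rfl fun j _ => by ring
    have hc₀ : c 0 = 0 := by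
      have to_zero : Tendsto (fun a => ∑ j ∈ range (N + 1), c j * t a ^ j) l (𝓝 0) :=
        h.trans_tendsto (by simpa using ht₀.pow (N + 1))
      have to_const : Tendsto (fun a => ∑ j ∈ range (N + 1), c j * t a ^ j) l (𝓝 (c 0)) := by
        have := tendsto_finsetSum (range (N + 1)) fun j _ => (ht₀.pow j).const_mul (c j)
        simpa [sum_range_succ'] using this
      exact tendsto_nhds_unique to_const to_zero
    have tail : ∀ j < N, c (j + 1) = 0 := by
      refine ih (isBigO_of_mul_isBigO_mul ht_ne ?_)
      simpa only [sum_succ, hc₀, add_zero, pow_succ'] using h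
    rintro (_ | j) hj
    · exact hc₀
    · exact tail j (by lia)

/-- `HasAsymptoticExpansion l t f φ` is Poincaré's relation `f ~ ∑ φⱼ tʲ` along `l`: truncating the
formal series at order `N` leaves an error `O(tᴺ)`. -/
def HasAsymptoticExpansion (l : Filter α) (t f : α → ℝ) (φ : ℝ⟦X⟧) : Prop :=
  ∀ N : ℕ, (fun a => f a - ∑ j ∈ range N, coeff j φ * t a ^ j) =O[l] fun a => t a ^ N

namespace HasAsymptoticExpansion

variable {f g : α → ℝ} {φ ψ : ℝ⟦X⟧}

lemma of_forall_exists (ht : Tendsto t l (𝓝 0))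
    (h : ∀ N, ∃ M ≥ N, (fun a => f a - ∑ j ∈ range M, coeff j φ * t a ^ j) =O[l] fun a => t a ^ N) :
    HasAsymptoticExpansion l t f φ := fun N =>
  let ⟨_, hNM, hM⟩ := h N
  isBigO_sub_sum_range_of_le ht hNM hM

lemma one (ht : Tendsto t l (𝓝 0)) : HasAsymptoticExpansion l t 1 1 :=
  of_forall_exists ht fun N => ⟨N + 1, N.le_succ, by
    simpa [coeff_one, sum_range_succ'] using isBigO_zero _ l⟩

lemma add (hf : HasAsymptoticExpansion l t f φ) (hg : HasAsymptoticExpansion l t g ψ) :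
    HasAsymptoticExpansion l t (f + g) (φ + ψ) := fun N =>
  ((hf N).add (hg N)).congr_left fun a => by
    simp only [Pi.add_apply, map_add, add_mul, sum_add_distrib]
    ring

lemma const_smul (c : ℝ) (hf : HasAsymptoticExpansion l t f φ) :
    HasAsymptoticExpansion l t (c • f) (c • φ) := fun N =>
  ((hf N).const_mul_left c).congr_left fun a => by
    simp only [Pi.smul_apply, smul_eq_mul, map_smul, mul_sub, mul_sum, mul_assoc]

lemma sub (hf : HasAsymptoticExpansion l t f φ) (hg : HasAsymptoticExpansion l t g ψ) :
    HasAsymptoticExpansion l t (f - g) (φ - ψ) := by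
  simpa only [neg_one_smul, ← sub_eq_add_neg] using hf.add (hg.const_smul (-1))

lemma sum {ι : Type*} (s : Finset ι) {F : ι → α → ℝ} {Φ : ι → ℝ⟦X⟧}
    (h : ∀ i ∈ s, HasAsymptoticExpansion l t (F i) (Φ i)) :
    HasAsymptoticExpansion l t (∑ i ∈ s, F i) (∑ i ∈ s, Φ i) := fun N =>
  (IsBigO.fun_sum fun i hi => h i hi N).congr_left fun a => by
    simp only [Finset.sum_apply, map_sum, sum_sub_distrib, sum_mul]
    rw [sum_comm]

lemma pow_mul (ht : Tendsto t l (𝓝 0)) (k : ℕ) (hf : HasAsymptoticExpansion l t f φ) :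
    HasAsymptoticExpansion l t (t ^ k * f) (X ^ k * φ) :=
  of_forall_exists ht fun N => ⟨k + N, by lia, by
    refine (pow_mul_isBigO_pow_of_le (k := k) ht (hf N) (by lia)).congr_left fun a => ?_
    have low : ∑ j ∈ range k, coeff j (X ^ k * φ) * t a ^ j = 0 := sum_eq_zero fun j hj => by
      rw [coeff_X_pow_mul', if_neg (by simpa using hj), zero_mul]
    have high : ∑ j ∈ range N, coeff (k + j) (X ^ k * φ) * t a ^ (k + j) =
        t a ^ k * ∑ j ∈ range N, coeff j φ * t a ^ j := by
      rw [mul_sum]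
      exact sum_congr rfl fun j _ => by rw [add_comm k j, coeff_X_pow_mul]; ring
    simp only [Pi.mul_apply, Pi.pow_apply, mul_sub]
    rw [sum_range_add, low, high, zero_add]⟩

lemma coeff_eq_zero [l.NeBot] (ht : Tendsto t l (𝓝[≠] 0)) (hf : HasAsymptoticExpansion l t f φ)
    {N : ℕ} (hN : f =O[l] fun a => t a ^ N) {j : ℕ} (hj : j < N) : coeff j φ = 0 :=
  eq_zero_of_sum_mul_pow_isBigO ht ((hN.sub (hf N)).congr_left fun a => by ring) j hj

lemma unique [l.NeBot] (ht : Tendsto t l (𝓝[≠] 0)) (hφ : HasAsymptoticExpansion l t f φ)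
    (hψ : HasAsymptoticExpansion l t f ψ) : φ = ψ := by
  ext j
  have h : (f - f) =O[l] fun a => t a ^ (j + 1) := by
    simpa only [sub_self] using! isBigO_zero _ l
  simpa [sub_eq_zero] using (hφ.sub hψ).coeff_eq_zero ht h j.lt_succ_self

end HasAsymptoticExpansion

/-- The functions that are polynomial in `t` up to an error `O(tᴺ)` along `l`: the setting in which
an expansion is built order by order, before its coefficients are known. -/
def polyApprox (l : Filter α) (t : α → ℝ) (N : ℕ) : Submodule ℝ (α → ℝ) where
  carrier := {f | ∃ p : Polynomial ℝ, (fun a => f a - p.eval (t a)) =O[l] fun a => t a ^ N}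
  add_mem' := by
    rintro f g ⟨p, hp⟩ ⟨q, hq⟩
    exact ⟨p + q, (hp.add hq).congr_left fun a => by
      simp only [Pi.add_apply, Polynomial.eval_add]; ring⟩
  zero_mem' := ⟨0, by simpa using isBigO_zero _ l⟩
  smul_mem' := by
    rintro c f ⟨p, hp⟩
    exact ⟨c • p, (hp.const_mul_left c).congr_left fun a => by simp [mul_sub]⟩

namespace polyApprox

lemma antitone (ht : Tendsto t l (𝓝 0)) : Antitone (polyApprox l t) :=
  fun _ _ hmn _ ⟨p, hp⟩ => ⟨p, hp.trans (isBigO_pow_of_le ht hmn)⟩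

lemma mem_of_isBigO {f : α → ℝ} {N : ℕ} (hf : f =O[l] fun a => t a ^ N) : f ∈ polyApprox l t N :=
  ⟨0, by simpa using hf⟩

lemma one_mem (N : ℕ) : (1 : α → ℝ) ∈ polyApprox l t N :=
  ⟨1, by simpa using isBigO_zero _ l⟩

lemma pow_mul_mem {f : α → ℝ} {N : ℕ} (k : ℕ) (hf : f ∈ polyApprox l t N) :
    t ^ k * f ∈ polyApprox l t (k + N) := by
  obtain ⟨p, hp⟩ := hf
  refine ⟨Polynomial.X ^ k * p, ?_⟩
  simpa [pow_add, mul_sub] using (isBigO_refl (fun a => t a ^ k) l).mul hp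

end polyApprox

lemma exists_hasAsymptoticExpansion [l.NeBot] (ht : Tendsto t l (𝓝[≠] 0)) {f : α → ℝ}
    (hf : ∀ N, f ∈ polyApprox l t N) : ∃ φ, HasAsymptoticExpansion l t f φ := by
  obtain ⟨ht₀, -⟩ := tendsto_nhdsWithin_iff.mp ht
  choose p hp using hf
  have trunc (N : ℕ) : (fun a => f a - ∑ j ∈ range N, (p N).coeff j * t a ^ j) =O[l]
      fun a => t a ^ N := by
    refine isBigO_sub_sum_range_of_le ht₀ (show N ≤ N + (p N).natDegree + 1 by lia) ?_
    simpa only [← (p N).eval_eq_sum_range' (show _ < N + (p N).natDegree + 1 by lia)] using hp N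
  have stable {M N : ℕ} (hMN : M ≤ N) : ∀ j < M, (p N).coeff j - (p M).coeff j = 0 := by
    have h : (fun a => f a - ∑ j ∈ range M, (p N).coeff j * t a ^ j) =O[l] fun a => t a ^ M :=
      isBigO_sub_sum_range_of_le ht₀ hMN ((trunc N).trans (isBigO_pow_of_le ht₀ hMN))
    refine eq_zero_of_sum_mul_pow_isBigO ht (((trunc M).sub h).congr_left fun a => ?_)
    simp only [sub_mul, sum_sub_distrib]
    ring
  refine ⟨.mk fun j => (p (j + 1)).coeff j, fun N => (trunc N).congr_left fun a => ?_⟩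
  congr 1
  refine sum_congr rfl fun j hj => ?_
  rw [coeff_mk, sub_eq_zero.mp (stable (mem_range.mp hj) j j.lt_succ_self)]

end AsymptoticExpansion

section TermwiseDerivative

variable {E : Type*} [NormedAddCommGroup E] [NormedSpace ℝ E] {f f' f'' : ℝ → E}

lemma norm_deriv_le_of_norm_deriv2_le (hf : ∀ x, HasDerivAt f (f' x) x)
    (hf' : ∀ x, HasDerivAt f' (f'' x) x) {x s M : ℝ} (hs : 0 < s)
    (hM : ∀ y ∈ Set.Icc x (x + s), ‖f'' y‖ ≤ M) :
    ‖f' x‖ ≤ (‖f (x + s)‖ + ‖f x‖) / s + s * M := by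
  have left_mem : x ∈ Set.Icc x (x + s) := Set.left_mem_Icc.mpr (by linarith)
  have right_mem : x + s ∈ Set.Icc x (x + s) := Set.right_mem_Icc.mpr (by linarith)
  have hM₀ : 0 ≤ M := (norm_nonneg _).trans (hM x left_mem)
  have deriv_close : ∀ y ∈ Set.Icc x (x + s), ‖f' y - f' x‖ ≤ s * M := fun y hy => by
    have := (convex_Icc x (x + s)).norm_image_sub_le_of_norm_hasDerivWithin_le
      (fun z _ => (hf' z).hasDerivWithinAt) hM left_mem hy
    rw [mul_comm s]
    refine this.trans (mul_le_mul_of_nonneg_left ?_ hM₀)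
    rw [Real.norm_of_nonneg (by linarith [hy.1])]
    linarith [hy.2]
  have linear_close : ‖f (x + s) - f x - s • f' x‖ ≤ s * (s * M) := by
    have := (convex_Icc x (x + s)).norm_image_sub_le_of_norm_hasDerivWithin_le
      (f := fun y => f y - y • f' x) (f' := fun y => f' y - f' x)
      (fun y _ => by
        simpa using! ((hf y).sub ((hasDerivAt_id y).smul_const (f' x))).hasDerivWithinAt)
      deriv_close left_mem right_mem
    rw [add_sub_cancel_left, Real.norm_of_nonneg hs.le, mul_comm] at this
    convert this using 2
    module
  have triangle : s * ‖f' x‖ ≤ ‖f (x + s)‖ + ‖f x‖ + s * (s * M) := calc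
    s * ‖f' x‖ = ‖f (x + s) - f x - (f (x + s) - f x - s • f' x)‖ := by
      rw [sub_sub_cancel, norm_smul, Real.norm_of_nonneg hs.le]
    _ ≤ ‖f (x + s)‖ + ‖f x‖ + s * (s * M) :=
      (norm_sub_le _ _).trans (add_le_add (norm_sub_le _ _) linear_close)
  rw [div_add' _ _ _ hs.ne', le_div_iff₀ hs]
  linarith

-- Landau's inequality on the window `[x, x + exp ((a - b) / 2 * x)]`, which balances its two terms.
lemma isBigO_deriv_of_isBigO_deriv2 (hf : ∀ x, HasDerivAt f (f' x) x)
    (hf' : ∀ x, HasDerivAt f' (f'' x) x) {a b : ℝ} (hab : a ≤ b)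
    (hfO : f =O[atTop] fun x => Real.exp (a * x))
    (hf''O : f'' =O[atTop] fun x => Real.exp (b * x)) :
    f' =O[atTop] fun x => Real.exp ((a + b) / 2 * x) := by
  obtain ⟨K, hK, hfK⟩ := hfO.exists_pos
  obtain ⟨M, hM, hf''M⟩ := hf''O.exists_pos
  obtain ⟨x₀, hx₀⟩ := eventually_atTop.mp (hfK.bound.and hf''M.bound)
  refine .of_bound (K * Real.exp |a| + K + M * Real.exp |b|) ?_
  filter_upwards [eventually_ge_atTop x₀, eventually_ge_atTop 0] with x hx hx_nonneg
  set s := Real.exp ((a - b) / 2 * x) with hs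
  have hs₀ : 0 < s := Real.exp_pos _
  have hs₁ : s ≤ 1 := Real.exp_le_one_iff.mpr (by nlinarith)
  have exp_le (c : ℝ) {y : ℝ} (hy : y ∈ Set.Icc x (x + s)) :
      Real.exp (c * y) ≤ Real.exp |c| * Real.exp (c * x) := by
    rw [← Real.exp_add, Real.exp_le_exp]
    nlinarith [hy.1, hy.2, le_abs_self c, abs_nonneg c]
  have f_le {y : ℝ} (hy : x₀ ≤ y) : ‖f y‖ ≤ K * Real.exp (a * y) := by
    simpa [abs_of_pos] using (hx₀ y hy).1
  have f''_le {y : ℝ} (hy : x₀ ≤ y) : ‖f'' y‖ ≤ M * Real.exp (b * y) := by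
    simpa [abs_of_pos] using (hx₀ y hy).2
  have landau := norm_deriv_le_of_norm_deriv2_le hf hf' (x := x) hs₀
    (M := M * (Real.exp |b| * Real.exp (b * x))) fun y hy =>
      (f''_le (hx.trans hy.1)).trans (by gcongr; exact exp_le b hy)
  have div_s : Real.exp (a * x) / s = Real.exp ((a + b) / 2 * x) := by
    rw [hs, ← Real.exp_sub]; ring_nf
  have s_mul : s * Real.exp (b * x) = Real.exp ((a + b) / 2 * x) := by
    rw [hs, ← Real.exp_add]; ring_nf
  rw [Real.norm_of_nonneg (Real.exp_pos _).le]
  calc ‖f' x‖ ≤ (‖f (x + s)‖ + ‖f x‖) / s + s * (M * (Real.exp |b| * Real.exp (b * x))) := landau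
    _ ≤ (K * (Real.exp |a| * Real.exp (a * x)) + K * Real.exp (a * x)) / s +
        s * (M * (Real.exp |b| * Real.exp (b * x))) := by
      gcongr
      · exact (f_le (by linarith)).trans (by gcongr; exact exp_le a ⟨by linarith, le_rfl⟩)
      · exact f_le hx
    _ = (K * Real.exp |a| + K) * (Real.exp (a * x) / s) +
        M * Real.exp |b| * (s * Real.exp (b * x)) := by ring
    _ = (K * Real.exp |a| + K + M * Real.exp |b|) * Real.exp ((a + b) / 2 * x) := by
      rw [div_s, s_mul]; ring

lemma tendsto_exp_neg_mul_atTop {c : ℝ} (hc : 0 < c) :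
    Tendsto (fun x => Real.exp (-c * x)) atTop (𝓝[≠] 0) :=
  tendsto_nhdsWithin_iff.mpr
    ⟨Real.tendsto_exp_atBot.comp (tendsto_id.const_mul_atTop_of_neg (neg_lt_zero.mpr hc)),
      .of_forall fun _ => (Real.exp_pos _).ne'⟩

lemma exp_neg_mul_pow (c x : ℝ) (j : ℕ) :
    Real.exp (-c * x) ^ j = Real.exp (-(c * j) * x) := by
  rw [← Real.exp_nat_mul]; ring_nf

lemma hasDerivAt_sum_mul_exp_pow (c : ℝ) (a : ℕ → ℝ) (M : ℕ) (x : ℝ) :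
    HasDerivAt (fun x => ∑ j ∈ range M, a j * Real.exp (-c * x) ^ j)
      (∑ j ∈ range M, -(c * j) * a j * Real.exp (-c * x) ^ j) x := by
  refine .fun_sum fun j _ => ?_
  simp only [exp_neg_mul_pow]
  exact (((hasDerivAt_id x).const_mul (-(c * j))).exp.const_mul (a j)).congr_deriv (by
    simp only [id_eq]; ring)

-- A remainder of much higher order than needed leaves room for the loss in Landau's inequality.
lemma HasAsymptoticExpansion.hasDerivAt {c : ℝ} (hc : 0 < c) {f f' f'' : ℝ → ℝ} {φ : ℝ⟦X⟧}
    (h : HasAsymptoticExpansion atTop (fun x => Real.exp (-c * x)) f φ)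
    (hf : ∀ x, HasDerivAt f (f' x) x) (hf' : ∀ x, HasDerivAt f' (f'' x) x)
    {A : ℕ} (hf'' : f'' =O[atTop] fun x => (Real.exp (-c * x))⁻¹ ^ A) :
    HasAsymptoticExpansion atTop (fun x => Real.exp (-c * x)) f'
      (.mk fun j => -(c * j) * coeff j φ) := by
  set t : ℝ → ℝ := fun x => Real.exp (-c * x)
  have ht : Tendsto t atTop (𝓝 0) := (tendsto_exp_neg_mul_atTop hc).mono_right nhdsWithin_le_nhds
  refine .of_forall_exists ht fun N => ⟨2 * N + A, by lia, ?_⟩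
  have inv_pow (x : ℝ) : (t x)⁻¹ ^ A = Real.exp (c * A * x) := by
    rw [inv_pow, exp_neg_mul_pow, neg_mul, Real.exp_neg, inv_inv]
  have remainder : (fun x => f x - ∑ j ∈ range (2 * N + A), coeff j φ * t x ^ j) =O[atTop]
      fun x => Real.exp (-(c * (2 * N + A : ℕ)) * x) :=
    (h _).congr_right fun x => exp_neg_mul_pow c x _
  have remainder'' : (fun x => f'' x -
      ∑ j ∈ range (2 * N + A), -(c * j) * (-(c * j) * coeff j φ) * t x ^ j) =O[atTop]
      fun x => Real.exp (c * A * x) := by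
    have one_isBigO : (fun _ => (1 : ℝ)) =O[atTop] fun x => Real.exp (c * A * x) :=
      .of_bound' <| (eventually_ge_atTop 0).mono fun x hx => by
        simpa using by positivity
    refine (hf''.congr_right inv_pow).sub (.fun_sum fun j _ => ?_)
    exact ((isBigO_pow_of_le ht j.zero_le).trans (by simpa using one_isBigO)).const_mul_left _
  have remainder' := isBigO_deriv_of_isBigO_deriv2
    (fun x => (hf x).sub (hasDerivAt_sum_mul_exp_pow c (coeff · φ) _ x))
    (fun x => (hf' x).sub (hasDerivAt_sum_mul_exp_pow c (fun j => -(c * j) * coeff j φ) _ x))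
    (show -(c * (2 * N + A : ℕ)) ≤ c * A by
      have : 0 ≤ c * (2 * N + A : ℕ) := by positivity
      have : 0 ≤ c * A := by positivity
      linarith) remainder remainder''
  simp only [coeff_mk]
  refine remainder'.congr_right fun x => ?_
  rw [exp_neg_mul_pow]
  push_cast
  ring_nf

end TermwiseDerivative

section BinomialSeries

variable {ν : ℝ}

lemma min_one_mul_neg_le_one_sub_rpow (hν : 0 ≤ ν) {u : ℝ} (hu : -1 ≤ u) (hu₀ : u ≤ 0) :
    min 1 ν * -u ≤ 1 - (1 + u) ^ ν := by
  rcases le_total 1 ν with h | h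
  · have := Real.rpow_le_rpow_of_exponent_ge' (x := 1 + u) (by linarith) (by linarith)
      zero_le_one h
    rw [Real.rpow_one] at this
    rw [min_eq_left h]
    linarith
  · have := rpow_one_add_le_one_add_mul_self hu hν h
    rw [min_eq_right h]
    linarith

lemma mul_le_rpow_sub_one_mul (hν : 0 ≤ ν) {u : ℝ} (hu : 0 < 1 + u) :
    ν * u ≤ ((1 + u) ^ ν - 1) * (1 + u) := by
  have h₁ := Real.one_sub_inv_le_log_of_pos hu
  have h₂ := Real.add_one_le_exp (Real.log (1 + u) * ν)
  calc ν * u = (1 - (1 + u)⁻¹) * ν * (1 + u) := by field_simp; ring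
    _ ≤ Real.log (1 + u) * ν * (1 + u) := by gcongr
    _ ≤ (Real.exp (Real.log (1 + u) * ν) - 1) * (1 + u) := by gcongr; linarith
    _ = ((1 + u) ^ ν - 1) * (1 + u) := by rw [Real.rpow_def_of_pos hu]

lemma min_one_mul_sq_le (hν : 0 ≤ ν) {u : ℝ} (hu : -1 ≤ u) :
    min 1 ν * u ^ 2 ≤ ((1 + u) ^ ν - 1) * (u * (2 + u)) := by
  have hc : 0 ≤ min 1 ν := le_min zero_le_one hν
  rcases le_total u 0 with hu₀ | hu₀
  · calc min 1 ν * u ^ 2 = min 1 ν * -u * -u := by ring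
      _ ≤ min 1 ν * -u * (-u * (2 + u)) := by
        gcongr
        · exact mul_nonneg hc (neg_nonneg.mpr hu₀)
        · nlinarith
      _ ≤ (1 - (1 + u) ^ ν) * (-u * (2 + u)) := by
        gcongr
        · nlinarith
        · exact min_one_mul_neg_le_one_sub_rpow hν hu hu₀
      _ = ((1 + u) ^ ν - 1) * (u * (2 + u)) := by ring
  · have one_le : 1 ≤ (1 + u) ^ ν := Real.one_le_rpow (by linarith) hν
    calc min 1 ν * u ^ 2 = min 1 ν * u * u := by ring
      _ ≤ ν * u * u := by gcongr; exact min_le_right 1 ν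
      _ ≤ ((1 + u) ^ ν - 1) * (1 + u) * u := by
        exact mul_le_mul_of_nonneg_right (mul_le_rpow_sub_one_mul hν (by linarith)) hu₀
      _ ≤ ((1 + u) ^ ν - 1) * (2 + u) * u := by
        gcongr
        linarith
      _ = ((1 + u) ^ ν - 1) * (u * (2 + u)) := by ring

lemma abs_sum_choose_sub_rpow_le_of_le_abs (hν : 0 ≤ ν) {n L : ℕ} (hnL : n ≤ L) (hνL : ν ≤ L)
    {r u : ℝ} (hr : 0 < r) (hu : -1 ≤ u) (hru : r ≤ |u|) :
    |∑ j ∈ range n, Ring.choose ν j * u ^ j - (1 + u) ^ ν| ≤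
      (∑ j ∈ range n, |Ring.choose ν j| + 1) * (1 / r + 1) ^ L * |u| ^ L := by
  have one_le : 1 ≤ 1 + |u| := by linarith [abs_nonneg u]
  have rpow_le : |(1 + u) ^ ν| ≤ (1 + |u|) ^ L := by
    rw [abs_of_nonneg (Real.rpow_nonneg (by linarith) _), ← Real.rpow_natCast]
    calc (1 + u) ^ ν ≤ (1 + |u|) ^ ν :=
          Real.rpow_le_rpow (by linarith) (by linarith [le_abs_self u]) hν
      _ ≤ (1 + |u|) ^ (L : ℝ) := Real.rpow_le_rpow_of_exponent_le one_le hνL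
  have sum_le : |∑ j ∈ range n, Ring.choose ν j * u ^ j| ≤
      (∑ j ∈ range n, |Ring.choose ν j|) * (1 + |u|) ^ L := by
    refine (abs_sum_le_sum_abs _ _).trans ?_
    rw [sum_mul]
    refine sum_le_sum fun j hj => ?_
    rw [abs_mul, abs_pow]
    gcongr
    calc |u| ^ j ≤ (1 + |u|) ^ j := by gcongr; linarith
      _ ≤ (1 + |u|) ^ L := pow_le_pow_right₀ one_le ((mem_range.mp hj).le.trans hnL)
  have one_add_le : 1 + |u| ≤ (1 / r + 1) * |u| := by
    have : 1 ≤ |u| / r := (one_le_div hr).mpr hru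
    rw [add_mul, one_mul, one_div_mul_eq_div]
    linarith
  calc |∑ j ∈ range n, Ring.choose ν j * u ^ j - (1 + u) ^ ν|
      ≤ |∑ j ∈ range n, Ring.choose ν j * u ^ j| + |(1 + u) ^ ν| := abs_sub _ _
    _ ≤ (∑ j ∈ range n, |Ring.choose ν j| + 1) * (1 + |u|) ^ L := by linarith
    _ ≤ (∑ j ∈ range n, |Ring.choose ν j| + 1) * ((1 / r + 1) * |u|) ^ L := by gcongr
    _ = (∑ j ∈ range n, |Ring.choose ν j| + 1) * (1 / r + 1) ^ L * |u| ^ L := by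
      rw [mul_pow, mul_assoc]

lemma exists_abs_sum_choose_sub_rpow_le (hν : 0 ≤ ν) {n L : ℕ} (hnL : n ≤ L) (hνL : ν ≤ L) :
    ∃ C ≥ 0, ∀ u ≥ -1,
      |∑ j ∈ range n, Ring.choose ν j * u ^ j - (1 + u) ^ ν| ≤ C * (|u| ^ n + |u| ^ L) := by
  obtain ⟨C, hC, hO⟩ :=
    ((Real.one_add_rpow_hasFPowerSeriesAt_zero (a := ν)).isBigO_sub_partialSum_pow n).exists_pos
  obtain ⟨r, hr, near⟩ := Metric.eventually_nhds_iff.mp hO.bound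
  set D := (∑ j ∈ range n, |Ring.choose ν j| + 1) * (1 / r + 1) ^ L
  have hD : 0 ≤ D := by positivity
  refine ⟨C + D, by positivity, fun u hu => ?_⟩
  have hun : 0 ≤ |u| ^ n := by positivity
  have huL : 0 ≤ |u| ^ L := by positivity
  rcases lt_or_ge |u| r with hur | hur
  · have taylor := near (y := u) (by simpa [Real.dist_eq] using hur)
    simp only [FormalMultilinearSeries.partialSum, binomialSeries_apply, zero_add,
      List.ofFn_const, List.prod_replicate, smul_eq_mul, norm_pow, norm_norm] at taylor
    rw [abs_sub_comm]
    exact taylor.trans (mul_le_mul (by linarith) (by simp) hun (by linarith))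
  · exact (abs_sum_choose_sub_rpow_le_of_le_abs hν hnL hνL hr hu hur).trans
      (mul_le_mul (by linarith) (by linarith) huL (by linarith))

lemma exists_abs_sum_choose_sub_rpow_mul_pow_le (hν : 0 ≤ ν) {N L : ℕ} (hNL : N ≤ L)
    (hνL : ν ≤ L) : ∃ C, ∀ k : ℕ, ∀ u ≥ -1,
      |(∑ j ∈ range (2 * N), Ring.choose ν j * u ^ j - (1 + u) ^ ν) * u ^ k| ≤
        C * (u ^ (2 * N) + u ^ (2 * L) + (u ^ (2 * N + 2 * k) + u ^ (2 * L + 2 * k))) := by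
  obtain ⟨C, -, binomial⟩ := exists_abs_sum_choose_sub_rpow_le hν
    (show 2 * N ≤ 2 * L by lia) (by push_cast; linarith)
  refine ⟨C, fun k u hu => ?_⟩
  have remainder := binomial u hu
  rw [(even_two_mul N).pow_abs, (even_two_mul L).pow_abs] at remainder
  have abs_pow_le : |u ^ k| ≤ 1 + u ^ (2 * k) := by
    rw [mul_comm 2 k, pow_mul u k 2, ← sq_abs]
    nlinarith [sq_nonneg (|u ^ k| - 1)]
  rw [abs_mul]
  calc _ ≤ C * (u ^ (2 * N) + u ^ (2 * L)) * (1 + u ^ (2 * k)) :=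
        mul_le_mul remainder abs_pow_le (abs_nonneg _) ((abs_nonneg _).trans remainder)
    _ = _ := by ring

end BinomialSeries

namespace ConwayMaxwellPoisson

section Expectation

/-- The unnormalized probability of `i` under `CMP(eˣ, ν)`. -/
noncomputable def weight (ν x : ℝ) (i : ℕ) : ℝ := Real.exp x ^ i / (i.factorial : ℝ) ^ ν

lemma weight_pos (ν x : ℝ) (i : ℕ) : 0 < weight ν x i := by
  unfold weight; positivity

lemma weight_le_weight (ν : ℝ) {x y : ℝ} (hxy : x ≤ y) (i : ℕ) : weight ν x i ≤ weight ν y i := by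
  unfold weight; gcongr

lemma rpow_mul_weight_succ (ν x : ℝ) (i : ℕ) :
    ((i + 1 : ℕ) : ℝ) ^ ν * weight ν x (i + 1) = Real.exp x * weight ν x i := by
  rw [weight, weight, Nat.factorial_succ, Nat.cast_mul,
    Real.mul_rpow (by positivity) (by positivity)]
  field_simp
  rw [pow_succ']

lemma exp_pow_mul_weight (ν x : ℝ) (n i : ℕ) :
    Real.exp i ^ n * weight ν x i = weight ν (x + n) i := by
  simp only [weight, ← Real.exp_nat_mul, ← mul_div_assoc, ← Real.exp_add]
  ring_nf

lemma hasDerivAt_weight (ν x : ℝ) (i : ℕ) :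
    HasDerivAt (fun y => weight ν y i) (i * weight ν x i) x := by
  simp only [weight, ← Real.exp_nat_mul]
  exact ((((hasDerivAt_id x).const_mul (i : ℝ)).exp).div_const _).congr_deriv (by
    simp only [id_eq]; ring)

variable {ν : ℝ} (hν : 0 < ν) (x : ℝ)

include hν in
lemma summable_weight : Summable (weight ν x) := by
  refine summable_of_ratio_test_tendsto_lt_one zero_lt_one
    (.of_forall fun i => (weight_pos ν x i).ne') ?_
  have h : Tendsto (fun i : ℕ => Real.exp x / ((i + 1 : ℕ) : ℝ) ^ ν) atTop (𝓝 0) :=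
    ((tendsto_rpow_atTop hν).comp
      (tendsto_natCast_atTop_atTop.comp (tendsto_add_atTop_nat 1))).const_div_atTop _
  refine h.congr fun i => ?_
  rw [Real.norm_of_nonneg (weight_pos ν x _).le, Real.norm_of_nonneg (weight_pos ν x _).le,
    div_eq_div_iff (by positivity) (weight_pos ν x i).ne', ← rpow_mul_weight_succ, mul_comm]

include hν in
lemma cmpZ_exp_pos : 0 < cmpZ (Real.exp x) ν :=
  (summable_weight hν x).tsum_pos (fun i => (weight_pos ν x i).le) 0 (weight_pos ν x 0)

/-- The algebra of the functions of `X ∼ CMP(λ, ν)` to be averaged: sequences growing at most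
exponentially, so that all of them are summable against the weights. -/
noncomputable def statistics : Subalgebra ℝ (ℕ → ℝ) :=
  growthAlgebra atTop (fun i : ℕ => Real.exp i) (.of_forall fun i => Real.one_le_exp i.cast_nonneg)

/-- The random variable `X ∼ CMP(λ, ν)` itself. -/
noncomputable def count : statistics :=
  ⟨fun i => i, 1, .of_bound' <| .of_forall fun i => by
    simpa using (lt_add_one (i : ℝ)).le.trans (Real.add_one_le_exp i)⟩

/-- The statistic `X ^ ν`. -/
noncomputable def countRpow (ν : ℝ) : statistics :=
  ⟨fun i => (i : ℝ) ^ ν, 1, by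
    simpa only [pow_one] using!
      (isLittleO_rpow_exp_atTop ν).isBigO.comp_tendsto tendsto_natCast_atTop_atTop⟩

/-- The translation `f(X) ↦ f(X + 1)` of statistics. -/
noncomputable def shift : statistics →ₐ[ℝ] statistics where
  toFun f := ⟨fun i => (f : ℕ → ℝ) (i + 1), by
    obtain ⟨n, hn⟩ := f.2
    refine ⟨n, (hn.comp_tendsto (tendsto_add_atTop_nat 1)).trans (.of_bound (Real.exp 1 ^ n) ?_)⟩
    filter_upwards with i
    simp [Real.exp_add, mul_pow, mul_comm]⟩
  map_one' := rfl
  map_mul' _ _ := rfl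
  map_zero' := rfl
  map_add' _ _ := rfl
  commutes' _ := rfl

include hν in
lemma summable_mul_weight (f : statistics) : Summable fun i => (f : ℕ → ℝ) i * weight ν x i := by
  obtain ⟨n, hn⟩ := f.2
  refine summable_of_isBigO_nat (summable_weight hν (x + n)) ?_
  simpa only [exp_pow_mul_weight] using hn.mul (isBigO_refl (weight ν x) atTop)

/-- The expectation of a statistic under `CMP(eˣ, ν)`. -/
noncomputable def expect : statistics →ₗ[ℝ] ℝ where
  toFun f := (∑' i, (f : ℕ → ℝ) i * weight ν x i) / cmpZ (Real.exp x) ν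
  map_add' f g := by
    simp only [Subalgebra.coe_add, Pi.add_apply, add_mul]
    rw [(summable_mul_weight hν x f).tsum_add (summable_mul_weight hν x g), add_div]
  map_smul' c f := by
    simp only [Subalgebra.coe_smul, Pi.smul_apply, smul_eq_mul, mul_assoc, tsum_mul_left,
      mul_div_assoc, RingHom.id_apply]

lemma expect_apply (f : statistics) :
    expect hν x f = (∑' i, (f : ℕ → ℝ) i * weight ν x i) / cmpZ (Real.exp x) ν := rfl

lemma expect_one : expect hν x 1 = 1 := by
  rw [expect_apply, div_eq_one_iff_eq (cmpZ_exp_pos hν x).ne']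
  simp [cmpZ, weight]

lemma expect_mono {f g : statistics} (h : (f : ℕ → ℝ) ≤ g) : expect hν x f ≤ expect hν x g :=
  div_le_div_of_nonneg_right
    ((summable_mul_weight hν x f).tsum_le_tsum
      (fun i => mul_le_mul_of_nonneg_right (h i) (weight_pos ν x i).le)
      (summable_mul_weight hν x g))
    (cmpZ_exp_pos hν x).le

lemma abs_expect_le {f g : statistics} (h : ∀ i, |(f : ℕ → ℝ) i| ≤ (g : ℕ → ℝ) i) :
    |expect hν x f| ≤ expect hν x g := by
  refine abs_le.mpr ⟨?_, expect_mono hν x fun i => (abs_le.mp (h i)).2⟩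
  rw [← map_neg]
  exact expect_mono hν x fun i => (abs_le.mp (h i)).1

lemma expect_countRpow_mul (f : statistics) :
    expect hν x (countRpow ν * f) = Real.exp x * expect hν x (shift f) := by
  rw [expect_apply, (summable_mul_weight hν x _).tsum_eq_zero_add, expect_apply, ← mul_div_assoc,
    ← tsum_mul_left]
  have term_zero : ((countRpow ν * f : statistics) : ℕ → ℝ) 0 * weight ν x 0 = 0 := by
    simp [countRpow, hν.ne']
  rw [term_zero, zero_add]
  congr 1
  refine tsum_congr fun i => ?_
  calc ((i + 1 : ℕ) : ℝ) ^ ν * (f : ℕ → ℝ) (i + 1) * weight ν x (i + 1)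
      = (f : ℕ → ℝ) (i + 1) * (((i + 1 : ℕ) : ℝ) ^ ν * weight ν x (i + 1)) := by ring
    _ = Real.exp x * ((f : ℕ → ℝ) (i + 1) * weight ν x i) := by rw [rpow_mul_weight_succ]; ring

include hν in
lemma hasDerivAt_tsum_mul_weight (f : statistics) :
    HasDerivAt (fun y => ∑' i, (f : ℕ → ℝ) i * weight ν y i)
      (∑' i, ((count * f : statistics) : ℕ → ℝ) i * weight ν x i) x := by
  refine hasDerivAt_tsum_of_isPreconnected (t := Set.Iio (x + 1)) (y₀ := x)
    (g := fun i y => (f : ℕ → ℝ) i * weight ν y i)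
    (g' := fun i y => ((count * f : statistics) : ℕ → ℝ) i * weight ν y i)
    (u := fun i => ‖((count * f : statistics) : ℕ → ℝ) i * weight ν (x + 1) i‖)
    (summable_mul_weight hν _ _).norm isOpen_Iio isPreconnected_Iio (fun i y _ => ?_)
    (fun i y hy => ?_) (by simp) (summable_mul_weight hν x f) (by simp)
  · refine ((hasDerivAt_weight ν y i).const_mul _).congr_deriv ?_
    change (f : ℕ → ℝ) i * (i * weight ν y i) = i * (f : ℕ → ℝ) i * weight ν y i
    ring
  · rw [norm_mul, norm_mul, Real.norm_of_nonneg (weight_pos ν _ i).le,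
      Real.norm_of_nonneg (weight_pos ν _ i).le]
    gcongr
    exact weight_le_weight ν (le_of_lt hy) i

include hν in
lemma hasDerivAt_cmpZ_exp : HasDerivAt (fun y => cmpZ (Real.exp y) ν)
    (∑' i, (count : ℕ → ℝ) i * weight ν x i) x := by
  simpa [cmpZ, weight] using hasDerivAt_tsum_mul_weight hν x 1

lemma hasDerivAt_log_cmpZ_exp :
    HasDerivAt (fun y => Real.log (cmpZ (Real.exp y) ν)) (expect hν x count) x :=
  (hasDerivAt_cmpZ_exp hν x).log (cmpZ_exp_pos hν x).ne'

lemma hasDerivAt_expect (f : statistics) :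
    HasDerivAt (fun y => expect hν y f)
      (expect hν x (count * f) - expect hν x count * expect hν x f) x := by
  refine ((hasDerivAt_tsum_mul_weight hν x f).div (hasDerivAt_cmpZ_exp hν x)
    (cmpZ_exp_pos hν x).ne').congr_deriv ?_
  simp only [expect_apply]
  have := (cmpZ_exp_pos hν x).ne'
  field_simp

end Expectation

section ScaledMoments

/-- The small parameter `λ ^ (-1/ν)` at `λ = eˣ`. -/
noncomputable def scale (ν x : ℝ) : ℝ := Real.exp (-ν⁻¹ * x)

/-- The relative deviation `X / λ ^ (1/ν) - 1` at `λ = eˣ`. -/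
noncomputable def deviation (ν x : ℝ) : statistics := scale ν x • count - 1

/-- The statistic `(X / λ ^ (1/ν)) ^ ν` at `λ = eˣ`. -/
noncomputable def scaledRpow (ν x : ℝ) : statistics := Real.exp (-x) • countRpow ν

/-- The `k`-th moment of the relative deviation, as a function of `x = log λ`. -/
noncomputable def scaledMoment {ν : ℝ} (hν : 0 < ν) (k : ℕ) (x : ℝ) : ℝ :=
  expect hν x (deviation ν x ^ k)

lemma scale_pos (ν x : ℝ) : 0 < scale ν x := Real.exp_pos _

lemma deviation_apply (ν x : ℝ) (i : ℕ) :
    (deviation ν x : ℕ → ℝ) i = scale ν x * i - 1 := rfl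

lemma neg_one_le_deviation (ν x : ℝ) (i : ℕ) : -1 ≤ (deviation ν x : ℕ → ℝ) i := by
  have := mul_nonneg (scale_pos ν x).le i.cast_nonneg
  rw [deviation_apply]
  linarith

lemma shift_deviation (ν x : ℝ) : shift (deviation ν x) = deviation ν x + scale ν x • 1 := by
  ext i
  change scale ν x * ((i + 1 : ℕ) : ℝ) - 1 = scale ν x * i - 1 + scale ν x * 1
  push_cast
  ring

variable {ν : ℝ} (hν : 0 < ν)

include hν in
lemma tendsto_scale : Tendsto (scale ν) atTop (𝓝[≠] 0) :=
  tendsto_exp_neg_mul_atTop (inv_pos.mpr hν)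

include hν in
lemma tendsto_scale_zero : Tendsto (scale ν) atTop (𝓝 0) :=
  (tendsto_scale hν).mono_right nhdsWithin_le_nhds

include hν in
lemma scaledRpow_apply (x : ℝ) (i : ℕ) :
    (scaledRpow ν x : ℕ → ℝ) i = (1 + (deviation ν x : ℕ → ℝ) i) ^ ν := by
  rw [deviation_apply, add_sub_cancel, Real.mul_rpow (scale_pos ν x).le i.cast_nonneg, scale,
    ← Real.exp_mul, neg_mul, neg_mul, mul_right_comm, inv_mul_cancel₀ hν.ne', one_mul]
  rfl

lemma expect_scaledRpow_mul (x : ℝ) (f : statistics) :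
    expect hν x (scaledRpow ν x * f) = expect hν x (shift f) := by
  rw [scaledRpow, smul_mul_assoc, map_smul, expect_countRpow_mul, smul_eq_mul, ← mul_assoc,
    ← Real.exp_add, neg_add_cancel, Real.exp_zero, one_mul]

lemma expect_scaledRpow_mul_deviation_pow (k : ℕ) (x : ℝ) :
    expect hν x (scaledRpow ν x * deviation ν x ^ k) =
      ∑ i ∈ range (k + 1), k.choose i * (scale ν x ^ (k - i) * scaledMoment hν i x) := by
  rw [expect_scaledRpow_mul, map_pow, shift_deviation, add_pow, map_sum]
  refine sum_congr rfl fun i _ => ?_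
  rw [smul_pow, one_pow, mul_smul_comm, mul_one, ← nsmul_eq_mul', map_nsmul, map_smul, nsmul_eq_mul,
    smul_eq_mul, scaledMoment]

lemma expect_scaledRpow_sub_one_mul_deviation_pow (k : ℕ) (x : ℝ) :
    expect hν x ((scaledRpow ν x - 1) * deviation ν x ^ k) =
      ∑ i ∈ range k, k.choose i * (scale ν x ^ (k - i) * scaledMoment hν i x) := by
  rw [sub_mul, one_mul, map_sub, expect_scaledRpow_mul_deviation_pow, sum_range_succ]
  simp [scaledMoment]

lemma scaledMoment_zero : scaledMoment hν 0 = 1 := by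
  ext x
  rw [scaledMoment, pow_zero, expect_one, Pi.one_apply]

lemma scaledMoment_nonneg {k : ℕ} (hk : Even k) (x : ℝ) : 0 ≤ scaledMoment hν k x := by
  simpa [scaledMoment] using
    expect_mono hν x (f := 0) (g := deviation ν x ^ k) fun i => hk.pow_nonneg _

lemma abs_scaledMoment_le (q : ℕ) (x : ℝ) : |scaledMoment hν (2 * q + 1) x| ≤
    scaledMoment hν (2 * q) x + scaledMoment hν (2 * q + 2) x := by
  simp only [scaledMoment, ← map_add]
  refine abs_expect_le hν x fun i => ?_
  change |(deviation ν x : ℕ → ℝ) i ^ (2 * q + 1)| ≤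
    (deviation ν x : ℕ → ℝ) i ^ (2 * q) + (deviation ν x : ℕ → ℝ) i ^ (2 * q + 2)
  set u := (deviation ν x : ℕ → ℝ) i
  have hu : 0 ≤ u ^ (2 * q) := (even_two_mul q).pow_nonneg u
  rw [pow_succ, abs_mul, abs_of_nonneg hu, pow_add, ← sq_abs u]
  nlinarith [sq_nonneg (|u| - 1)]

end ScaledMoments

section MomentBounds

variable {ν : ℝ} (hν : 0 < ν)

-- `(R - 1) * U ^ (2 * q) * (U * (2 + U))` has nonnegative integrand, where `R` is the scaled power
-- and `U` the deviation; Stein's identity evaluates it through moments of lower order.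
lemma min_one_mul_scaledMoment_le (q : ℕ) (x : ℝ) :
    min 1 ν * scaledMoment hν (2 * q + 2) x ≤
      2 * ∑ i ∈ range (2 * q + 1),
        (2 * q + 1).choose i * (scale ν x ^ (2 * q + 1 - i) * scaledMoment hν i x) +
      ∑ i ∈ range (2 * q + 2),
        (2 * q + 2).choose i * (scale ν x ^ (2 * q + 2 - i) * scaledMoment hν i x) := by
  set U := deviation ν x
  set R := scaledRpow ν x
  calc min 1 ν * scaledMoment hν (2 * q + 2) x
      = expect hν x (min 1 ν • U ^ (2 * q + 2)) := by rw [map_smul, smul_eq_mul, scaledMoment]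
    _ ≤ expect hν x (2 • ((R - 1) * U ^ (2 * q + 1)) + (R - 1) * U ^ (2 * q + 2)) := by
      refine expect_mono hν x fun i => ?_
      change min 1 ν * (U : ℕ → ℝ) i ^ (2 * q + 2) ≤
        2 • (((R : ℕ → ℝ) i - 1) * (U : ℕ → ℝ) i ^ (2 * q + 1)) +
          ((R : ℕ → ℝ) i - 1) * (U : ℕ → ℝ) i ^ (2 * q + 2)
      rw [scaledRpow_apply hν]
      set u := (U : ℕ → ℝ) i
      have hu : 0 ≤ u ^ (2 * q) := (even_two_mul q).pow_nonneg u
      have := mul_le_mul_of_nonneg_right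
        (min_one_mul_sq_le hν.le (neg_one_le_deviation ν x i)) hu
      calc min 1 ν * u ^ (2 * q + 2) = min 1 ν * u ^ 2 * u ^ (2 * q) := by ring
        _ ≤ ((1 + u) ^ ν - 1) * (u * (2 + u)) * u ^ (2 * q) := this
        _ = _ := by rw [two_nsmul]; ring
    _ = _ := by
      rw [map_add, map_nsmul, nsmul_eq_mul, Nat.cast_ofNat,
        expect_scaledRpow_sub_one_mul_deviation_pow, expect_scaledRpow_sub_one_mul_deviation_pow]

lemma sum_choose_mul_scaledMoment_isBigO {q n : ℕ}
    (ih : ∀ i ≤ 2 * q, scaledMoment hν i =O[atTop] fun x => scale ν x ^ (i / 2))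
    (hn : 2 * q + 1 ≤ n) :
    (fun x => ∑ i ∈ range (2 * q + 1), n.choose i * (scale ν x ^ (n - i) * scaledMoment hν i x))
      =O[atTop] fun x => scale ν x ^ (q + 1) :=
  .fun_sum fun i hi => by
    have hi := mem_range.mp hi
    exact (pow_mul_isBigO_pow_of_le (tendsto_scale_zero hν) (ih i (by lia))
      (by lia)).const_mul_left _

lemma scaledMoment_two_mul_add_two_isBigO {q : ℕ}
    (ih : ∀ i ≤ 2 * q, scaledMoment hν i =O[atTop] fun x => scale ν x ^ (i / 2)) :
    scaledMoment hν (2 * q + 2) =O[atTop] fun x => scale ν x ^ (q + 1) := by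
  set V := scaledMoment hν
  have hc : 0 < min 1 ν := lt_min one_pos hν
  set F : ℝ → ℝ := fun x =>
    2 * ∑ i ∈ range (2 * q + 1), (2 * q + 1).choose i * (scale ν x ^ (2 * q + 1 - i) * V i x) +
    ∑ i ∈ range (2 * q + 1), (2 * q + 2).choose i * (scale ν x ^ (2 * q + 2 - i) * V i x) +
    (2 * q + 2) * (scale ν x ^ 1 * V (2 * q) x) with hF
  have F_isBigO : F =O[atTop] fun x => scale ν x ^ (q + 1) :=
    (((sum_choose_mul_scaledMoment_isBigO hν ih le_rfl).const_mul_left 2).add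
      (sum_choose_mul_scaledMoment_isBigO hν ih (by lia))).add
      ((pow_mul_isBigO_pow_of_le (tendsto_scale_zero hν) (ih _ le_rfl) (by lia)).const_mul_left _)
  refine IsBigO.trans (.of_bound (2 / min 1 ν) ?_) F_isBigO
  have scale_small : ∀ᶠ x in atTop, (2 * q + 2) * scale ν x < min 1 ν / 2 :=
    ((tendsto_scale_zero hν).const_mul (2 * q + 2 : ℝ)).eventually_lt_const (by simpa using hc)
  filter_upwards [scale_small] with x hx
  have hV : 0 ≤ V (2 * q + 2) x := scaledMoment_nonneg hν (by simp [parity_simps]) x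
  have odd : (2 * q + 2) * (scale ν x * V (2 * q + 1) x) ≤
      (2 * q + 2) * (scale ν x * V (2 * q) x) + min 1 ν / 2 * V (2 * q + 2) x := by
    have := le_of_abs_le (abs_scaledMoment_le hν q x)
    have := scale_pos ν x
    calc (2 * q + 2) * (scale ν x * V (2 * q + 1) x)
        ≤ (2 * q + 2) * (scale ν x * (V (2 * q) x + V (2 * q + 2) x)) := by gcongr
      _ = (2 * q + 2) * (scale ν x * V (2 * q) x) +
          (2 * q + 2) * scale ν x * V (2 * q + 2) x := by ring
      _ ≤ _ := by gcongr
  have absorbed : min 1 ν / 2 * V (2 * q + 2) x ≤ F x := by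
    have := min_one_mul_scaledMoment_le hν q x
    rw [sum_range_succ _ (2 * q + 1), Nat.choose_succ_self_right, Nat.add_sub_add_left] at this
    push_cast at this
    norm_num [hF] at this ⊢
    linarith
  rw [Real.norm_of_nonneg hV, ← div_le_iff₀' (by positivity), div_div_eq_mul_div, mul_comm,
    mul_div_right_comm]
  exact absorbed.trans (le_abs_self _)

lemma scaledMoment_isBigO (k : ℕ) :
    scaledMoment hν k =O[atTop] fun x => scale ν x ^ (k / 2) := by
  suffices h : ∀ q, ∀ k ≤ 2 * q, scaledMoment hν k =O[atTop] fun x => scale ν x ^ (k / 2) from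
    h k k (by lia)
  intro q
  induction q with
  | zero =>
    intro k hk
    obtain rfl : k = 0 := by lia
    simpa only [scaledMoment_zero, Nat.zero_div, pow_zero] using! isBigO_refl _ _
  | succ q ih =>
    have even := scaledMoment_two_mul_add_two_isBigO hν ih
    have odd : scaledMoment hν (2 * q + 1) =O[atTop] fun x => scale ν x ^ q := by
      refine IsBigO.trans (.of_norm_le fun x => abs_scaledMoment_le hν q x) (IsBigO.add ?_ ?_)
      · simpa using ih (2 * q) le_rfl
      · exact even.trans (isBigO_pow_of_le (tendsto_scale_zero hν) q.le_succ)
    intro k hk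
    rcases (by lia : k ≤ 2 * q ∨ k = 2 * q + 1 ∨ k = 2 * q + 2) with hk | rfl | rfl
    · exact ih k hk
    · rwa [show (2 * q + 1) / 2 = q by lia]
    · rwa [show (2 * q + 2) / 2 = q + 1 by lia]

lemma scaledMoment_isBigO_of_le {k N : ℕ} (hN : 2 * N ≤ k) :
    scaledMoment hν k =O[atTop] fun x => scale ν x ^ N :=
  (scaledMoment_isBigO hν k).trans (isBigO_pow_of_le (tendsto_scale_zero hν) (by lia))

end MomentBounds

section MomentExpansions

variable {ν : ℝ} (hν : 0 < ν)

lemma sum_choose_smul_scaledMoment_sub_apply (k n : ℕ) (x : ℝ) :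
    (∑ j ∈ range n, Ring.choose ν j • scaledMoment hν (k + j) -
      ∑ i ∈ range (k + 1), (k.choose i : ℝ) • (scale ν ^ (k - i) * scaledMoment hν i)) x =
    expect hν x ((∑ j ∈ range n, Ring.choose ν j • deviation ν x ^ j - scaledRpow ν x) *
      deviation ν x ^ k) := by
  rw [sub_mul, map_sub, expect_scaledRpow_mul_deviation_pow, sum_mul, map_sum]
  simp only [Pi.sub_apply, Finset.sum_apply, Pi.smul_apply, Pi.mul_apply, Pi.pow_apply,
    smul_eq_mul, smul_mul_assoc, map_smul, ← pow_add, scaledMoment, add_comm]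

lemma exists_abs_sum_choose_smul_scaledMoment_sub_le (k N : ℕ) : ∃ C, ∃ L ≥ N, ∀ x,
    |(∑ j ∈ range (2 * N), Ring.choose ν j • scaledMoment hν (k + j) -
      ∑ i ∈ range (k + 1), (k.choose i : ℝ) • (scale ν ^ (k - i) * scaledMoment hν i)) x| ≤
    C * (scaledMoment hν (2 * N) x + scaledMoment hν (2 * L) x +
      (scaledMoment hν (2 * N + 2 * k) x + scaledMoment hν (2 * L + 2 * k) x)) := by
  obtain ⟨L, hL⟩ := exists_nat_ge (max (N : ℝ) ν)
  have hNL : N ≤ L := by exact_mod_cast (le_max_left _ _).trans hL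
  obtain ⟨C, binomial⟩ := exists_abs_sum_choose_sub_rpow_mul_pow_le hν.le hNL
    ((le_max_right _ _).trans hL)
  refine ⟨C, L, hNL, fun x => ?_⟩
  rw [sum_choose_smul_scaledMoment_sub_apply]
  set U := deviation ν x
  have bound : |expect hν x
      ((∑ j ∈ range (2 * N), Ring.choose ν j • U ^ j - scaledRpow ν x) * U ^ k)| ≤
      expect hν x
        (C • (U ^ (2 * N) + U ^ (2 * L) + (U ^ (2 * N + 2 * k) + U ^ (2 * L + 2 * k)))) := by
    refine abs_expect_le hν x fun i => ?_
    have binomial_i := binomial k _ (neg_one_le_deviation ν x i)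
    rw [← scaledRpow_apply hν] at binomial_i
    simpa [mul_add] using! binomial_i
  simpa only [map_smul, map_add, smul_eq_mul, scaledMoment] using bound

lemma sum_choose_smul_scaledMoment_sub_isBigO (k N : ℕ) :
    (∑ j ∈ range (2 * N), Ring.choose ν j • scaledMoment hν (k + j) -
      ∑ i ∈ range (k + 1), (k.choose i : ℝ) • (scale ν ^ (k - i) * scaledMoment hν i))
    =O[atTop] fun x => scale ν x ^ N := by
  obtain ⟨C, L, hNL, hC⟩ := exists_abs_sum_choose_smul_scaledMoment_sub_le hν k N
  have O {m : ℕ} (hm : 2 * N ≤ m) := scaledMoment_isBigO_of_le hν hm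
  exact IsBigO.trans (.of_norm_le hC)
    ((((O le_rfl).add (O (by lia))).add ((O (by lia)).add (O (by lia)))).const_mul_left C)

lemma sum_choose_smul_sub_eq (V : ℕ → ℝ → ℝ) (k n : ℕ) :
    ∑ j ∈ range (n + 1), Ring.choose ν j • V (k + j) -
      ∑ i ∈ range (k + 1), (k.choose i : ℝ) • (scale ν ^ (k - i) * V i) =
    ∑ j ∈ range n, Ring.choose ν (j + 1) • V (k + (j + 1)) -
      ∑ i ∈ range k, (k.choose i : ℝ) • (scale ν ^ (k - i) * V i) := by
  simp [sum_range_succ', sum_range_succ _ k]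

lemma scaledMoment_mem_polyApprox (N k : ℕ) :
    scaledMoment hν k ∈ polyApprox atTop (scale ν) N := by
  induction N generalizing k with
  | zero => exact polyApprox.mem_of_isBigO (scaledMoment_isBigO_of_le hν (by lia))
  | succ N ih =>
    suffices h : ∀ d k, 2 * (N + 1) ≤ k + d →
        scaledMoment hν k ∈ polyApprox atTop (scale ν) (N + 1) from h _ k le_add_self
    intro d
    induction d with
    | zero => exact fun k hk => polyApprox.mem_of_isBigO (scaledMoment_isBigO_of_le hν (by lia))
    | succ d ih_d =>
      rintro (_ | k) hk
      · rw [scaledMoment_zero]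
        exact polyApprox.one_mem _
      have relation := polyApprox.mem_of_isBigO
        (sum_choose_smul_scaledMoment_sub_isBigO hν k (N + 1))
      have higher : ∑ j ∈ range (2 * N), Ring.choose ν (j + 2) • scaledMoment hν (k + (j + 2)) ∈
          polyApprox atTop (scale ν) (N + 1) :=
        sum_mem fun j _ => Submodule.smul_mem _ _ (ih_d _ (by lia))
      have lower : ∑ i ∈ range k, (k.choose i : ℝ) • (scale ν ^ (k - i) * scaledMoment hν i) ∈
          polyApprox atTop (scale ν) (N + 1) :=
        sum_mem fun i hi => Submodule.smul_mem _ _ <|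
          polyApprox.antitone (tendsto_scale_zero hν)
            (by have := mem_range.mp hi; lia) (polyApprox.pow_mul_mem (k - i) (ih i))
      rw [show 2 * (N + 1) = 2 * N + 1 + 1 by ring, sum_choose_smul_sub_eq, sum_range_succ',
        Ring.choose_one_right] at relation
      have := Submodule.smul_mem _ ν⁻¹
        (Submodule.add_mem _ (Submodule.sub_mem _ relation higher) lower)
      convert this using 1
      rw [sub_add_eq_add_sub, add_sub_assoc]
      simp [hν.ne']

/-- The formal expansion of the `k`-th scaled moment in powers of `λ ^ (-1/ν)`. -/
noncomputable def momentSeries (k : ℕ) : ℝ⟦X⟧ :=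
  (exists_hasAsymptoticExpansion (tendsto_scale hν)
    (scaledMoment_mem_polyApprox hν · k)).choose

lemma hasAsymptoticExpansion_scaledMoment (k : ℕ) :
    HasAsymptoticExpansion atTop (scale ν) (scaledMoment hν k) (momentSeries hν k) :=
  (exists_hasAsymptoticExpansion (tendsto_scale hν)
    (scaledMoment_mem_polyApprox hν · k)).choose_spec

lemma momentSeries_zero : momentSeries hν 0 = 1 := by
  refine (hasAsymptoticExpansion_scaledMoment hν 0).unique (tendsto_scale hν) ?_
  rw [scaledMoment_zero]
  exact .one (tendsto_scale_zero hν)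

lemma coeff_momentSeries_eq_zero {m k : ℕ} (h : 2 * (m + 1) ≤ k) :
    coeff m (momentSeries hν k) = 0 :=
  (hasAsymptoticExpansion_scaledMoment hν k).coeff_eq_zero (tendsto_scale hν)
    (scaledMoment_isBigO_of_le hν h) m.lt_succ_self

lemma sum_choose_mul_coeff_momentSeries (k m : ℕ) :
    ∑ j ∈ range (2 * m + 1), Ring.choose ν (j + 1) * coeff m (momentSeries hν (k + (j + 1))) =
      ∑ i ∈ range k, k.choose i * coeff m ((X : ℝ⟦X⟧) ^ (k - i) * momentSeries hν i) := by
  have left := HasAsymptoticExpansion.sum (range (2 * m + 1)) fun (j : ℕ) _ =>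
    (hasAsymptoticExpansion_scaledMoment hν (k + (j + 1))).const_smul (Ring.choose ν (j + 1))
  have right := HasAsymptoticExpansion.sum (range k) fun (i : ℕ) _ =>
    ((hasAsymptoticExpansion_scaledMoment hν i).pow_mul (tendsto_scale_zero hν)
      (k - i)).const_smul (k.choose i : ℝ)
  have relation := sum_choose_smul_scaledMoment_sub_isBigO hν k (m + 1)
  rw [show 2 * (m + 1) = 2 * m + 1 + 1 by ring, sum_choose_smul_sub_eq] at relation
  simpa [sub_eq_zero] using
    (left.sub right).coeff_eq_zero (tendsto_scale hν) relation m.lt_succ_self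

end MomentExpansions

section MomentCoefficients

variable {ν : ℝ} (hν : 0 < ν)

lemma choose_add_one (ν : ℝ) (j : ℕ) :
    Ring.choose ν (j + 1) = Ring.choose ν j * (ν - j) / (j + 1) := by
  have := Ring.choose_smul_choose ν j.le_succ
  rw [Nat.succ_eq_add_one, Nat.add_sub_cancel_left, Ring.choose_one_right, nsmul_eq_mul,
    Nat.choose_succ_self_right] at this
  push_cast at this
  rw [eq_div_iff (by positivity), mul_comm, this]

-- The relations with `m` fixed are solved downwards from `momentSeries (2 * m + 1)`: the one with
-- `k - 1` in place of `k` expresses `coeff m (momentSeries k)` through later series and lower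
-- orders.
lemma coeff_zero_momentSeries_one : coeff 0 (momentSeries hν 1) = 0 := by
  have := sum_choose_mul_coeff_momentSeries hν 0 0
  simpa [hν.ne'] using this

lemma coeff_one_momentSeries_three : coeff 1 (momentSeries hν 3) = 0 := by
  have := sum_choose_mul_coeff_momentSeries hν 2 1
  simpa [sum_range_succ, coeff_X_pow_mul', coeff_momentSeries_eq_zero,
    coeff_zero_momentSeries_one, hν.ne'] using this

lemma coeff_one_momentSeries_two : coeff 1 (momentSeries hν 2) = 1 / ν := by
  have := sum_choose_mul_coeff_momentSeries hν 1 1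
  norm_num [sum_range_succ, coeff_momentSeries_eq_zero, momentSeries_zero,
    coeff_one_momentSeries_three] at this
  field_simp at this ⊢
  linarith

lemma coeff_one_momentSeries_one : coeff 1 (momentSeries hν 1) = (1 - ν) / (2 * ν) := by
  have := sum_choose_mul_coeff_momentSeries hν 0 1
  norm_num [sum_range_succ, choose_add_one, coeff_one_momentSeries_two,
    coeff_one_momentSeries_three] at this
  field_simp at this ⊢
  linarith

lemma coeff_two_momentSeries_five : coeff 2 (momentSeries hν 5) = 0 := by
  have := sum_choose_mul_coeff_momentSeries hν 4 2
  simpa [sum_range_succ, coeff_X_pow_mul', coeff_momentSeries_eq_zero,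
    coeff_one_momentSeries_three, hν.ne'] using this

lemma coeff_two_momentSeries_four : coeff 2 (momentSeries hν 4) = 3 / ν ^ 2 := by
  have := sum_choose_mul_coeff_momentSeries hν 3 2
  norm_num [sum_range_succ, coeff_X_pow_mul', coeff_momentSeries_eq_zero,
    coeff_zero_momentSeries_one, coeff_one_momentSeries_two, coeff_two_momentSeries_five] at this
  field_simp at this ⊢
  linarith

lemma coeff_two_momentSeries_three : coeff 2 (momentSeries hν 3) = (5 - 3 * ν) / (2 * ν ^ 2) := by
  have := sum_choose_mul_coeff_momentSeries hν 2 2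
  norm_num [sum_range_succ, choose_add_one, coeff_momentSeries_eq_zero, momentSeries_zero,
    coeff_one_momentSeries_one, coeff_two_momentSeries_four, coeff_two_momentSeries_five] at this
  field_simp at this ⊢
  linarith

lemma coeff_two_momentSeries_two : coeff 2 (momentSeries hν 2) = (1 - ν) ^ 2 / (4 * ν ^ 2) := by
  have := sum_choose_mul_coeff_momentSeries hν 1 2
  norm_num [sum_range_succ, coeff_X_pow_mul', choose_add_one, coeff_momentSeries_eq_zero,
    momentSeries_zero, coeff_two_momentSeries_three, coeff_two_momentSeries_four,
    coeff_two_momentSeries_five] at this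
  field_simp at this ⊢
  linarith

lemma coeff_two_momentSeries_one : coeff 2 (momentSeries hν 1) = (1 - ν ^ 2) / (24 * ν ^ 2) := by
  have := sum_choose_mul_coeff_momentSeries hν 0 2
  norm_num [sum_range_succ, choose_add_one, coeff_two_momentSeries_two,
    coeff_two_momentSeries_three, coeff_two_momentSeries_four,
    coeff_two_momentSeries_five] at this
  field_simp at this ⊢
  linarith

lemma coeff_three_momentSeries_seven : coeff 3 (momentSeries hν 7) = 0 := by
  have := sum_choose_mul_coeff_momentSeries hν 6 3
  simpa [sum_range_succ, coeff_X_pow_mul', coeff_momentSeries_eq_zero,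
    coeff_two_momentSeries_five, hν.ne'] using this

lemma coeff_three_momentSeries_six : coeff 3 (momentSeries hν 6) = 15 / ν ^ 3 := by
  have := sum_choose_mul_coeff_momentSeries hν 5 3
  norm_num [sum_range_succ, coeff_X_pow_mul', coeff_momentSeries_eq_zero,
    coeff_one_momentSeries_three, coeff_two_momentSeries_four,
    coeff_three_momentSeries_seven] at this
  field_simp at this ⊢
  linarith

lemma coeff_three_momentSeries_five :
    coeff 3 (momentSeries hν 5) = (35 - 15 * ν) / (2 * ν ^ 3) := by
  have := sum_choose_mul_coeff_momentSeries hν 4 3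
  norm_num [sum_range_succ, coeff_X_pow_mul', choose_add_one, coeff_momentSeries_eq_zero,
    coeff_zero_momentSeries_one, coeff_one_momentSeries_two, coeff_two_momentSeries_three,
    coeff_three_momentSeries_six, coeff_three_momentSeries_seven, Nat.choose] at this
  field_simp at this ⊢
  linarith

lemma coeff_three_momentSeries_four :
    coeff 3 (momentSeries hν 4) = (9 - 10 * ν + 3 * ν ^ 2) / (2 * ν ^ 3) := by
  have := sum_choose_mul_coeff_momentSeries hν 3 3
  norm_num [sum_range_succ, coeff_X_pow_mul', choose_add_one, coeff_momentSeries_eq_zero,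
    momentSeries_zero, coeff_one_momentSeries_one, coeff_two_momentSeries_two,
    coeff_three_momentSeries_five, coeff_three_momentSeries_six,
    coeff_three_momentSeries_seven] at this
  field_simp at this ⊢
  linarith

lemma coeff_three_momentSeries_three :
    coeff 3 (momentSeries hν 3) = (2 - 3 * ν + 2 * ν ^ 2 - ν ^ 3) / (8 * ν ^ 3) := by
  have := sum_choose_mul_coeff_momentSeries hν 2 3
  norm_num [sum_range_succ, choose_add_one, coeff_momentSeries_eq_zero, momentSeries_zero,
    coeff_two_momentSeries_one, coeff_three_momentSeries_four, coeff_three_momentSeries_five,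
    coeff_three_momentSeries_six, coeff_three_momentSeries_seven] at this
  field_simp at this ⊢
  linarith

lemma coeff_three_momentSeries_two : coeff 3 (momentSeries hν 2) = (ν ^ 2 - 1) / (24 * ν ^ 2) := by
  have := sum_choose_mul_coeff_momentSeries hν 1 3
  norm_num [sum_range_succ, coeff_X_pow_mul', choose_add_one, coeff_momentSeries_eq_zero,
    momentSeries_zero, coeff_three_momentSeries_three, coeff_three_momentSeries_four,
    coeff_three_momentSeries_five, coeff_three_momentSeries_six,
    coeff_three_momentSeries_seven] at this
  field_simp at this ⊢
  refine mul_left_cancel₀ hν.ne' ?_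
  linarith

lemma coeff_three_momentSeries_one : coeff 3 (momentSeries hν 1) = (1 - ν ^ 2) / (24 * ν ^ 3) := by
  have := sum_choose_mul_coeff_momentSeries hν 0 3
  norm_num [sum_range_succ, choose_add_one, coeff_three_momentSeries_two,
    coeff_three_momentSeries_three, coeff_three_momentSeries_four, coeff_three_momentSeries_five,
    coeff_three_momentSeries_six, coeff_three_momentSeries_seven] at this
  field_simp at this ⊢
  linarith

end MomentCoefficients

section Cumulants

variable {ν : ℝ} (hν : 0 < ν)

/-- The `k`-th moment `E[Xᵏ]`, as a function of `x = log λ`. -/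
noncomputable def rawMoment (k : ℕ) (x : ℝ) : ℝ := expect hν x (count ^ k)

lemma count_eq (ν x : ℝ) : count = (scale ν x)⁻¹ • (deviation ν x + 1) := by
  rw [deviation, sub_add_cancel, inv_smul_smul₀ (scale_pos ν x).ne']

lemma rawMoment_isBigO (k : ℕ) :
    rawMoment hν k =O[atTop] fun x => (scale ν x)⁻¹ ^ k := by
  have h : (fun x => (scale ν x)⁻¹ ^ k * ∑ j ∈ range (k + 1), k.choose j * scaledMoment hν j x)
      =O[atTop] fun x => (scale ν x)⁻¹ ^ k * 1 :=
    (isBigO_refl _ _).mul <| .fun_sum fun j _ =>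
      (by simpa using scaledMoment_isBigO_of_le hν (k := j) (N := 0) (by lia) :
        scaledMoment hν j =O[atTop] fun _ => (1 : ℝ)).const_mul_left _
  refine h.congr (fun x => ?_) fun x => mul_one _
  rw [rawMoment, count_eq ν x, smul_pow, map_smul, add_pow, map_sum, smul_eq_mul]
  congr 1
  refine sum_congr rfl fun j _ => ?_
  rw [one_pow, mul_one, ← nsmul_eq_mul', map_nsmul, nsmul_eq_mul, scaledMoment]

lemma rawMoment_one (x : ℝ) : rawMoment hν 1 x = (scale ν x)⁻¹ * (scaledMoment hν 1 x + 1) := by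
  rw [rawMoment, count_eq ν x, pow_one, map_smul, map_add, expect_one, smul_eq_mul, scaledMoment,
    pow_one]

lemma hasDerivAt_rawMoment (k : ℕ) (x : ℝ) : HasDerivAt (rawMoment hν k)
    (rawMoment hν (k + 1) x - rawMoment hν 1 x * rawMoment hν k x) x := by
  simpa only [rawMoment, pow_succ', pow_zero, mul_one] using! hasDerivAt_expect hν x (count ^ k)

lemma hasDerivAt_scale (ν x : ℝ) : HasDerivAt (scale ν) (-ν⁻¹ * scale ν x) x := by
  refine ((hasDerivAt_id x).const_mul (-ν⁻¹)).exp.congr_deriv ?_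
  rw [scale, mul_one, id, mul_comm]

/-- The algebra of functions of `x = log λ` generated by `λ ^ (-1/ν)` and the moments of
`CMP(λ, ν)`. It contains the cumulants and is closed under differentiation. -/
noncomputable def momentAlgebra : Subalgebra ℝ (ℝ → ℝ) :=
  Algebra.adjoin ℝ (insert (scale ν) (Set.range (rawMoment hν)))

namespace momentAlgebra

lemma scale_mem : scale ν ∈ momentAlgebra hν :=
  Algebra.subset_adjoin (Set.mem_insert _ _)

lemma rawMoment_mem (k : ℕ) : rawMoment hν k ∈ momentAlgebra hν :=
  Algebra.subset_adjoin (Set.mem_insert_of_mem _ (Set.mem_range_self k))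

variable {hν}

lemma exists_isBigO {f : ℝ → ℝ} (hf : f ∈ momentAlgebra hν) :
    ∃ A : ℕ, f =O[atTop] fun x => (scale ν x)⁻¹ ^ A := by
  have one_le : ∀ᶠ x in atTop, 1 ≤ (scale ν x)⁻¹ :=
    ((tendsto_scale_zero hν).eventually_le_const one_pos).mono fun x hx =>
      (one_le_inv₀ (scale_pos ν x)).mpr hx
  suffices h : momentAlgebra hν ≤ growthAlgebra atTop (fun x => (scale ν x)⁻¹) one_le from h hf
  refine Algebra.adjoin_le (Set.insert_subset ⟨0, ?_⟩ (Set.range_subset_iff.mpr fun k =>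
    ⟨k, rawMoment_isBigO hν k⟩))
  simpa using! (tendsto_scale_zero hν).isBigO_one ℝ

lemma exists_hasDerivAt {f : ℝ → ℝ} (hf : f ∈ momentAlgebra hν) :
    ∃ f' ∈ momentAlgebra hν, ∀ x, HasDerivAt f (f' x) x := by
  induction hf using Algebra.adjoin_induction with
  | mem f hf =>
    rcases hf with rfl | ⟨k, rfl⟩
    · exact ⟨-ν⁻¹ • scale ν, Subalgebra.smul_mem _ (scale_mem hν) _, hasDerivAt_scale ν⟩
    · exact ⟨_, sub_mem (rawMoment_mem hν (k + 1)) (mul_mem (rawMoment_mem hν 1)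
        (rawMoment_mem hν k)), hasDerivAt_rawMoment hν k⟩
  | algebraMap c => exact ⟨0, zero_mem _, fun x => hasDerivAt_const x c⟩
  | add f g _ _ ihf ihg =>
    obtain ⟨f', hf', hf⟩ := ihf
    obtain ⟨g', hg', hg⟩ := ihg
    exact ⟨f' + g', add_mem hf' hg', fun x => (hf x).add (hg x)⟩
  | mul f g hf_mem hg_mem ihf ihg =>
    obtain ⟨f', hf', hf⟩ := ihf
    obtain ⟨g', hg', hg⟩ := ihg
    exact ⟨f' * g + f * g', add_mem (mul_mem hf' hg_mem) (mul_mem hf_mem hg'),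
      fun x => (hf x).mul (hg x)⟩

lemma deriv_mem {f : ℝ → ℝ} (hf : f ∈ momentAlgebra hν) : deriv f ∈ momentAlgebra hν := by
  obtain ⟨f', hf', h⟩ := exists_hasDerivAt hf
  rwa [show deriv f = f' from funext fun x => (h x).deriv]

lemma hasDerivAt_deriv {f : ℝ → ℝ} (hf : f ∈ momentAlgebra hν) (x : ℝ) :
    HasDerivAt f (deriv f x) x := by
  obtain ⟨f', -, h⟩ := exists_hasDerivAt hf
  exact (h x).differentiableAt.hasDerivAt

lemma hasAsymptoticExpansion_deriv {f : ℝ → ℝ} {φ : ℝ⟦X⟧} (hf : f ∈ momentAlgebra hν)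
    (h : HasAsymptoticExpansion atTop (scale ν) f φ) :
    HasAsymptoticExpansion atTop (scale ν) (deriv f) (.mk fun j => -(ν⁻¹ * j) * coeff j φ) := by
  obtain ⟨A, hA⟩ := exists_isBigO (deriv_mem (deriv_mem hf))
  exact h.hasDerivAt (inv_pos.mpr hν) (hasDerivAt_deriv hf) (hasDerivAt_deriv (deriv_mem hf)) hA

end momentAlgebra

/-- `λ ^ (-1/ν) κₙ(λ)`, as a function of `x = log λ`. -/
noncomputable def scaledCumulant (ν : ℝ) (n : ℕ) (x : ℝ) : ℝ :=
  scale ν x * iteratedDeriv n (fun y => Real.log (cmpZ (Real.exp y) ν)) x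

lemma iteratedDeriv_log_cmpZ_mem (n : ℕ) :
    iteratedDeriv (n + 1) (fun y => Real.log (cmpZ (Real.exp y) ν)) ∈ momentAlgebra hν := by
  induction n with
  | zero =>
    convert momentAlgebra.rawMoment_mem hν 1
    ext x
    rw [zero_add, iteratedDeriv_one, (hasDerivAt_log_cmpZ_exp hν x).deriv, rawMoment, pow_one]
  | succ n ih =>
    rw [iteratedDeriv_succ]
    exact momentAlgebra.deriv_mem ih

lemma scaledCumulant_mem (n : ℕ) : scaledCumulant ν (n + 1) ∈ momentAlgebra hν :=
  mul_mem (momentAlgebra.scale_mem hν) (iteratedDeriv_log_cmpZ_mem hν n)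

lemma scaledCumulant_one : scaledCumulant ν 1 = scaledMoment hν 1 + 1 := by
  ext x
  have := rawMoment_one hν x
  rw [rawMoment, pow_one] at this
  rw [scaledCumulant, iteratedDeriv_one, (hasDerivAt_log_cmpZ_exp hν x).deriv, this,
    mul_inv_cancel_left₀ (scale_pos ν x).ne']
  rfl

include hν in
lemma scaledCumulant_add_two (n : ℕ) : scaledCumulant ν (n + 2) =
    deriv (scaledCumulant ν (n + 1)) + ν⁻¹ • scaledCumulant ν (n + 1) := by
  ext x
  have h : HasDerivAt (scaledCumulant ν (n + 1)) _ x := (hasDerivAt_scale ν x).mul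
    (momentAlgebra.hasDerivAt_deriv (iteratedDeriv_log_cmpZ_mem hν n) x)
  rw [Pi.add_apply, h.deriv, Pi.smul_apply, smul_eq_mul, ← iteratedDeriv_succ]
  simp only [scaledCumulant]
  ring

lemma hasAsymptoticExpansion_scaledCumulant (n : ℕ) :
    HasAsymptoticExpansion atTop (scale ν) (scaledCumulant ν (n + 1))
      (.mk fun j => ((1 - j) / ν) ^ n * coeff j (momentSeries hν 1 + 1)) := by
  induction n with
  | zero =>
    simp only [pow_zero, one_mul, zero_add, scaledCumulant_one hν]
    convert (hasAsymptoticExpansion_scaledMoment hν 1).add (.one (tendsto_scale_zero hν)) using 1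
    ext j
    rw [coeff_mk]
  | succ n ih =>
    rw [scaledCumulant_add_two hν]
    convert (momentAlgebra.hasAsymptoticExpansion_deriv (scaledCumulant_mem hν n) ih).add
      (ih.const_smul ν⁻¹) using 1
    ext j
    simp only [map_add, map_smul, coeff_mk, smul_eq_mul]
    ring

lemma cmpCumulant_exp (n : ℕ) (ν x : ℝ) : cmpCumulant n (Real.exp x) ν =
    iteratedDeriv n (fun y => Real.log (cmpZ (Real.exp y) ν)) x := by
  have := congrFun
    (iteratedDeriv_comp_const_add n (fun y => Real.log (cmpZ (Real.exp y) ν)) x) 0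
  rw [add_zero] at this
  simpa only [cmpCumulant, Real.exp_add] using this

lemma scale_log_pow (ν : ℝ) {lam : ℝ} (hlam : 0 < lam) (k : ℕ) :
    scale ν (Real.log lam) ^ k = lam ^ (-(k / ν)) := by
  rw [scale, exp_neg_mul_pow, Real.rpow_def_of_pos hlam]
  ring_nf

lemma scaledCumulant_log (ν : ℝ) {lam : ℝ} (hlam : 0 < lam) (n : ℕ) :
    scaledCumulant ν n (Real.log lam) = lam ^ (-(1 / ν)) * cmpCumulant n lam ν := by
  have := scale_log_pow ν hlam 1
  rw [pow_one, Nat.cast_one] at this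
  rw [scaledCumulant, this, ← cmpCumulant_exp, Real.exp_log hlam]

include hν in
lemma scaledCumulant_sub_isBigO {n : ℕ} (hn : 2 ≤ n) :
    (fun x => ν ^ (n - 1) * scaledCumulant ν n x - 1 -
      ((-1) ^ n * (ν ^ 2 - 1) / (24 * ν ^ 2)) * scale ν x ^ 2 -
      ((-2) ^ n * (ν ^ 2 - 1) / (48 * ν ^ 3)) * scale ν x ^ 3) =O[atTop]
    fun x => scale ν x ^ 4 := by
  obtain ⟨n, rfl⟩ := Nat.exists_eq_add_of_le' hn
  refine ((hasAsymptoticExpansion_scaledCumulant hν (n + 1) 4).const_mul_left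
    (ν ^ (n + 1))).congr_left fun x => ?_
  simp only [coeff_mk, map_add, sum_range_succ, sum_range_zero, coeff_zero_momentSeries_one,
    coeff_one_momentSeries_one, coeff_two_momentSeries_one, coeff_three_momentSeries_one, coeff_one]
  have := hν.ne'
  norm_num [div_pow]
  field_simp
  ring

end Cumulants

end ConwayMaxwellPoisson

open ConwayMaxwellPoisson

/-- Asymptotics of the `n`-th cumulant (`n ≥ 2`) of the `CMP(λ,ν)` distribution:
`κ_n = (λ^{1/ν}/ν^{n−1})(1 + ((−1)^n (ν²−1)/(24ν²)) λ^{−2/ν}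
  + ((−2)^n (ν²−1)/(48ν³)) λ^{−3/ν} + O(λ^{−4/ν}))` as `λ → ∞`. -/
theorem cmpCumulant_asymptotic (ν : ℝ) (hν : 0 < ν) (n : ℕ) (hn : 2 ≤ n) :
    ∃ C > (0 : ℝ), ∃ Λ > (0 : ℝ), ∀ lam : ℝ, lam ≥ Λ →
      |ν ^ (n - 1) * lam ^ (-(1 / ν)) * cmpCumulant n lam ν - 1 -
          ((-1 : ℝ) ^ n * (ν ^ 2 - 1) / (24 * ν ^ 2)) * lam ^ (-(2 / ν)) -
          ((-2 : ℝ) ^ n * (ν ^ 2 - 1) / (48 * ν ^ 3)) * lam ^ (-(3 / ν))|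
        ≤ C * lam ^ (-(4 / ν)) := by
  obtain ⟨C, hC, hO⟩ := (scaledCumulant_sub_isBigO hν hn).exists_pos
  obtain ⟨x₀, hx₀⟩ := eventually_atTop.mp hO.bound
  refine ⟨C, hC, Real.exp x₀, Real.exp_pos x₀, fun lam hlam => ?_⟩
  have hlam₀ : 0 < lam := (Real.exp_pos x₀).trans_le hlam
  have bound := hx₀ (Real.log lam) ((Real.le_log_iff_exp_le hlam₀).mpr hlam)
  rw [scale_log_pow ν hlam₀, scale_log_pow ν hlam₀, scale_log_pow ν hlam₀,
    scaledCumulant_log ν hlam₀, Real.norm_eq_abs, ← mul_assoc,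
    Real.norm_of_nonneg (by positivity)] at bound
  exact_mod_cast bound
end
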